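/- arXiv:2408.06172 — 2 statements merged into one kernel-verified Lean document; each statement's English description precedes it below -/
import Mathlib

section
/- Let n ≥ 1, let p ∈ (−n−1, 1), and let K be a smooth, strictly convex body in ℝ^{n+1} with positive support function h. If det(A(x) + x⊗x) = h(x)^{p−1} for all x ∈ S^n (equivalently, 𝒦 = h^{1−p}), then K is the closed unit ball; equivalently h_K(z) = ‖z‖ for all z ∈ ℝ^{n+1}. -/
open MeasureTheory Metric Real
open scoped InnerProductSpace ENNReal Topology

noncomputable section

/-- Euclidean space `ℝ^{n+1}`. -/
abbrev Eu (n : ℕ) : Type := EuclideanSpace ℝ (Fin (n + 1))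

/-- The unit sphere `S^n ⊆ ℝ^{n+1}` as a subtype. -/
abbrev Sph (n : ℕ) : Type := Metric.sphere (0 : Eu n) 1

/-- The spherical Lebesgue (surface) measure on `S^n`. -/
def sphMeas (n : ℕ) : Measure (Sph n) := (volume : Measure (Eu n)).toSphere

/-- The support function of a set `K ⊆ ℝ^{n+1}`. -/
def sfn {n : ℕ} (K : Set (Eu n)) (z : Eu n) : ℝ :=
  sSup ((fun y => ⟪z, y⟫_ℝ) '' K)

/-- The Hessian endomorphism `A(x) = D(∇ h_K)(x)`. -/
def hessA {n : ℕ} (K : Set (Eu n)) (x : Eu n) : Eu n →L[ℝ] Eu n :=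
  fderiv ℝ (gradient (sfn K)) x

/-- The rank-one endomorphism `x ⊗ x : v ↦ ⟨v, x⟩ x`. -/
def tens {n : ℕ} (x : Eu n) : Eu n →L[ℝ] Eu n :=
  (innerSL ℝ x).smulRight x

/-- `det (A(x) + x ⊗ x)`, the reciprocal Gauss curvature `1/𝒦` at `x ∈ S^n`. -/
def rK {n : ℕ} (K : Set (Eu n)) (x : Eu n) : ℝ :=
  LinearMap.det ((hessA K x + tens x : Eu n →L[ℝ] Eu n) : Eu n →ₗ[ℝ] Eu n)

/-- `K` is a smooth, strictly convex body with positive support function. -/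
structure IsSmoothConvexBody {n : ℕ} (K : Set (Eu n)) : Prop where
  compact : IsCompact K
  convex : Convex ℝ K
  interior_nonempty : (interior K).Nonempty
  pos : ∀ x : Sph n, 0 < sfn K x
  smooth : ContDiffOn ℝ (⊤ : ℕ∞) (sfn K) {(0 : Eu n)}ᶜ
  posdef : ∀ x : Sph n, ∀ v : Eu n, v ≠ 0 →
    0 < ⟪(hessA K (x : Eu n) + tens (x : Eu n)) v, v⟫_ℝ

/-- The density `h·det(A + x⊗x)` of the measure `dV` with respect to `dθ`. -/
def dens {n : ℕ} (K : Set (Eu n)) (x : Eu n) : ℝ := sfn K x * rK K x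

/-- The centroid-type point `c(K) = (∫ ∇h_K dV)/(∫ dV)`. -/
def cK {n : ℕ} (K : Set (Eu n)) : Eu n :=
  (∫ x : Sph n, dens K x ∂sphMeas n)⁻¹ •
    ∫ x : Sph n, dens K x • gradient (sfn K) x ∂sphMeas n

/-- The support function of the translated body `K - c(K)`. -/
def tsfn {n : ℕ} (K : Set (Eu n)) (x : Eu n) : ℝ := sfn K x - ⟪x, cK K⟫_ℝ


section Part1

/-- Directional derivative. -/
def dd {n : ℕ} (v : Eu n) (f : Eu n → ℝ) : Eu n → ℝ := fun x => fderiv ℝ f x v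

/-- Smooth away from the origin. -/
def Sm {n : ℕ} (f : Eu n → ℝ) : Prop := ContDiffOn ℝ (⊤ : ℕ∞) f {(0 : Eu n)}ᶜ

lemma Sm.cda {n : ℕ} {f : Eu n → ℝ} (hf : Sm f) {x : Eu n} (hx : x ≠ 0) :
    ContDiffAt ℝ (⊤ : ℕ∞) f x :=
  hf.contDiffAt (isOpen_compl_singleton.mem_nhds hx)

lemma Sm.da {n : ℕ} {f : Eu n → ℝ} (hf : Sm f) {x : Eu n} (hx : x ≠ 0) :
    DifferentiableAt ℝ f x := (hf.cda hx).differentiableAt (by simp)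

lemma Sm.dd {n : ℕ} {f : Eu n → ℝ} (hf : Sm f) (v : Eu n) : Sm (dd v f) := by
  intro x hx
  have h1 : ContDiffAt ℝ (⊤ : ℕ∞) (fderiv ℝ f) x :=
    (hf.cda hx).fderiv_right (by simp)
  exact (h1.clm_apply contDiffAt_const).contDiffWithinAt

lemma Sm.cont {n : ℕ} {f : Eu n → ℝ} (hf : Sm f) : ContinuousOn f {(0 : Eu n)}ᶜ :=
  ContDiffOn.continuousOn hf

lemma dd_add {n : ℕ} (v w : Eu n) (f : Eu n → ℝ) (x : Eu n) :
    dd (v + w) f x = dd v f x + dd w f x := by simp [dd]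

lemma dd_smul {n : ℕ} (c : ℝ) (v : Eu n) (f : Eu n → ℝ) (x : Eu n) :
    dd (c • v) f x = c * dd v f x := by simp [dd]

lemma dd_congr {n : ℕ} (v : Eu n) {f g : Eu n → ℝ} {x : Eu n} (h : f =ᶠ[𝓝 x] g) :
    dd v f x = dd v g x := by simp [dd, h.fderiv_eq]

lemma dd_congr0 {n : ℕ} (v : Eu n) {f g : Eu n → ℝ} {x : Eu n} (hx : x ≠ 0)
    (h : ∀ y, y ≠ 0 → f y = g y) :
    dd v f x = dd v g x :=
  dd_congr v (Filter.eventuallyEq_of_mem (isOpen_compl_singleton.mem_nhds hx) (fun y hy => h y hy))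

lemma dd_comm {n : ℕ} {f : Eu n → ℝ} (hf : Sm f) (v w : Eu n) {x : Eu n} (hx : x ≠ 0) :
    dd v (dd w f) x = dd w (dd v f) x := by
  have hs : IsSymmSndFDerivAt ℝ f x := by
    refine (hf.cda hx).isSymmSndFDerivAt ?_
    rw [minSmoothness_of_isRCLikeNormedField]
    exact WithTop.coe_le_coe.2 (le_top : (2 : ℕ∞) ≤ ⊤)
  have hd : DifferentiableAt ℝ (fderiv ℝ f) x :=
    ((hf.cda hx).fderiv_right (m := (⊤ : ℕ∞)) (by simp)).differentiableAt (by simp)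
  have key : ∀ a b : Eu n, dd a (dd b f) x = fderiv ℝ (fderiv ℝ f) x a b := by
    intro a b
    unfold dd
    rw [fderiv_clm_apply hd (differentiableAt_const b)]
    simp
  rw [key, key]
  exact hs v w

/-- Homogeneity of integer degree. -/
def Hom {n : ℕ} (d : ℤ) (f : Eu n → ℝ) : Prop :=
  ∀ x : Eu n, x ≠ 0 → ∀ t : ℝ, 0 < t → f (t • x) = t ^ d * f x

lemma Hom.euler {n : ℕ} {d : ℤ} {f : Eu n → ℝ} (h : Hom d f) (hf : Sm f) {x : Eu n} (hx : x ≠ 0) :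
    dd x f x = d * f x := by
  have h1 : HasDerivAt (fun t : ℝ => f (t • x)) (fderiv ℝ f x x) 1 := by
    have := (hf.da hx).hasFDerivAt
    have h2 : HasDerivAt (fun t : ℝ => t • x) x 1 := by
      simpa using (hasDerivAt_id (1:ℝ)).smul_const x
    have h3 : HasFDerivAt f (fderiv ℝ f x) ((1:ℝ) • x) := by simpa using this
    exact h3.comp_hasDerivAt 1 h2
  have h2 : HasDerivAt (fun t : ℝ => t ^ d * f x) (d * f x) 1 := by
    have := (hasDerivAt_zpow d (1:ℝ) (Or.inl one_ne_zero)).mul_const (f x)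
    simpa using this
  have h3 : (fun t : ℝ => f (t • x)) =ᶠ[𝓝 1] (fun t : ℝ => t ^ d * f x) := by
    filter_upwards [lt_mem_nhds (zero_lt_one (α := ℝ))] with t ht using h x hx t ht
  exact (h1.congr_of_eventuallyEq h3.symm).unique h2

lemma Hom.dd {n : ℕ} {d : ℤ} {f : Eu n → ℝ} (h : Hom d f) (hf : Sm f) (v : Eu n) :
    Hom (d - 1) (dd v f) := by
  intro x hx t ht
  have htx : t • x ≠ 0 := smul_ne_zero ht.ne' hx
  have h1 : HasFDerivAt (fun y : Eu n => f (t • y)) (t • fderiv ℝ f (t • x)) x := by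
    have h2 : HasFDerivAt (fun y : Eu n => t • y) (t • ContinuousLinearMap.id ℝ (Eu n)) x :=
      (hasFDerivAt_id x).const_smul t
    have h3 := (hf.da htx).hasFDerivAt.comp x h2
    have h4 : (fderiv ℝ f (t • x)).comp (t • ContinuousLinearMap.id ℝ (Eu n))
        = t • fderiv ℝ f (t • x) := by
      ext; simp
    rw [h4] at h3
    exact h3
  have h2 : HasFDerivAt (fun y : Eu n => t ^ d * f y) (t ^ d • fderiv ℝ f x) x :=
    (hf.da hx).hasFDerivAt.const_mul (t ^ d)
  have h3 : (fun y : Eu n => f (t • y)) =ᶠ[𝓝 x] (fun y => t ^ d * f y) := by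
    filter_upwards [isOpen_compl_singleton.mem_nhds hx] with y hy using h y hy t ht
  have h4 := (h1.congr_of_eventuallyEq h3.symm).unique h2
  have h5 := congrArg (fun L => L v) h4
  simp only [smul_apply, smul_eq_mul] at h5
  unfold _root_.dd
  rw [zpow_sub_one₀ ht.ne']
  field_simp
  linarith

lemma dd_line {n : ℕ} {f : Eu n → ℝ} (hf : Sm f) (x v : Eu n) (t : ℝ) (h : x + t • v ≠ 0) :
    HasDerivAt (fun s : ℝ => f (x + s • v)) (dd v f (x + t • v)) t := by
  have h2 : HasDerivAt (fun s : ℝ => x + s • v) v t := by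
    simpa using ((hasDerivAt_id t).smul_const v).const_add x
  exact (hf.da h).hasFDerivAt.comp_hasDerivAt t h2

lemma line_ne {n : ℕ} {x v : Eu n} (hx : ‖x‖ = 1) (hv : ⟪x, v⟫_ℝ = 0) (t : ℝ) :
    x + t • v ≠ 0 := by
  intro h
  have := congrArg (fun y => ⟪x, y⟫_ℝ) h
  simp [inner_add_right, inner_smul_right, hv, hx] at this

/-- second derivative test -/
lemma snd_test {f f' : ℝ → ℝ} {c : ℝ} (h1 : ∀ t, HasDerivAt f (f' t) t) (h2 : HasDerivAt f' c 0)
    (hmax : ∀ t, f t ≤ f 0) : f' 0 = 0 ∧ c ≤ 0 := by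
  have h0 : f' 0 = 0 := by
    have : IsLocalMax f 0 := Filter.Eventually.of_forall hmax
    exact this.hasDerivAt_eq_zero (h1 0)
  refine ⟨h0, ?_⟩
  by_contra hc
  push Not at hc
  have hd : deriv f = f' := funext fun t => (h1 t).deriv
  have hmin : IsLocalMin f 0 := by
    apply isLocalMin_of_deriv_deriv_pos
    · rw [hd, h2.deriv]; exact hc
    · rw [hd, h0]
    · exact (h1 0).continuousAt
  have hconst : f =ᶠ[𝓝 0] fun _ => f 0 := by
    filter_upwards [hmin] with t ht using le_antisymm (hmax t) ht
  have h3 : f' =ᶠ[𝓝 0] fun _ => 0 := by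
    filter_upwards [hconst.eventuallyEq_nhds] with t ht
    rw [← hd, ht.deriv_eq]; simp
  have := h2.unique ((hasDerivAt_const (0:ℝ) (0:ℝ)).congr_of_eventuallyEq h3)
  linarith

end Part1

section Part2

/-- Abstract data about the support function. -/
structure Dat {n : ℕ} (p : ℝ) (H : Eu n → ℝ) : Prop where
  sm : Sm H
  hom : Hom 1 H
  pos : ∀ x : Eu n, x ≠ 0 → 0 < H x
  pd : ∀ x v : Eu n, ‖x‖ = 1 → ⟪x, v⟫_ℝ = 0 → v ≠ 0 → 0 < dd v (dd v H) x
  det : ∀ b : OrthonormalBasis (Fin (n + 1)) ℝ (Eu n), ∀ x : Eu n, ⟪b 0, x⟫_ℝ = 1 →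
    Matrix.det (Matrix.of fun i j => dd (b i) (dd (b j) H) x + if i = 0 ∧ j = 0 then 1 else 0)
      = H x ^ (p - 1) * (‖x‖ ^ 2) ^ (-((n : ℝ) + 1 + p) / 2)

/-- the determinant trick -/
lemma det_trick {m : Type*} [Fintype m] [DecidableEq m] (A : Matrix m m ℝ) (hA : A.transpose = A)
    (x z : m → ℝ) (hx : A.mulVec x = 0) (hxx : x ⬝ᵥ x ≠ 0) :
    (A + Matrix.vecMulVec z z).det * (x ⬝ᵥ x) ^ 2
      = (z ⬝ᵥ x) ^ 2 * (A + Matrix.vecMulVec x x).det := by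
  set r := x ⬝ᵥ x with hr
  set w : m → ℝ := r⁻¹ • (z - x) with hw
  set P : Matrix m m ℝ := 1 + Matrix.vecMulVec x w with hP
  have hAP : A * P = A := by
    rw [hP, mul_add, mul_one, Matrix.mul_vecMulVec, hx]; simp
  have hPA : P.transpose * A = A := by
    have := congrArg Matrix.transpose hAP
    rwa [Matrix.transpose_mul, hA] at this
  have hPx : P.transpose.mulVec x = z := by
    rw [hP, Matrix.transpose_add, Matrix.transpose_one, Matrix.transpose_vecMulVec,
      Matrix.add_mulVec, Matrix.one_mulVec, Matrix.vecMulVec_mulVec, ← hr, hw]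
    ext i
    simp
    field_simp
    ring
  have hmain : P.transpose * (A + Matrix.vecMulVec x x) * P = A + Matrix.vecMulVec z z := by
    rw [Matrix.mul_add P.transpose A, Matrix.add_mul, hPA, hAP, Matrix.mul_vecMulVec, hPx, Matrix.vecMulVec_mul,
      ← Matrix.mulVec_transpose, hPx]
  have hdP : P.det = (z ⬝ᵥ x) / r := by
    rw [hP, Matrix.vecMulVec_eq Unit, Matrix.det_one_add_replicateCol_mul_replicateRow, hw]
    simp only [smul_dotProduct, sub_dotProduct, smul_eq_mul]
    rw [← hr]
    field_simp
    ring
  rw [← hmain, Matrix.det_mul, Matrix.det_mul, Matrix.det_transpose, hdP]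
  field_simp

lemma sfn_bdd {n : ℕ} {K : Set (Eu n)} (hK : IsSmoothConvexBody K) (z : Eu n) :
    BddAbove ((fun y => ⟪z, y⟫_ℝ) '' K) :=
  (hK.compact.image (by fun_prop)).bddAbove

open scoped Pointwise in
lemma sfn_hom {n : ℕ} (K : Set (Eu n)) : Hom 1 (sfn K) := by
  intro x hx t ht
  unfold sfn
  have : (fun y => ⟪t • x, y⟫_ℝ) '' K = t • ((fun y => ⟪x, y⟫_ℝ) '' K) := by
    ext r
    simp [Set.mem_smul_set, inner_smul_left]
  rw [this, Real.sSup_smul_of_nonneg ht.le]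
  simp

lemma grad_inner {n : ℕ} {f : Eu n → ℝ} (v x : Eu n) :
    ⟪gradient f x, v⟫_ℝ = dd v f x := by
  simp [gradient, dd]

lemma hess_inner {n : ℕ} {K : Set (Eu n)} (hs : Sm (sfn K)) (v w : Eu n) {x : Eu n} (hx : x ≠ 0) :
    ⟪hessA K x v, w⟫_ℝ = dd v (dd w (sfn K)) x := by
  have hd : DifferentiableAt ℝ (gradient (sfn K)) x := by
    have h1 : DifferentiableAt ℝ (fderiv ℝ (sfn K)) x :=
      ((hs.cda hx).fderiv_right (m := (⊤ : ℕ∞)) (by simp)).differentiableAt (by simp)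
    unfold gradient
    exact ((InnerProductSpace.toDual ℝ (Eu n)).symm.toContinuousLinearEquiv.differentiableAt).comp x h1
  have : dd w (sfn K) = fun y => ⟪gradient (sfn K) y, w⟫_ℝ := by
    ext y; rw [grad_inner]
  rw [this]
  unfold dd
  rw [fderiv_inner_apply ℝ hd (differentiableAt_const w)]
  simp [hessA]

lemma H_rad {n : ℕ} {H : Eu n → ℝ} (hs : Sm H) (hh : Hom 1 H) (v : Eu n) {x : Eu n} (hx : x ≠ 0) :
    dd v (dd x H) x = 0 := by
  rw [dd_comm hs _ _ hx, (hh.dd hs v).euler (hs.dd v) hx]; simp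

lemma dat_of_body {n : ℕ} {p : ℝ} {K : Set (Eu n)} (hK : IsSmoothConvexBody K)
    (heq : ∀ x : Sph n, rK K (x : Eu n) = sfn K (x : Eu n) ^ (p - 1)) : Dat p (sfn K) := by
  have hs : Sm (sfn K) := hK.smooth
  have hh := sfn_hom K
  have hpos : ∀ x : Eu n, x ≠ 0 → 0 < sfn K x := by
    intro x hx
    have h1 := hK.pos ⟨‖x‖⁻¹ • x, by simp [norm_smul, hx]⟩
    rw [hh x hx _ (by positivity)] at h1
    have : 0 < ‖x‖⁻¹ := by positivity
    simp only [zpow_one] at h1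
    exact (mul_pos_iff_of_pos_left this).1 h1
  refine ⟨hs, hh, hpos, ?_, ?_⟩
  · intro x v hx hxv hv
    have hx0 : x ≠ 0 := by rintro rfl; simp at hx
    have := hK.posdef ⟨x, by simp [hx]⟩ v hv
    simpa [inner_add_left, hess_inner hs v v hx0, tens, inner_smul_left, hxv] using this
  · intro b x hbx
    have hx0 : x ≠ 0 := by rintro rfl; simp at hbx
    have hr : 0 < ‖x‖ := by positivity
    set r := ‖x‖ with hrdef
    set θ : Eu n := r⁻¹ • x with hθ
    have hθn : ‖θ‖ = 1 := by rw [hθ, norm_smul, ← hrdef, norm_inv, Real.norm_of_nonneg hr.le]; field_simp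
    have hθ0 : θ ≠ 0 := by intro h; simp [h] at hθn
    have hxθ : x = r • θ := by simp [hθ, smul_smul, hr.ne']
    set A : Matrix (Fin (n+1)) (Fin (n+1)) ℝ :=
      Matrix.of fun i j => dd (b i) (dd (b j) (sfn K)) θ with hA
    set c : Fin (n+1) → ℝ := fun i => ⟪b i, θ⟫_ℝ with hc
    have hdet1 : (A + Matrix.vecMulVec c c).det = sfn K θ ^ (p - 1) := by
      rw [← heq ⟨θ, by simp [hθn]⟩, rK, ← LinearMap.det_toMatrix b.toBasis]
      congr 1
      ext i j
      rw [LinearMap.toMatrix_apply]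
      simp only [OrthonormalBasis.coe_toBasis, OrthonormalBasis.coe_toBasis_repr_apply,
        OrthonormalBasis.repr_apply_apply, Matrix.add_apply, Matrix.vecMulVec_apply, hA, hc,
        Matrix.of_apply, ContinuousLinearMap.coe_coe, add_apply, inner_add_right]
      congr 1
      · rw [real_inner_comm, hess_inner hs _ _ hθ0, dd_comm hs _ _ hθ0]
      · simp [tens, inner_smul_right, real_inner_comm]
        ring
    have hAsym : A.transpose = A := by
      ext i j
      simp [hA, Matrix.transpose_apply]
      rw [dd_comm hs _ _ hθ0]
    have hsum : ∑ i, c i • b i = θ := by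
      simpa [hc] using b.sum_repr' θ
    have hlin : ∀ (y : Eu n) (v : Eu n), dd v (sfn K) y = ∑ i, ⟪b i, v⟫_ℝ * dd (b i) (sfn K) y := by
      intro y v
      conv_lhs => rw [← b.sum_repr' v]
      simp [dd]
    have hAc : A.mulVec c = 0 := by
      ext i
      have h0 := H_rad hs hh (b i) hθ0
      rw [dd_comm hs _ _ hθ0] at h0
      have : dd θ (dd (b i) (sfn K)) θ = ∑ j, c j * dd (b j) (dd (b i) (sfn K)) θ := by
        have := congrArg (fun v => fderiv ℝ (dd (b i) (sfn K)) θ v) hsum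
        simp only [map_sum, map_smul, smul_eq_mul] at this
        exact this.symm
      simp only [Matrix.mulVec, dotProduct, hA, Matrix.of_apply, Pi.zero_apply]
      rw [← h0, this]
      refine Finset.sum_congr rfl fun j _ => ?_
      rw [dd_comm hs _ _ hθ0]; ring
    have hcc : c ⬝ᵥ c = 1 := by
      have : ⟪θ, θ⟫_ℝ = ∑ i, ⟪θ, b i⟫_ℝ * ⟪b i, θ⟫_ℝ := (b.sum_inner_mul_inner θ θ).symm
      rw [real_inner_self_eq_norm_sq, hθn] at this
      simp only [dotProduct, hc]
      rw [show (1:ℝ) = 1 ^ 2 by norm_num, this]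
      refine Finset.sum_congr rfl fun j _ => ?_
      rw [real_inner_comm θ]
    -- main
    set e : Fin (n+1) → ℝ := Pi.single 0 1 with he
    have hz : (Matrix.of fun i j => dd (b i) (dd (b j) (sfn K)) x + if i = 0 ∧ j = 0 then 1 else 0)
        = r⁻¹ • (A + Matrix.vecMulVec (√r • e) (√r • e)) := by
      ext i j
      have h1 : dd (b i) (dd (b j) (sfn K)) x = r⁻¹ * dd (b i) (dd (b j) (sfn K)) θ := by
        rw [hxθ, ((hh.dd hs (b j)).dd (hs.dd (b j)) (b i)) θ hθ0 r hr]
        norm_num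
      simp only [Matrix.of_apply, Matrix.smul_apply, Matrix.add_apply, Matrix.vecMulVec_apply, hA,
        Pi.smul_apply, smul_eq_mul, h1, mul_add, he]
      congr 1
      have hss : √r * √r = r := Real.mul_self_sqrt hr.le
      by_cases hi : i = 0 <;> by_cases hj : j = 0 <;> simp [hi, hj, hss, hr.ne']
    have hec : (√r • e) ⬝ᵥ c = √r * r⁻¹ := by
      have : ⟪b 0, θ⟫_ℝ = r⁻¹ := by simp [hθ, inner_smul_right, hbx]
      simp [he, hc, this]
    have htr := det_trick A hAsym c (√r • e) hAc (by rw [hcc]; norm_num)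
    rw [hcc, hec, hdet1, one_pow, mul_one, mul_pow, Real.sq_sqrt hr.le] at htr
    rw [hz, Matrix.det_smul, htr, Fintype.card_fin]
    have hHx : sfn K x = r * sfn K θ := by
      conv_lhs => rw [hxθ, hh θ hθ0 r hr]
      simp
    have hpθ := hpos θ hθ0
    rw [hHx, Real.mul_rpow hr.le hpθ.le, ← Real.rpow_natCast r 2, ← Real.rpow_mul hr.le]
    have e1 : r⁻¹ ^ (n+1) * (r * (r⁻¹)^2) = r ^ (-((n:ℝ) + 2)) := by
      rw [Real.rpow_neg hr.le, show ((n:ℝ)+2) = ((n+2 : ℕ) : ℝ) by push_cast; ring, Real.rpow_natCast, inv_pow, inv_pow]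
      field_simp
      ring
    have e2 : r ^ (p-1) * r ^ (((2:ℕ):ℝ) * (-((n : ℝ) + 1 + p) / 2)) = r ^ (-((n:ℝ) + 2)) := by
      rw [← Real.rpow_add hr]; congr 1; push_cast; ring
    rw [← mul_assoc, e1, ← e2]; ring

end Part2

section Part3

lemma hasDerivAt_det {m : Type*} [Fintype m] [DecidableEq m] {S : ℝ → Matrix m m ℝ}
    {S1 : Matrix m m ℝ} {t : ℝ} (h : ∀ i j, HasDerivAt (fun s => S s i j) (S1 i j) t) :
    HasDerivAt (fun s => (S s).det) (∑ i, ∑ k, (S t).adjugate i k * S1 k i) t := by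
  have h1 : HasDerivAt (fun s => ∑ σ : Equiv.Perm m, ((Equiv.Perm.sign σ : ℤ) : ℝ) * ∏ i, S s (σ i) i)
      (∑ σ : Equiv.Perm m, ((Equiv.Perm.sign σ : ℤ) : ℝ) *
        ∑ i, (∏ j ∈ Finset.univ.erase i, S t (σ j) j) • S1 (σ i) i) t := by
    refine HasDerivAt.fun_sum fun σ _ => ?_
    exact (HasDerivAt.fun_finsetProd (fun i _ => h (σ i) i)).const_mul _
  have h2 : ∀ i, ∑ k, (S t).adjugate i k * S1 k i = ((S t).updateCol i (fun k => S1 k i)).det := by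
    intro i
    rw [← Matrix.cramer_apply, Matrix.cramer_eq_adjugate_mulVec]
    rfl
  simp_rw [h2, Matrix.det_apply']
  convert h1 using 1
  rw [Finset.sum_comm]
  refine Finset.sum_congr rfl fun σ _ => ?_
  rw [Finset.mul_sum]
  refine Finset.sum_congr rfl fun i _ => ?_
  congr 1
  rw [← Finset.mul_prod_erase _ _ (Finset.mem_univ i)]
  simp only [Matrix.updateCol_self, smul_eq_mul]
  rw [mul_comm]
  congr 1
  refine Finset.prod_congr rfl fun j hj => ?_
  rw [Matrix.updateCol_ne (Finset.ne_of_mem_erase hj)]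

lemma det_two {m : Type*} [Fintype m] [DecidableEq m] {S S1 : ℝ → Matrix m m ℝ}
    {S2 : Matrix m m ℝ} {d : m → ℝ} {R R1 : ℝ → ℝ} {R2 : ℝ}
    (h : ∀ t i j, HasDerivAt (fun s => S s i j) (S1 t i j) t)
    (h1 : ∀ i j, HasDerivAt (fun s => S1 s i j) (S2 i j) 0)
    (h0 : S 0 = Matrix.diagonal d) (hd : ∀ i, 0 < d i)
    (hR : ∀ t, (S t).det = R t) (hR1 : ∀ t, HasDerivAt R (R1 t) t) (hR2 : HasDerivAt R1 R2 0) :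
    (∑ i, S1 0 i i / d i = R1 0 / R 0) ∧
    (∑ i, S2 i i / d i = ∑ i, ∑ j, S1 0 i j * S1 0 j i / (d i * d j)
      + R2 / R 0 - (R1 0 / R 0) ^ 2) := by
  have hdet : ∀ t, HasDerivAt R (∑ i, ∑ k, (S t).adjugate i k * S1 t k i) t := by
    intro t
    have := hasDerivAt_det (h t)
    rwa [show (fun s => (S s).det) = R from funext hR] at this
  have hR1eq : ∀ t, R1 t = ∑ i, ∑ k, (S t).adjugate i k * S1 t k i :=
    fun t => (hR1 t).unique (hdet t)
  set Δ := ∏ i, d i with hΔ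
  have hΔpos : 0 < Δ := Finset.prod_pos fun i _ => hd i
  have hR0 : R 0 = Δ := by rw [← hR, h0, Matrix.det_diagonal]
  have hadj0 : (S 0).adjugate = Matrix.diagonal fun i => Δ / d i := by
    rw [h0, Matrix.adjugate_diagonal]
    congr 1; ext i
    rw [eq_div_iff (hd i).ne', Finset.prod_erase_mul _ _ (Finset.mem_univ i)]
  -- differentiability of adjugate entries
  have hadj : ∀ i j, DifferentiableAt ℝ (fun t => (S t).adjugate i j) 0 := by
    intro i j
    simp_rw [Matrix.adjugate_apply]
    have key : ∀ a b, HasDerivAt (fun s => (S s).updateRow j (Pi.single i 1) a b)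
        ((S1 0).updateRow j 0 a b) 0 := by
      intro a b
      by_cases ha : a = j
      · subst ha
        simpa [Matrix.updateRow_self] using hasDerivAt_const (0:ℝ) ((Pi.single i 1 : m → ℝ) b)
      · simpa [Matrix.updateRow_ne ha] using h 0 a b
    exact (hasDerivAt_det key).differentiableAt
  set B : m → m → ℝ := fun i j => deriv (fun t => (S t).adjugate i j) 0 with hB
  have hBd : ∀ i j, HasDerivAt (fun t => (S t).adjugate i j) (B i j) 0 := fun i j => (hadj i j).hasDerivAt
  have hBeq : ∀ i j, B i j = (if i = j then R1 0 else 0) / d i - S1 0 i j * Δ / (d i * d j) := by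
    intro i j
    have e1 : HasDerivAt (fun t => ∑ k, S t i k * (S t).adjugate k j)
        (∑ k, (S1 0 i k * (S 0).adjugate k j + S 0 i k * B k j)) 0 :=
      HasDerivAt.fun_sum fun k _ => (h 0 i k).mul (hBd k j)
    have e2 : (fun t => ∑ k, S t i k * (S t).adjugate k j) = fun t => R t * (if i = j then 1 else 0) := by
      ext t
      have := congrFun (congrFun (Matrix.mul_adjugate (S t)) i) j
      rw [Matrix.mul_apply] at this
      rw [this, hR]; simp [Matrix.one_apply]
    rw [e2] at e1
    have e3 := e1.unique ((hR1 0).mul_const (if i = j then (1:ℝ) else 0))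
    rw [hadj0, h0] at e3
    simp only [Matrix.diagonal_apply, Finset.sum_add_distrib, mul_ite, mul_zero, ite_mul, zero_mul,
      Finset.sum_ite_eq, Finset.sum_ite_eq', Finset.mem_univ, if_true, mul_one] at e3
    have hi := (hd i).ne'
    have hj := (hd j).ne'
    field_simp
    field_simp at e3
    linarith
  have hR2' : HasDerivAt R1 (∑ i, ∑ k, (B i k * S1 0 k i + (S 0).adjugate i k * S2 k i)) 0 := by
    rw [show R1 = fun t => ∑ i, ∑ k, (S t).adjugate i k * S1 t k i from funext hR1eq]
    exact HasDerivAt.fun_sum fun i _ => HasDerivAt.fun_sum fun k _ => (hBd i k).mul (h1 k i)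
  have hfirst : ∑ i, S1 0 i i / d i = R1 0 / R 0 := by
    rw [hR1eq 0, hadj0, hR0, eq_div_iff hΔpos.ne', Finset.sum_mul]
    simp only [Matrix.diagonal_apply, ite_mul, zero_mul, Finset.sum_ite_eq, Finset.mem_univ, if_true]
    exact Finset.sum_congr rfl fun i _ => by ring
  refine ⟨hfirst, ?_⟩
  have e := hR2.unique hR2'
  rw [e, hadj0, hR0]
  simp only [Matrix.diagonal_apply, ite_mul, zero_mul, Finset.sum_add_distrib, Finset.sum_ite_eq,
    Finset.mem_univ, if_true, hBeq, sub_mul, Finset.sum_sub_distrib, ite_div, zero_div]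
  have e4 : ∑ i, R1 0 / d i * S1 0 i i = R1 0 ^ 2 / Δ := by
    rw [hR0] at hfirst
    rw [show R1 0 ^ 2 / Δ = R1 0 * (R1 0 / Δ) by ring, ← hfirst, Finset.mul_sum]
    exact Finset.sum_congr rfl fun i _ => by ring
  have e5 : ∑ i, ∑ j, S1 0 i j * Δ / (d i * d j) * S1 0 j i
      = Δ * ∑ i, ∑ j, S1 0 i j * S1 0 j i / (d i * d j) := by
    rw [Finset.mul_sum]
    refine Finset.sum_congr rfl fun i _ => ?_
    rw [Finset.mul_sum]
    exact Finset.sum_congr rfl fun j _ => by ring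
  have e6 : ∑ i, Δ / d i * S2 i i = Δ * ∑ i, S2 i i / d i := by
    rw [Finset.mul_sum]
    exact Finset.sum_congr rfl fun i _ => by ring
  rw [e4, e5, e6]
  field_simp
  ring

end Part3

section Part4

lemma hess_inner' {n : ℕ} {H : Eu n → ℝ} (hs : Sm H) (v w : Eu n) {x : Eu n} (hx : x ≠ 0) :
    ⟪fderiv ℝ (gradient H) x v, w⟫_ℝ = dd v (dd w H) x := by
  have hd : DifferentiableAt ℝ (gradient H) x := by
    have h1 : DifferentiableAt ℝ (fderiv ℝ H) x :=
      ((hs.cda hx).fderiv_right (m := (⊤ : ℕ∞)) (by simp)).differentiableAt (by simp)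
    unfold gradient
    exact ((InnerProductSpace.toDual ℝ (Eu n)).symm.toContinuousLinearEquiv.differentiableAt).comp x h1
  have : dd w H = fun y => ⟪gradient H y, w⟫_ℝ := by
    ext y; rw [grad_inner]
  rw [this]
  unfold dd
  rw [fderiv_inner_apply ℝ hd (differentiableAt_const w)]
  simp

/-- an adapted orthonormal frame at `x` -/
structure Frame {n : ℕ} (H : Eu n → ℝ) (x : Eu n)
    (b : OrthonormalBasis (Fin (n + 1)) ℝ (Eu n)) (l : Fin n → ℝ) : Prop where
  b0 : b 0 = x
  diag : ∀ i j, dd (b i.succ) (dd (b j.succ) H) x = if i = j then l i else 0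
  lpos : ∀ i, 0 < l i

lemma exists_frame {n : ℕ} {p : ℝ} {H : Eu n → ℝ} (hH : Dat p H) {x : Eu n} (hx : ‖x‖ = 1) :
    ∃ b l, Frame H x b l := by
  have hx0 : x ≠ 0 := by rintro rfl; simp at hx
  set A : Eu n →ₗ[ℝ] Eu n := (fderiv ℝ (gradient H) x).toLinearMap with hA
  have hAin : ∀ v w, ⟪A v, w⟫_ℝ = dd v (dd w H) x := fun v w => hess_inner' hH.sm v w hx0
  set V : Submodule ℝ (Eu n) := (Submodule.span ℝ {x})ᗮ with hV
  have hfin : Module.finrank ℝ V = n := by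
    haveI : Fact (Module.finrank ℝ (Eu n) = n + 1) := ⟨by simp⟩
    exact Submodule.finrank_orthogonal_span_singleton hx0
  set T : V →ₗ[ℝ] V := (V.orthogonalProjection : Eu n →L[ℝ] V).toLinearMap ∘ₗ A ∘ₗ V.subtype with hT
  have hTin : ∀ v w : V, ⟪T v, w⟫_ℝ = dd (v : Eu n) (dd (w : Eu n) H) x := by
    intro v w
    rw [← hAin]
    simp only [hT, LinearMap.comp_apply]
    exact Submodule.inner_orthogonalProjection_eq_of_mem_right w (A v)
  have hTs : T.IsSymmetric := by
    intro v w
    rw [hTin, real_inner_comm, hTin, dd_comm hH.sm _ _ hx0]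
  set e := hTs.eigenvectorBasis hfin with he
  set l := hTs.eigenvalues hfin with hl
  have hxe : ∀ i, ⟪x, (e i : Eu n)⟫_ℝ = 0 := by
    intro i
    exact (Submodule.mem_orthogonal_singleton_iff_inner_right).1 (e i).2
  have hee : ∀ i j, ⟪(e i : Eu n), (e j : Eu n)⟫_ℝ = if i = j then 1 else 0 := by
    intro i j
    exact (orthonormal_iff_ite.1 e.orthonormal) i j
  set f : Fin (n+1) → Eu n := Fin.cons x (fun i => (e i : Eu n)) with hf
  have hfo : Orthonormal ℝ f := by
    rw [orthonormal_iff_ite]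
    intro i j
    refine Fin.cases ?_ (fun i => ?_) i <;> refine Fin.cases ?_ (fun j => ?_) j
    · simp [hf, hx]
    · simp [hf, hxe, (Fin.succ_ne_zero _).symm]
    · simp [hf, real_inner_comm, hxe]
    · simp [hf, hee]
  have hsp : (⊤ : Submodule ℝ (Eu n)) ≤ Submodule.span ℝ (Set.range f) := by
    rw [hfo.linearIndependent.span_eq_top_of_card_eq_finrank (by simp)]
  refine ⟨OrthonormalBasis.mk hfo hsp, l, ?_, ?_, ?_⟩
  · simp [hf]
  · intro i j
    simp only [OrthonormalBasis.coe_mk, hf, Fin.cons_succ]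
    rw [← hTin, hTs.apply_eigenvectorBasis]
    simp only [RCLike.ofReal_real_eq_id, id, inner_smul_left]
    have := (orthonormal_iff_ite.1 e.orthonormal) i j
    rw [← he, this]
    simp [hl]
  · intro i
    have h1 := hH.pd x (e i) hx (hxe i) (by
      intro h
      have := hee i i
      simp [h] at this)
    rw [← hTin, hTs.apply_eigenvectorBasis] at h1
    simp only [RCLike.ofReal_real_eq_id, id, inner_smul_left] at h1
    have := (orthonormal_iff_ite.1 e.orthonormal) i i
    rw [← he, this] at h1
    simpa using h1

section local_facts
variable {n : ℕ} {p : ℝ} {H : Eu n → ℝ} {x : Eu n}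
  {b : OrthonormalBasis (Fin (n + 1)) ℝ (Eu n)} {l : Fin n → ℝ}

lemma Frame.nx (F : Frame H x b l) : ‖x‖ = 1 := by
  rw [← F.b0]; exact b.orthonormal.1 0

lemma Frame.x0 (F : Frame H x b l) : x ≠ 0 := by
  intro h
  have := F.nx
  simp [h] at this

lemma Frame.perp (F : Frame H x b l) (i : Fin n) : ⟪x, b i.succ⟫_ℝ = 0 := by
  rw [← F.b0]
  exact b.orthonormal.2 (Fin.succ_ne_zero i).symm

/-- first derivative -/
def gg (H : Eu n → ℝ) (x : Eu n) (b : OrthonormalBasis (Fin (n + 1)) ℝ (Eu n)) (i : Fin n) : ℝ :=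
  dd (b i.succ) H x
/-- third derivative -/
def CC (H : Eu n → ℝ) (x : Eu n) (b : OrthonormalBasis (Fin (n + 1)) ℝ (Eu n)) (i j k : Fin n) : ℝ :=
  dd (b i.succ) (dd (b j.succ) (dd (b k.succ) H)) x
/-- fourth derivative -/
def QQ (H : Eu n → ℝ) (x : Eu n) (b : OrthonormalBasis (Fin (n + 1)) ℝ (Eu n)) (i k : Fin n) : ℝ :=
  dd (b i.succ) (dd (b i.succ) (dd (b k.succ) (dd (b k.succ) H))) x

lemma dd3_swap (hs : Sm H) (u v w : Eu n) (hx : x ≠ 0) :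
    dd u (dd v (dd w H)) x = dd u (dd w (dd v H)) x :=
  dd_congr0 u hx fun _ hy => dd_comm hs v w hy

lemma dd4_swap (hs : Sm H) (a u v w : Eu n) (hx : x ≠ 0) :
    dd a (dd u (dd v (dd w H))) x = dd a (dd u (dd w (dd v H))) x :=
  dd_congr0 a hx fun _ hy => dd3_swap hs u v w hy

lemma dd4_swap' (hs : Sm H) (a u v w : Eu n) (hx : x ≠ 0) :
    dd a (dd u (dd v (dd w H))) x = dd a (dd v (dd u (dd w H))) x :=
  dd_congr0 a hx fun _ hy => dd_comm (hs.dd w) u v hy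

lemma CC_swap1 (hs : Sm H) (hx : x ≠ 0) (i j k : Fin n) : CC H x b i j k = CC H x b j i k :=
  dd_comm (hs.dd _) _ _ hx
lemma CC_swap2 (hs : Sm H) (hx : x ≠ 0) (i j k : Fin n) : CC H x b i j k = CC H x b i k j :=
  dd3_swap hs _ _ _ hx

lemma QQ_symm (hs : Sm H) (hx : x ≠ 0) (i k : Fin n) : QQ H x b i k = QQ H x b k i := by
  unfold QQ
  rw [dd4_swap' hs _ _ _ _ hx, dd4_swap hs _ _ _ _ hx, dd_comm ((hs.dd _).dd _) _ _ hx,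
    dd4_swap' hs _ _ _ _ hx]

/-- third derivatives with one radial direction -/
lemma D3_rad (hs : Sm H) (hh : Hom 1 H) (hx : x ≠ 0) (u v : Eu n) :
    dd x (dd u (dd v H)) x = - dd u (dd v H) x := by
  rw [((hh.dd hs v).dd (hs.dd v) u).euler ((hs.dd v).dd u) hx]; simp
lemma D3_rad' (hs : Sm H) (hh : Hom 1 H) (hx : x ≠ 0) (u v : Eu n) :
    dd u (dd x (dd v H)) x = - dd u (dd v H) x := by
  rw [dd_comm (hs.dd v) _ _ hx, D3_rad hs hh hx]
lemma D3_rad'' (hs : Sm H) (hh : Hom 1 H) (hx : x ≠ 0) (u v : Eu n) :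
    dd u (dd v (dd x H)) x = - dd u (dd v H) x := by
  rw [dd3_swap hs _ _ _ hx, D3_rad' hs hh hx]
lemma D4_rad (hs : Sm H) (hh : Hom 1 H) (hx : x ≠ 0) (u v : Eu n) :
    dd u (dd v (dd x (dd x H))) x = 2 * dd u (dd v H) x := by
  rw [dd4_swap' hs _ _ _ _ hx, dd_comm ((hs.dd _).dd _) _ _ hx, 
    (((hh.dd hs x).dd (hs.dd x) v).dd ((hs.dd x).dd v) u).euler (((hs.dd x).dd v).dd u) hx,
    D3_rad'' hs hh hx]
  push_cast; ring
lemma D1_rad (hs : Sm H) (hh : Hom 1 H) (hx : x ≠ 0) : dd x H x = H x := by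
  rw [hh.euler hs hx]; simp
lemma D2_rad (hs : Sm H) (hh : Hom 1 H) (hx : x ≠ 0) (u : Eu n) : dd x (dd u H) x = 0 := by
  rw [dd_comm hs _ _ hx, H_rad hs hh u hx]

lemma norm_line (hx : ‖x‖ = 1) {v : Eu n} (hv : ‖v‖ = 1) (hxv : ⟪x, v⟫_ℝ = 0) (t : ℝ) :
    ‖x + t • v‖ ^ 2 = 1 + t ^ 2 := by
  rw [norm_add_sq_real, inner_smul_right, hxv, norm_smul, hx, hv]; simp

lemma E12 (hH : Dat p H) (F : Frame H x b l) (k : Fin n) :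
    (∑ i, CC H x b i i k / l i = (p - 1) * gg H x b k / H x) ∧
    (∑ i, QQ H x b i k / l i = ∑ i, ∑ j, CC H x b i j k ^ 2 / (l i * l j)
      + (p - 1) * (l k / H x - gg H x b k ^ 2 / H x ^ 2) - (n + 1 + p)) := by
  have hs := hH.sm
  have hh := hH.hom
  have hx0 := F.x0
  set v := b k.succ with hv
  have hvn : ‖v‖ = 1 := b.orthonormal.1 _
  have hxv : ⟪x, v⟫_ℝ = 0 := F.perp k
  have hne : ∀ t : ℝ, x + t • v ≠ 0 := line_ne F.nx hxv
  set S : ℝ → Matrix (Fin (n+1)) (Fin (n+1)) ℝ := fun t => Matrix.of fun i j =>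
    dd (b i) (dd (b j) H) (x + t • v) + if i = 0 ∧ j = 0 then 1 else 0 with hS
  set S1 : ℝ → Matrix (Fin (n+1)) (Fin (n+1)) ℝ := fun t => Matrix.of fun i j =>
    dd v (dd (b i) (dd (b j) H)) (x + t • v) with hS1
  set S2 : Matrix (Fin (n+1)) (Fin (n+1)) ℝ := Matrix.of fun i j =>
    dd v (dd v (dd (b i) (dd (b j) H))) x with hS2
  set m : ℝ := -((n : ℝ) + 1 + p) / 2 with hm
  set L : ℝ → ℝ := fun t => (p - 1) * log (H (x + t • v)) + m * log (1 + t ^ 2) with hL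
  set L1 : ℝ → ℝ := fun t => (p - 1) * (dd v H (x + t • v) / H (x + t • v)) + m * (2 * t / (1 + t ^ 2)) with hL1
  set L2 : ℝ := (p - 1) * (l k / H x - gg H x b k ^ 2 / H x ^ 2) + m * 2 with hL2
  have hHpos : ∀ t : ℝ, 0 < H (x + t • v) := fun t => hH.pos _ (hne t)
  have hsq : ∀ t : ℝ, (0:ℝ) < 1 + t ^ 2 := fun t => by positivity
  have dH : ∀ t, HasDerivAt (fun t => H (x + t • v)) (dd v H (x + t • v)) t :=
    fun t => dd_line hs x v t (hne t)
  have dL : ∀ t, HasDerivAt L (L1 t) t := by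
    intro t
    have h1 := ((dH t).log (hHpos t).ne').const_mul (p-1)
    have h2 : HasDerivAt (fun t : ℝ => 1 + t ^ 2) (2 * t) t := by
      simpa using ((hasDerivAt_id t).pow 2).const_add 1
    exact h1.add ((h2.log (hsq t).ne').const_mul m)
  have dL1 : HasDerivAt L1 L2 0 := by
    have h1 := (((dd_line (hs.dd v) x v 0 (hne 0)).div (dH 0) (hHpos 0).ne')).const_mul (p-1)
    have h2 : HasDerivAt (fun t : ℝ => 1 + t ^ 2) (2 * 0) 0 := by
      simpa using ((hasDerivAt_id (0:ℝ)).pow 2).const_add 1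
    have h3 : HasDerivAt (fun t : ℝ => 2 * t) 2 0 := by
      simpa using (hasDerivAt_id (0:ℝ)).const_mul 2
    have h4 := (h3.div h2 (hsq 0).ne').const_mul m
    have h5 := h1.add h4
    have hd := F.diag k k
    rw [if_pos rfl] at hd
    refine h5.congr_deriv ?_
    simp only [zero_smul, add_zero, ← hv] at hd ⊢
    have := hH.pos x hx0
    rw [hd, hL2, gg, ← hv]
    field_simp
    ring
  have hR : ∀ t, (S t).det = exp (L t) := by
    intro t
    have := hH.det b (x + t • v) (by rw [F.b0, inner_add_right, inner_smul_right, hxv]; simp [F.nx])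
    rw [norm_line F.nx hvn hxv] at this
    rw [hS]
    simp only
    rw [this, hL, Real.exp_add, Real.rpow_def_of_pos (hHpos t), Real.rpow_def_of_pos (hsq t)]
    congr 2 <;> ring
  have hR1 : ∀ t, HasDerivAt (fun t => exp (L t)) (exp (L t) * L1 t) t := fun t => (dL t).exp
  have hR2 : HasDerivAt (fun t => exp (L t) * L1 t) (exp (L 0) * L1 0 * L1 0 + exp (L 0) * L2) 0 :=
    (hR1 0).mul dL1
  set d : Fin (n+1) → ℝ := Fin.cons 1 l with hd
  have h0 : S 0 = Matrix.diagonal d := by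
    ext i j
    simp only [hS, Matrix.of_apply, zero_smul, add_zero, Matrix.diagonal_apply, hd]
    refine Fin.cases ?_ (fun i => ?_) i <;> refine Fin.cases ?_ (fun j => ?_) j
    · rw [F.b0, D2_rad hs hh hx0]; simp
    · rw [F.b0, D2_rad hs hh hx0]; simp [(Fin.succ_ne_zero _).symm]
    · rw [F.b0, H_rad hs hh _ hx0]; simp
    · rw [F.diag]; simp
  have key := det_two (S := S) (S1 := S1) (S2 := S2) (d := d)
    (fun t i j => (dd_line ((hs.dd _).dd _) x v t (hne t)).add_const _)
    (fun i j => by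
      have := dd_line (((hs.dd (b j)).dd (b i)).dd v) x v 0 (hne 0)
      rw [zero_smul, add_zero] at this
      exact this)
    h0 (fun i => by refine Fin.cases ?_ (fun i => ?_) i <;> simp [hd, F.lpos]) hR hR1 hR2
  have hE := (exp_pos (L 0)).ne'
  obtain ⟨k1, k2⟩ := key
  have r1 : exp (L 0) * L1 0 / exp (L 0) = L1 0 := by field_simp
  have r2 : (exp (L 0) * L1 0 * L1 0 + exp (L 0) * L2) / exp (L 0) = L1 0 ^ 2 + L2 := by
    field_simp
  rw [r1] at k1
  rw [r1, r2] at k2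
  have hL10 : L1 0 = (p - 1) * gg H x b k / H x := by
    simp [hL1, gg, ← hv]; ring
  have c1 : ∀ i j : Fin n, dd v (dd (b i.succ) (dd (b j.succ) H)) x = CC H x b i j k := by
    intro i j
    rw [CC_swap2 hs hx0, CC_swap1 hs hx0]
    rfl
  have c2 : ∀ i : Fin n, dd v (dd v (dd (b i.succ) (dd (b i.succ) H))) x = QQ H x b i k := by
    intro i
    rw [QQ_symm hs hx0]; rfl
  have c3 : ∀ j : Fin n, dd v (dd (b j.succ) H) x = if k = j then l k else 0 := F.diag k
  have c4 : dd v (dd v H) x = l k := by rw [hv, F.diag]; simp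
  simp only [Fin.sum_univ_succ, hS1, hS2, hd, Matrix.of_apply, zero_smul, add_zero, Fin.cons_zero,
    Fin.cons_succ, F.b0, c1, c2, D3_rad' hs hh hx0, D3_rad'' hs hh hx0, D4_rad hs hh hx0,
    H_rad hs hh _ hx0, c3, c4] at k1 k2
  constructor
  · rw [← hL10, ← k1]; simp
  · have s1 : ∑ j : Fin n, -(if k = j then l k else 0) * -(if k = j then l k else 0) / (1 * l j) = l k := by
      have hk := (F.lpos k).ne'
      rw [Finset.sum_eq_single k]
      · simp
      · intro j _ hj; simp [hj.symm]
      · simp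
    have s2 : ∑ j : Fin n, -(if k = j then l k else 0) * -(if k = j then l k else 0) / (l j * 1) = l k := by
      exact (Finset.sum_congr rfl fun j _ => by rw [one_mul, mul_one]).trans s1
    rw [Finset.sum_add_distrib, s1, s2] at k2
    have s3 : ∀ i j, CC H x b i j k * CC H x b j i k = CC H x b i j k ^ 2 := by
      intro i j; rw [CC_swap1 hs hx0 j i]; ring
    simp only [s3] at k2
    rw [hL2] at k2
    have : ((n:ℝ) + 1 + p) = - (m * 2) := by rw [hm]; ring
    rw [this]
    simp at k2
    linarith

end local_facts

end Part4

section Part5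

lemma Z_one {n : ℕ} (hn : 2 ≤ n) {q h g z : ℝ} (hq2 : q ≤ n + 2)
    (l y : Fin n → ℝ) (hl : ∀ i, 0 < l i) (hh : 0 < h) (j : Fin n)
    (hA : ∑ i, y i / l i = - q * g / h)
    (hB : g * ∑ i, l i + h * ∑ i, y i - (n - q) * l j * g = z) :
    (n + 2 - q) * (n - 1) * (q - 2) / n * g ^ 2 - 2 * g * z / l j ≤
    h ^ 2 * ∑ i, (y i ^ 2 * (1 / l i ^ 2 + if i = j then 0 else 2 / (l i * l j)))
      + 2 * h * g * (∑ i, y i) / l j + q * (n + 1 - q) * g ^ 2 := by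
  have hn0 : (0:ℝ) < n := by exact_mod_cast (by omega : 0 < n)
  set ζ : Fin n → ℝ := fun i => h * y i / l i + g with hζ
  have hy : ∀ i, y i = l i * (ζ i - g) / h := by
    intro i
    have := (hl i).ne'
    simp only [hζ]; field_simp; ring
  have s1 : ∑ i, ζ i = (n - q) * g := by
    have : ∑ i, ζ i = h * ∑ i, y i / l i + n * g := by
      simp only [hζ, Finset.sum_add_distrib, Finset.mul_sum, Finset.sum_const, Finset.card_univ,
        Fintype.card_fin, nsmul_eq_mul]
      congr 1
      exact Finset.sum_congr rfl fun i _ => by ring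
    rw [this, hA]; field_simp; ring
  have s0 : h * ∑ i, y i = ∑ i, l i * ζ i - g * ∑ i, l i := by
    rw [Finset.mul_sum, Finset.mul_sum, ← Finset.sum_sub_distrib]
    refine Finset.sum_congr rfl fun i _ => ?_
    rw [hy i]; field_simp
  have s2 : ∑ i, l i * ζ i = (n - q) * l j * g + z := by linarith
  have hlj := hl j
  -- quadratic sum
  have s3 : h ^ 2 * ∑ i, (y i ^ 2 * (1 / l i ^ 2 + if i = j then 0 else 2 / (l i * l j)))
      = ∑ i, (ζ i - g) ^ 2 + 2 / l j * (∑ i, l i * (ζ i - g) ^ 2) - 2 * (ζ j - g) ^ 2 := by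
    have e1 : 2 * (ζ j - g) ^ 2 = ∑ i, if i = j then 2 / l j * (l i * (ζ i - g) ^ 2) else 0 := by
      rw [Finset.sum_ite_eq' Finset.univ j]
      simp only [Finset.mem_univ, if_true]
      field_simp
    rw [e1, Finset.mul_sum, Finset.mul_sum, ← Finset.sum_add_distrib, ← Finset.sum_sub_distrib]
    refine Finset.sum_congr rfl fun i _ => ?_
    have := (hl i).ne'
    rw [hy i]
    split_ifs with hij
    · subst hij; field_simp; ring
    · field_simp; ring
  have s4 : ∑ i, (ζ i - g) ^ 2 = ∑ i, ζ i ^ 2 - 2 * g * ∑ i, ζ i + n * g ^ 2 := by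
    rw [Finset.mul_sum, ← Finset.sum_sub_distrib]
    have : (n:ℝ) * g ^ 2 = ∑ i : Fin n, g ^ 2 := by simp
    rw [this, ← Finset.sum_add_distrib]
    exact Finset.sum_congr rfl fun i _ => by ring
  have s5 : ∑ i, l i * (ζ i - g) ^ 2 = ∑ i, l i * ζ i ^ 2 - 2 * g * ∑ i, l i * ζ i
      + g ^ 2 * ∑ i, l i := by
    rw [Finset.mul_sum, Finset.mul_sum, ← Finset.sum_sub_distrib, ← Finset.sum_add_distrib]
    exact Finset.sum_congr rfl fun i _ => by ring
  have s6 : l j * ζ j ^ 2 ≤ ∑ i, l i * ζ i ^ 2 :=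
    Finset.single_le_sum (f := fun i => l i * ζ i ^ 2)
      (fun i _ => mul_nonneg (hl i).le (sq_nonneg _)) (Finset.mem_univ j)
  -- Cauchy
  have s7 : ((n + 2 - q) * g) ^ 2 / n ≤ ∑ i, ζ i ^ 2 + 4 * g * ζ j + 4 * g ^ 2 := by
    have c := sq_sum_le_card_mul_sum_sq (s := (Finset.univ : Finset (Fin n)))
      (f := fun i => ζ i + if i = j then 2 * g else 0)
    have e1 : ∑ i, (ζ i + if i = j then 2 * g else 0) = (n + 2 - q) * g := by
      rw [Finset.sum_add_distrib, s1]; simp; ring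
    have e2 : ∑ i, (ζ i + if i = j then 2 * g else 0) ^ 2
        = ∑ i, ζ i ^ 2 + 4 * g * ζ j + 4 * g ^ 2 := by
      have : ∀ i, (ζ i + if i = j then 2 * g else 0) ^ 2
        = ζ i ^ 2 + if i = j then 4 * g * ζ j + 4 * g ^ 2 else 0 := by
        intro i
        split_ifs with hij
        · subst hij; ring
        · ring
      simp only [this]
      rw [Finset.sum_add_distrib]; simp; ring
    rw [e1, e2] at c
    rw [div_le_iff₀ hn0]
    simp at c
    linarith
  have s8 : 2 * h * g * (∑ i, y i) / l j = 2 * g / l j * (h * ∑ i, y i) := by ring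
  rw [s3, s4, s5, s8, s0, s1, s2]
  have s9 : 2 * ζ j ^ 2 ≤ 2 / l j * ∑ i, l i * ζ i ^ 2 := by
    rw [div_mul_eq_mul_div, le_div_iff₀ hlj]; nlinarith
  set U1 := ∑ i, ζ i ^ 2
  set U2 := ∑ i, l i * ζ i ^ 2
  set T := ∑ i, l i
  have fin1 : (n + 2 - q) * (n - 1) * (q - 2) / n * g ^ 2 = ((n + 2 - q) * g) ^ 2 / n
      + g ^ 2 * (-4 - 4 * (n - q) + n - 2 + q * (n + 1 - q)) := by
    field_simp; ring
  have fin2 : 2 / l j * (U2 - 2 * g * ((n - q) * l j * g + z) + g ^ 2 * T)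
     + 2 * g / l j * ((n - q) * l j * g + z - g * T)
     = 2 / l j * U2 - 2 * g * z / l j - 2 * (n - q) * g ^ 2 := by
    field_simp; ring
  linarith

lemma Z_cub {n : ℕ} (l : Fin n → ℝ) (hl : ∀ i, 0 < l i) (C : Fin n → Fin n → Fin n → ℝ)
    (c1 : ∀ i j k, C i j k = C j i k) (c2 : ∀ i j k, C i j k = C i k j) :
    ∑ j, ∑ i, (C i i j ^ 2 * (1 / l i ^ 2 + if i = j then 0 else 2 / (l i * l j)))
      ≤ ∑ k, ∑ i, ∑ j, C i j k ^ 2 / (l i * l j) := by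
  have key : ∀ k i j : Fin n, (if i = j then C i j k ^ 2 / (l i * l j) else 0)
      + (if i = k then (if i = j then 0 else C i j k ^ 2 / (l i * l j)) else 0)
      + (if j = k then (if i = j then 0 else C i j k ^ 2 / (l i * l j)) else 0)
      ≤ C i j k ^ 2 / (l i * l j) := by
    intro k i j
    have : 0 ≤ C i j k ^ 2 / (l i * l j) := by
      have := hl i; have := hl j; positivity
    by_cases h1 : i = j <;> by_cases h2 : i = k <;> by_cases h3 : j = k <;> simp_all
  have h1 : ∑ k, ∑ i, ∑ j, ((if i = j then C i j k ^ 2 / (l i * l j) else 0)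
      + (if i = k then (if i = j then 0 else C i j k ^ 2 / (l i * l j)) else 0)
      + (if j = k then (if i = j then 0 else C i j k ^ 2 / (l i * l j)) else 0))
      ≤ ∑ k, ∑ i, ∑ j, C i j k ^ 2 / (l i * l j) :=
    Finset.sum_le_sum fun k _ => Finset.sum_le_sum fun i _ => Finset.sum_le_sum fun j _ => key k i j
  refine le_trans (le_of_eq ?_) h1
  simp only [Finset.sum_add_distrib]
  have a1 : ∑ k, ∑ i, ∑ j, (if i = j then C i j k ^ 2 / (l i * l j) else 0)
      = ∑ k, ∑ i, C i i k ^ 2 * (1 / l i ^ 2) := by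
    refine Finset.sum_congr rfl fun k _ => Finset.sum_congr rfl fun i _ => ?_
    rw [Finset.sum_ite_eq]; simp; ring
  have a2 : ∑ k, ∑ i, ∑ j, (if i = k then (if i = j then 0 else C i j k ^ 2 / (l i * l j)) else 0)
      = ∑ k, ∑ i, C i i k ^ 2 * (if i = k then 0 else 1 / (l i * l k)) := by
    have : ∀ k, ∑ i, ∑ j, (if i = k then (if i = j then 0 else C i j k ^ 2 / (l i * l j)) else 0)
      = ∑ j, (if k = j then 0 else C k j k ^ 2 / (l k * l j)) := by
      intro k
      rw [Finset.sum_comm]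
      refine Finset.sum_congr rfl fun j _ => ?_
      rw [Finset.sum_ite_eq']; simp
    simp only [this]
    rw [Finset.sum_comm]
    refine Finset.sum_congr rfl fun k _ => Finset.sum_congr rfl fun i _ => ?_
    rw [c2 i k i]
    split_ifs <;> ring
  have a3 : ∑ k, ∑ i, ∑ j, (if j = k then (if i = j then 0 else C i j k ^ 2 / (l i * l j)) else 0)
      = ∑ k, ∑ i, C i i k ^ 2 * (if i = k then 0 else 1 / (l i * l k)) := by
    have : ∀ k, ∑ i, ∑ j, (if j = k then (if i = j then 0 else C i j k ^ 2 / (l i * l j)) else 0)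
      = ∑ i, (if i = k then 0 else C i k k ^ 2 / (l i * l k)) := by
      intro k
      refine Finset.sum_congr rfl fun j _ => ?_
      rw [Finset.sum_ite_eq']; simp
    simp only [this]
    rw [Finset.sum_comm]
    refine Finset.sum_congr rfl fun k _ => Finset.sum_congr rfl fun i _ => ?_
    rw [c1 k i i, c2 i k i]
    by_cases hik : i = k
    · simp [hik]
    · rw [if_neg (Ne.symm hik), if_neg hik]; ring
  rw [a1, a2, a3, ← Finset.sum_add_distrib, ← Finset.sum_add_distrib]
  refine Finset.sum_congr rfl fun k _ => ?_
  rw [← Finset.sum_add_distrib, ← Finset.sum_add_distrib]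
  refine Finset.sum_congr rfl fun i _ => ?_
  split_ifs <;> ring

lemma Z_alg {n : ℕ} (hn : 2 ≤ n) {p h : ℝ} (hp : -(n:ℝ) - 1 < p)
    (l g z e : Fin n → ℝ) (hl : ∀ i, 0 < l i) (hh : 0 < h)
    (C : Fin n → Fin n → Fin n → ℝ) (Q : Fin n → Fin n → ℝ)
    (c1 : ∀ i j k, C i j k = C j i k) (c2 : ∀ i j k, C i j k = C i k j)
    (hQ : ∀ i k, Q i k = Q k i)
    (hE : ∀ k, (∑ i, C i i k / l i = (p - 1) * g k / h) ∧
      (∑ i, Q i k / l i = ∑ i, ∑ j, C i j k ^ 2 / (l i * l j)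
      + (p - 1) * (l k / h - g k ^ 2 / h ^ 2) - (n + 1 + p)))
    (hZ1 : ∀ i, g i * ∑ k, l k + h * ∑ k, C k k i - (n - 1 + p) * l i * g i = z i)
    (hZ2 : ∀ i, l i * ∑ k, l k + 2 * g i * ∑ k, C k k i + h * (∑ k, Q k i + 2 * l i)
      - (n - 1 + p) * (l i ^ 2 + ∑ j, g j * C j i i - h * l i) + e i ≤ 0) :
    (n + 1 + p) * (n - 1) * (- 1 - p) / n * ∑ i, g i ^ 2
      + ∑ i, (h * e i - 2 * g i * z i) / l i ≤ 0 := by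
  have one : ∀ j, (n + 1 + p) * (n - 1) * (- 1 - p) / n * g j ^ 2 - 2 * g j * z j / l j ≤
    h ^ 2 * ∑ i, (C i i j ^ 2 * (1 / l i ^ 2 + if i = j then 0 else 2 / (l i * l j)))
      + 2 * h * g j * (∑ i, C i i j) / l j + (1 - p) * (n + p) * g j ^ 2 := by
    intro j
    have := Z_one hn (q := 1 - p) (h := h) (g := g j) (z := z j) (by linarith) l
      (fun i => C i i j) hl hh j (by rw [(hE j).1]; ring) (by rw [← hZ1 j]; ring)
    convert this using 2 <;> ring
  have one' := Finset.sum_le_sum fun j (_ : j ∈ Finset.univ) => one j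
  simp only [Finset.sum_add_distrib, Finset.sum_sub_distrib, ← Finset.mul_sum] at one'
  have cub := Z_cub l hl C c1 c2
  set T := ∑ k, l k with hT
  -- summed inequality
  have h2 : ∑ i, (l i * T + 2 * g i * ∑ k, C k k i + h * (∑ k, Q k i + 2 * l i)
      - (n - 1 + p) * (l i ^ 2 + ∑ j, g j * C j i i - h * l i) + e i) / l i ≤ 0 :=
    Finset.sum_nonpos fun i _ => div_nonpos_of_nonpos_of_nonneg (hZ2 i) (hl i).le
  have h3 : ∀ i, (l i * T + 2 * g i * ∑ k, C k k i + h * (∑ k, Q k i + 2 * l i)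
      - (n - 1 + p) * (l i ^ 2 + ∑ j, g j * C j i i - h * l i) + e i) / l i
      = T + 2 * g i * (∑ k, C k k i) / l i + h * ∑ k, Q i k / l i + 2 * h
      - (n - 1 + p) * (l i) - (n - 1 + p) * (∑ j, g j * (C i i j / l i)) + (n - 1 + p) * h
      + e i / l i := by
    intro i
    have e1 : ∑ k, Q i k / l i = (∑ k, Q k i) / l i := by
      rw [Finset.sum_div]; exact Finset.sum_congr rfl fun k _ => by rw [hQ]
    have e2 : ∑ j, g j * (C i i j / l i) = (∑ j, g j * C j i i) / l i := by
      rw [Finset.sum_div]; refine Finset.sum_congr rfl fun k _ => ?_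
      rw [c1 k i i, c2 i k i]; ring
    rw [e1, e2]
    have := (hl i).ne'
    field_simp
    ring
  simp only [h3, Finset.sum_add_distrib, Finset.sum_sub_distrib, ← Finset.mul_sum, Finset.sum_const,
    Finset.card_univ, Fintype.card_fin, nsmul_eq_mul] at h2
  have h4 : ∑ i, ∑ k, Q i k / l i = ∑ k, ∑ i, ∑ j, C i j k ^ 2 / (l i * l j)
      + (p - 1) * (T / h - (∑ k, g k ^ 2) / h ^ 2) - n * (n + 1 + p) := by
    rw [Finset.sum_comm]
    simp only [(hE _).2]
    simp only [Finset.sum_add_distrib, Finset.sum_sub_distrib, ← Finset.mul_sum, Finset.sum_const,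
      Finset.card_univ, Fintype.card_fin, nsmul_eq_mul, ← Finset.sum_div]
    rw [hT]; ring
  have h5 : ∑ i, ∑ j, g j * (C i i j / l i) = (p - 1) / h * ∑ j, g j ^ 2 := by
    rw [Finset.sum_comm]
    simp only [← Finset.mul_sum, (hE _).1]
    rw [Finset.mul_sum]
    exact Finset.sum_congr rfl fun i _ => by ring
  rw [h4, h5, ← hT] at h2
  have h6 : ∑ i, 2 * h * g i * (∑ k, C k k i) / l i = h * ∑ i, 2 * g i * (∑ k, C k k i) / l i := by
    rw [Finset.mul_sum]; exact Finset.sum_congr rfl fun i _ => by ring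
  have h7 : ∑ i, (h * e i - 2 * g i * z i) / l i = h * ∑ i, e i / l i - ∑ i, 2 * g i * z i / l i := by
    rw [Finset.mul_sum, ← Finset.sum_sub_distrib]; exact Finset.sum_congr rfl fun i _ => by ring
  rw [h6] at one'
  rw [h7]
  set S1 := ∑ i, 2 * g i * (∑ k, C k k i) / l i
  set S2 := ∑ k, ∑ i, ∑ j, C i j k ^ 2 / (l i * l j)
  set S3 := ∑ k, g k ^ 2
  set S4 := ∑ i, e i / l i
  set S5 := ∑ i, 2 * g i * z i / l i
  have h8 := mul_nonpos_of_nonneg_of_nonpos hh.le h2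
  have h9 : h * (↑n * T + S1 + h * (S2 + (p - 1) * (T / h - S3 / h ^ 2) - ↑n * (↑n + 1 + p)) + 2 * (↑n * h) -
              (↑n - 1 + p) * T - (↑n - 1 + p) * ((p - 1) / h * S3) + (↑n - 1 + p) * (↑n * h) + S4)
     = h * S1 + h ^ 2 * S2 + (1 - p) * (n + p) * S3 + h * S4 := by
    field_simp; ring
  have h10 := mul_le_mul_of_nonneg_left cub (sq_nonneg h)
  rw [h9] at h8
  linarith

lemma W_alg {n : ℕ} (hn : 2 ≤ n) {p h γ : ℝ} (hp : 1 - (n:ℝ) ≤ p) (hp1 : p < 1)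
    (hγ : γ = (n - 1 + p) / n)
    (l g w e : Fin n → ℝ) (hl : ∀ i, 0 < l i) (hh : 0 < h) (m : Fin n) (hm : ∀ i, l i ≤ l m)
    (C : Fin n → Fin n → Fin n → ℝ) (Q : Fin n → Fin n → ℝ)
    (c1 : ∀ i j k, C i j k = C j i k) (c2 : ∀ i j k, C i j k = C i k j)
    (hE : ∀ k, (∑ i, C i i k / l i = (p - 1) * g k / h) ∧
      (∑ i, Q i k / l i = ∑ i, ∑ j, C i j k ^ 2 / (l i * l j)
      + (p - 1) * (l k / h - g k ^ 2 / h ^ 2) - (n + 1 + p)))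
    (hW1 : ∀ i, g i * l m + h * C m m i - γ * l i * g i = w i)
    (hW2 : ∀ i, l i * l m + 2 * g i * C m m i + h * Q i m
      - γ * (l i ^ 2 + ∑ j, g j * C j i i - h * l i) + e i
      + (if i = m then 2 * h * l m - ∑ j, (if j = m then 0 else
          4 * g j * C m m j + 2 * (l m - l j) * g j ^ 2 / h) else 0) ≤ 0) :
    ∃ c : Fin n → ℝ, (∀ i, |c i| ≤ 2) ∧ (1 - p) / n * ∑ i, g i ^ 2
      + ∑ i, (h * e i + c i * (g i * w i)) / l i ≤ 0 := by
  have hn0 : (0:ℝ) < n := by exact_mod_cast (by omega : 0 < n)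
  have hn2 : (2:ℝ) ≤ n := by exact_mod_cast hn
  have hγn : γ * n = n - 1 + p := by rw [hγ]; field_simp
  have hγ0 : 0 ≤ γ := by rw [hγ]; exact div_nonneg (by linarith) hn0.le
  have hγ1 : 1 - γ = (1 - p) / n := by rw [hγ]; field_simp; ring
  have hκ : 0 < (1 - p) / n := div_pos (by linarith) hn0
  have hγ2 : γ - p = (n - 1) * ((1 - p) / n) := by rw [hγ]; field_simp; ring
  set κ := (1 - p) / n with hκd
  refine ⟨fun i => if i = m then 2 * γ else -2, fun i => ?_, ?_⟩
  · dsimp only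
    split_ifs
    · rw [abs_le]; constructor <;> linarith
    · norm_num
  have hlm := hl m
  -- cubic lower bound
  have cub : ∑ i, (if i = m then C m m i ^ 2 / l m ^ 2 else 2 * C m m i ^ 2 / (l i * l m))
      ≤ ∑ i, ∑ j, C i j m ^ 2 / (l i * l j) := by
    have key : ∀ i j, (if j = m then C i j m ^ 2 / (l i * l j) else 0)
       + (if i = m then (if j = m then 0 else C i j m ^ 2 / (l i * l j)) else 0)
       ≤ C i j m ^ 2 / (l i * l j) := by
      intro i j
      have : 0 ≤ C i j m ^ 2 / (l i * l j) := by
        have := hl i; have := hl j; positivity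
      split_ifs <;> linarith
    have h1 := Finset.sum_le_sum fun i (_ : i ∈ Finset.univ) =>
      Finset.sum_le_sum fun j (_ : j ∈ Finset.univ) => key i j
    refine le_trans (le_of_eq ?_) h1
    simp only [Finset.sum_add_distrib]
    rw [Finset.sum_comm (f := fun i j => if i = m then (if j = m then 0 else C i j m ^ 2 / (l i * l j)) else 0)]
    simp only [Finset.sum_ite_eq', Finset.mem_univ, if_true]
    rw [← Finset.sum_add_distrib]
    refine Finset.sum_congr rfl fun i _ => ?_
    have a1 : C i m m = C m m i := by rw [c1 i m m, c2 m i m]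
    have a2 : C m i m = C m m i := c2 m i m
    rw [a1, a2]
    by_cases him : i = m
    · simp only [him, if_true]; ring
    · simp only [him, if_false]; ring
  -- sum
  have h2 := Finset.sum_nonpos fun i (_ : i ∈ Finset.univ) =>
    div_nonpos_of_nonpos_of_nonneg (hW2 i) (hl i).le
  set X := 2 * h * l m - ∑ j, (if j = m then 0 else
          4 * g j * C m m j + 2 * (l m - l j) * g j ^ 2 / h) with hX
  have h3 : ∀ i, (l i * l m + 2 * g i * C m m i + h * Q i m
      - γ * (l i ^ 2 + ∑ j, g j * C j i i - h * l i) + e i + (if i = m then X else 0)) / l i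
      = l m + 2 * g i * C m m i / l i + h * (Q i m / l i) - γ * l i
      - γ * (∑ j, g j * (C i i j / l i)) + γ * h + e i / l i + (if i = m then X / l m else 0) := by
    intro i
    have e2 : ∑ j, g j * (C i i j / l i) = (∑ j, g j * C j i i) / l i := by
      rw [Finset.sum_div]; refine Finset.sum_congr rfl fun k _ => ?_
      rw [c1 k i i, c2 i k i]; ring
    rw [e2]
    have := (hl i).ne'
    split_ifs with him
    · subst him; field_simp; ring
    · field_simp; ring
  simp only [h3, Finset.sum_add_distrib, Finset.sum_sub_distrib, ← Finset.mul_sum, Finset.sum_const,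
    Finset.card_univ, Fintype.card_fin, nsmul_eq_mul, Finset.sum_ite_eq', Finset.mem_univ,
    if_true] at h2
  have h5 : ∑ i, ∑ j, g j * (C i i j / l i) = (p - 1) / h * ∑ j, g j ^ 2 := by
    rw [Finset.sum_comm]
    simp only [← Finset.mul_sum, (hE _).1]
    rw [Finset.mul_sum]
    exact Finset.sum_congr rfl fun i _ => by ring
  rw [h5, (hE m).2] at h2
  have hT : ∑ i, l i ≤ n * l m := by
    have := Finset.sum_le_sum fun i (_ : i ∈ Finset.univ) => hm i
    simpa using this
  have hγT := mul_le_mul_of_nonneg_left hT hγ0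
  -- termwise
  have term : ∀ i, κ * g i ^ 2 + (if i = m then 2 * γ else -2) * (g i * w i) / l i
      ≤ h * (2 * g i * C m m i / l i)
      + h ^ 2 * (if i = m then C m m i ^ 2 / l m ^ 2 else 2 * C m m i ^ 2 / (l i * l m))
      + γ * (1 - p) * g i ^ 2 + (if i = m then (1 - p) * g m ^ 2 else 0)
      - (if i = m then 0 else h * (4 * g i * C m m i + 2 * (l m - l i) * g i ^ 2 / h) / l m) := by
    intro i
    have hli := hl i
    have hC : C m m i = (w i - g i * l m + γ * l i * g i) / h := by
      rw [← hW1 i]; field_simp; ring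
    split_ifs with him
    · rw [hC]
      subst him
      have hk : κ * g i ^ 2 ≤ (1 + γ) * (γ - p) * g i ^ 2 := by
        rw [hγ2]
        have : κ ≤ (1 + γ) * ((n - 1) * κ) := by nlinarith [mul_nonneg hγ0 hκ.le]
        exact mul_le_mul_of_nonneg_right this (sq_nonneg _)
      have : h * (2 * g i * ((w i - g i * l i + γ * l i * g i) / h) / l i) +
          h ^ 2 * (((w i - g i * l i + γ * l i * g i) / h) ^ 2 / l i ^ 2) +
          γ * (1 - p) * g i ^ 2 + (1 - p) * g i ^ 2 - 0
          = (w i / l i) ^ 2 + 2 * γ * (g i * w i) / l i + (1 + γ) * (γ - p) * g i ^ 2 := by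
        field_simp; ring
      rw [this]
      have := sq_nonneg (w i / l i)
      linarith
    · rw [hC]
      have : h * (2 * g i * ((w i - g i * l m + γ * l i * g i) / h) / l i) +
          h ^ 2 * (2 * ((w i - g i * l m + γ * l i * g i) / h) ^ 2 / (l i * l m)) +
          γ * (1 - p) * g i ^ 2 + 0 -
          h * (4 * g i * ((w i - g i * l m + γ * l i * g i) / h) + 2 * (l m - l i) * g i ^ 2 / h) / l m
          = 2 * (1 - γ) * g i ^ 2 - 2 * (g i * w i) / l i
            + 2 / (l i * l m) * ((1 - γ) * l i * g i - w i) ^ 2 + γ * (1 - p) * g i ^ 2 := by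
        field_simp; ring
      rw [this, hγ1]
      have a1 : 0 ≤ 2 / (l i * l m) * (κ * l i * g i - w i) ^ 2 := by positivity
      have a2 : 0 ≤ γ * (1 - p) * g i ^ 2 :=
        mul_nonneg (mul_nonneg hγ0 (by linarith)) (sq_nonneg _)
      have a3 : 0 ≤ κ * g i ^ 2 := by positivity
      have a4 : -2 * (g i * w i) / l i = - (2 * (g i * w i) / l i) := by ring
      linarith
  have term' := Finset.sum_le_sum fun i (_ : i ∈ Finset.univ) => term i
  simp only [Finset.sum_add_distrib, Finset.sum_sub_distrib, ← Finset.mul_sum,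
    Finset.sum_ite_eq', Finset.mem_univ, if_true] at term'
  have h7 : ∑ i, (h * e i + (if i = m then 2 * γ else -2) * (g i * w i)) / l i
      = h * ∑ i, e i / l i + ∑ i, (if i = m then 2 * γ else -2) * (g i * w i) / l i := by
    rw [Finset.mul_sum, ← Finset.sum_add_distrib]; exact Finset.sum_congr rfl fun i _ => by ring
  rw [h7]
  have h8 : ∑ i, (if i = m then 0 else h * (4 * g i * C m m i + 2 * (l m - l i) * g i ^ 2 / h) / l m)
      = h * (2 * h) - h * (X / l m) := by
    have : X / l m = 2 * h - (∑ j, (if j = m then 0 else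
          4 * g j * C m m j + 2 * (l m - l j) * g j ^ 2 / h)) / l m := by
      rw [hX]; field_simp
    rw [this, mul_sub, sub_sub_cancel, Finset.sum_div, Finset.mul_sum]
    refine Finset.sum_congr rfl fun i _ => ?_
    split_ifs
    · simp
    · ring
  rw [h8] at term'
  have h10 := mul_le_mul_of_nonneg_left cub (sq_nonneg h)
  have h11 := mul_nonpos_of_nonneg_of_nonpos hh.le h2
  set S1 := ∑ i, 2 * g i * C m m i / l i
  set S2 := ∑ i, ∑ j, C i j m ^ 2 / (l i * l j)
  set S3 := ∑ k, g k ^ 2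
  set S4 := ∑ i, e i / l i
  set T := ∑ i, l i
  set Y := X / l m
  have h9 : h * (n * l m + S1 + h * (S2 + (p - 1) * (l m / h - g m ^ 2 / h ^ 2) - (n + 1 + p))
      - γ * T - γ * ((p - 1) / h * S3) + γ * (n * h) + S4 + Y)
      = h * (γ * n * l m - γ * T) + h * S1 + h ^ 2 * S2 + (1 - p) * g m ^ 2
        + γ * (1 - p) * S3 + h * S4 + h * Y - h * (2 * h) := by
    have : γ * (n * h) = (n - 1 + p) * h := by rw [← hγn]; ring
    rw [this, hγn]
    field_simp; ring
  rw [h9] at h11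
  have h12 : 0 ≤ h * (γ * n * l m - γ * T) := mul_nonneg hh.le (by linarith)
  linarith

end Part5

section Part6

/-- two-jets at `0` of functions on the line -/
def J2 (f : ℝ → ℝ) (f0 f1 f2 : ℝ) : Prop :=
  ∃ f' : ℝ → ℝ, (∀ t, HasDerivAt f (f' t) t) ∧ f 0 = f0 ∧ f' 0 = f1 ∧ HasDerivAt f' f2 0

lemma J2.add {f g : ℝ → ℝ} {f0 f1 f2 g0 g1 g2 : ℝ} (hf : J2 f f0 f1 f2) (hg : J2 g g0 g1 g2) :
    J2 (fun t => f t + g t) (f0 + g0) (f1 + g1) (f2 + g2) := by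
  obtain ⟨f', a1, a2, a3, a4⟩ := hf
  obtain ⟨g', b1, b2, b3, b4⟩ := hg
  exact ⟨fun t => f' t + g' t, fun t => (a1 t).add (b1 t), by simp only [a2, b2], by simp only [a3, b3], a4.add b4⟩

lemma J2.mul {f g : ℝ → ℝ} {f0 f1 f2 g0 g1 g2 : ℝ} (hf : J2 f f0 f1 f2) (hg : J2 g g0 g1 g2) :
    J2 (fun t => f t * g t) (f0 * g0) (f1 * g0 + f0 * g1) (f2 * g0 + 2 * f1 * g1 + f0 * g2) := by
  obtain ⟨f', a1, a2, a3, a4⟩ := hf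
  obtain ⟨g', b1, b2, b3, b4⟩ := hg
  refine ⟨fun t => f' t * g t + f t * g' t, fun t => (a1 t).mul (b1 t), by simp only [a2, b2],
    by simp only [a2, a3, b2, b3], ?_⟩
  refine ((a4.mul (b1 0)).add ((a1 0).mul b4)).congr_deriv ?_
  rw [a2, a3, b2, b3]; ring

lemma J2.const (c : ℝ) : J2 (fun _ => c) c 0 0 :=
  ⟨fun _ => 0, fun t => hasDerivAt_const t c, rfl, rfl, hasDerivAt_const 0 0⟩

lemma J2.id : J2 (fun t => t) 0 1 0 :=
  ⟨fun _ => 1, fun t => hasDerivAt_id t, rfl, rfl, hasDerivAt_const 0 1⟩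

lemma J2.sum {ι : Type*} (s : Finset ι) {f : ι → ℝ → ℝ} {f0 f1 f2 : ι → ℝ}
    (hf : ∀ i, J2 (f i) (f0 i) (f1 i) (f2 i)) :
    J2 (fun t => ∑ i ∈ s, f i t) (∑ i ∈ s, f0 i) (∑ i ∈ s, f1 i) (∑ i ∈ s, f2 i) := by
  choose f' a1 a2 a3 a4 using hf
  exact ⟨fun t => ∑ i ∈ s, f' i t, fun t => HasDerivAt.fun_sum fun i _ => a1 i t,
    by simp only [a2], by simp only [a3], HasDerivAt.fun_sum fun i _ => a4 i⟩

lemma J2.congr {f g : ℝ → ℝ} {f0 f1 f2 g0 g1 g2 : ℝ} (hf : J2 f f0 f1 f2) (h : ∀ t, g t = f t)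
    (h0 : g0 = f0) (h1 : g1 = f1) (h2 : g2 = f2) : J2 g g0 g1 g2 := by
  have : g = f := funext h
  subst this h0 h1 h2
  exact hf

lemma J2.test {f : ℝ → ℝ} {f0 f1 f2 : ℝ} (hf : J2 f f0 f1 f2) (h : ∀ t, f t ≤ f 0) :
    f1 = 0 ∧ f2 ≤ 0 := by
  obtain ⟨f', a1, a2, a3, a4⟩ := hf
  have := snd_test a1 a4 h
  exact ⟨a3 ▸ this.1, this.2⟩

lemma J2.line {n : ℕ} {f : Eu n → ℝ} (hf : Sm f) {x v : Eu n} (h : ∀ t : ℝ, x + t • v ≠ 0) :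
    J2 (fun t => f (x + t • v)) (f x) (dd v f x) (dd v (dd v f) x) := by
  refine ⟨fun t => dd v f (x + t • v), fun t => dd_line hf x v t (h t), by simp, by simp, ?_⟩
  have := dd_line (hf.dd v) x v 0 (h 0)
  rw [zero_smul, add_zero] at this
  exact this

lemma J2.eta (A s σ : ℝ) : J2 (fun t => exp (A * ((s + t * σ) / √(1 + t ^ 2))))
    (exp (A * s)) (A * exp (A * s) * σ) (A * exp (A * s) * (A * σ ^ 2 - s)) := by
  have hsq : ∀ t : ℝ, (0:ℝ) < 1 + t ^ 2 := fun t => by positivity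
  have hne : ∀ t : ℝ, √(1 + t ^ 2) ≠ 0 := fun t => (Real.sqrt_pos.2 (hsq t)).ne'
  have h2 : ∀ t : ℝ, HasDerivAt (fun t : ℝ => 1 + t ^ 2) (2 * t) t := by
    intro t; simpa using ((hasDerivAt_id t).pow 2).const_add 1
  have hr : ∀ t : ℝ, HasDerivAt (fun t : ℝ => √(1 + t ^ 2)) (t / √(1 + t ^ 2)) t := by
    intro t
    refine ((h2 t).sqrt (hsq t).ne').congr_deriv ?_
    have := hne t
    field_simp
  have hl : ∀ t : ℝ, HasDerivAt (fun t : ℝ => s + t * σ) σ t := by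
    intro t; simpa using ((hasDerivAt_id t).mul_const σ).const_add s
  have hq : ∀ t : ℝ, HasDerivAt (fun t : ℝ => (s + t * σ) / √(1 + t ^ 2))
      ((σ - s * t) / ((1 + t ^ 2) * √(1 + t ^ 2))) t := by
    intro t
    refine ((hl t).div (hr t) (hne t)).congr_deriv ?_
    have := hne t
    have h3 : √(1 + t ^ 2) ^ 2 = 1 + t ^ 2 := Real.sq_sqrt (hsq t).le
    have h4 := (hsq t).ne'
    field_simp
    rw [h3]
    field_simp
    ring
  refine ⟨fun t => exp (A * ((s + t * σ) / √(1 + t ^ 2))) *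
    (A * ((σ - s * t) / ((1 + t ^ 2) * √(1 + t ^ 2)))), fun t => ((hq t).const_mul A).exp, by simp,
    by simp; ring, ?_⟩
  have hu : HasDerivAt (fun t : ℝ => σ - s * t) (-s) 0 := by
    simpa using ((hasDerivAt_id (0:ℝ)).const_mul s).const_sub σ
  have hw : HasDerivAt (fun t : ℝ => A * ((σ - s * t) / ((1 + t ^ 2) * √(1 + t ^ 2)))) (A * (-s)) 0 := by
    have := (hu.div ((h2 0).mul (hr 0)) (mul_ne_zero (hsq 0).ne' (hne 0))).const_mul A
    refine this.congr_deriv ?_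
    simp
  refine ((((hq 0).const_mul A).exp).mul hw).congr_deriv ?_
  simp
  ring

/-- squared gradient norm -/
def gsq {n : ℕ} (H : Eu n → ℝ) (x : Eu n) : ℝ := ‖gradient H x‖ ^ 2
/-- Laplacian -/
def lap {n : ℕ} (H : Eu n → ℝ) (x : Eu n) : ℝ :=
  LinearMap.trace ℝ (Eu n) (fderiv ℝ (gradient H) x).toLinearMap

lemma gsq_eq {n : ℕ} (H : Eu n → ℝ) (b : OrthonormalBasis (Fin (n + 1)) ℝ (Eu n)) (x : Eu n) :
    gsq H x = ∑ a, dd (b a) H x * dd (b a) H x := by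
  unfold gsq
  rw [← real_inner_self_eq_norm_sq, ← b.sum_inner_mul_inner]
  refine Finset.sum_congr rfl fun a _ => ?_
  rw [real_inner_comm _ (b a), grad_inner]

lemma lap_eq {n : ℕ} {H : Eu n → ℝ} (hs : Sm H) (b : OrthonormalBasis (Fin (n + 1)) ℝ (Eu n))
    {x : Eu n} (hx : x ≠ 0) : lap H x = ∑ a, dd (b a) (dd (b a) H) x := by
  unfold lap
  rw [LinearMap.trace_eq_sum_inner _ b]
  refine Finset.sum_congr rfl fun a _ => ?_
  rw [real_inner_comm]
  exact hess_inner' hs _ _ hx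

section frames
variable {n : ℕ} {p : ℝ} {H : Eu n → ℝ} {x : Eu n}
  {b : OrthonormalBasis (Fin (n + 1)) ℝ (Eu n)} {l : Fin n → ℝ}

lemma dd_exp (b : OrthonormalBasis (Fin (n + 1)) ℝ (Eu n)) (v : Eu n) (f : Eu n → ℝ) (x : Eu n) :
    dd v f x = ∑ a, ⟪b a, v⟫_ℝ * dd (b a) f x := by
  conv_lhs => rw [← b.sum_repr' v]
  simp [dd]

lemma Frame.dd1 (hH : Dat p H) (F : Frame H x b l) (i : Fin n) (v : Eu n) :
    dd v (dd (b i.succ) H) x = l i * ⟪b i.succ, v⟫_ℝ := by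
  rw [dd_exp b, Fin.sum_univ_succ, F.b0, D2_rad hH.sm hH.hom F.x0]
  simp [F.diag]; ring

lemma Frame.dd2 (hH : Dat p H) (F : Frame H x b l) (v : Eu n) :
    dd v (dd v H) x = ∑ i, l i * ⟪b i.succ, v⟫_ℝ ^ 2 := by
  rw [dd_exp b, Fin.sum_univ_succ, F.b0, D2_rad hH.sm hH.hom F.x0, mul_zero, zero_add]
  refine Finset.sum_congr rfl fun i _ => ?_
  rw [dd_comm hH.sm _ _ F.x0, F.dd1 hH]; ring

lemma gsq_line (hH : Dat p H) (F : Frame H x b l) (i : Fin n) :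
    J2 (fun t => gsq H (x + t • b i.succ)) (gsq H x) (2 * (l i * gg H x b i))
      (2 * (l i ^ 2 + ∑ j, gg H x b j * CC H x b j i i - H x * l i)) := by
  have hs := hH.sm
  have hx0 := F.x0
  have hne := line_ne F.nx (F.perp i)
  have := J2.sum Finset.univ fun a => (J2.line (hs.dd (b a)) hne).mul (J2.line (hs.dd (b a)) hne)
  refine this.congr (fun t => gsq_eq H b _) (gsq_eq H b _) ?_ ?_
  · rw [Fin.sum_univ_succ, F.b0, H_rad hs hH.hom _ hx0]
    simp only [F.diag, Finset.sum_add_distrib]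
    simp [gg]
    ring
  · rw [Fin.sum_univ_succ, F.b0, H_rad hs hH.hom _ hx0, D1_rad hs hH.hom hx0,
      D3_rad'' hs hH.hom hx0]
    simp only [F.diag]
    have : ∀ j, dd (b i.succ) (dd (b i.succ) (dd (b j.succ) H)) x = CC H x b j i i := by
      intro j
      rw [CC_swap1 hs hx0 j i i, CC_swap2 hs hx0 i j i]; rfl
    simp only [this, Finset.sum_add_distrib]
    have e : ∀ j, dd (b j.succ) H x * CC H x b j i i = gg H x b j * CC H x b j i i := fun j => rfl
    have e' : ∀ j, CC H x b j i i * dd (b j.succ) H x = gg H x b j * CC H x b j i i :=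
      fun j => mul_comm _ _
    simp only [e, e']
    simp
    ring

lemma eta_line {q : Eu n} (F : Frame H x b l) (i : Fin n) (A : ℝ) :
    J2 (fun t => exp (A * (⟪x + t • b i.succ, q⟫_ℝ / ‖x + t • b i.succ‖)))
    (exp (A * ⟪x, q⟫_ℝ)) (A * exp (A * ⟪x, q⟫_ℝ) * ⟪b i.succ, q⟫_ℝ)
    (A * exp (A * ⟪x, q⟫_ℝ) * (A * ⟪b i.succ, q⟫_ℝ ^ 2 - ⟪x, q⟫_ℝ)) := by
  refine (J2.eta A ⟪x, q⟫_ℝ ⟪b i.succ, q⟫_ℝ).congr (fun t => ?_) rfl rfl rfl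
  rw [← norm_line F.nx (b.orthonormal.1 i.succ) (F.perp i) t, Real.sqrt_sq (norm_nonneg _),
    inner_add_left, inner_smul_left]
  simp

lemma hom0 {f : Eu n → ℝ} (hf : Hom 0 f) {y : Eu n} (hy : y ≠ 0) : f y = f (‖y‖⁻¹ • y) := by
  rw [hf y hy _ (inv_pos.2 (norm_pos_iff.2 hy))]; simp

lemma gsq_hom (hs : Sm H) (hh : Hom 1 H) : Hom 0 (gsq H) := by
  intro y hy t ht
  have b := EuclideanSpace.basisFun (Fin (n+1)) ℝ
  rw [gsq_eq H b, gsq_eq H b, Finset.mul_sum]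
  refine Finset.sum_congr rfl fun a _ => ?_
  rw [hh.dd hs (b a) y hy t ht]
  simp

lemma lap_hom (hs : Sm H) (hh : Hom 1 H) : Hom 0 (fun y => H y * lap H y) := by
  intro y hy t ht
  have b := EuclideanSpace.basisFun (Fin (n+1)) ℝ
  simp only
  rw [lap_eq hs b hy, lap_eq hs b (smul_ne_zero ht.ne' hy), hh y hy t ht, Finset.mul_sum,
    Finset.mul_sum, Finset.mul_sum]
  refine Finset.sum_congr rfl fun a _ => ?_
  rw [(hh.dd hs (b a)).dd (hs.dd _) (b a) y hy t ht]
  simp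
  field_simp

lemma hess_hom (hs : Sm H) (hh : Hom 1 H) (v : Eu n) : Hom 0 (fun y => H y * dd v (dd v H) y) := by
  intro y hy t ht
  simp only
  rw [hh y hy t ht, (hh.dd hs v).dd (hs.dd _) v y hy t ht]
  simp
  field_simp

lemma hess_smul (hs : Sm H) (c : ℝ) (v : Eu n) {y : Eu n} (hy : y ≠ 0) :
    dd (c • v) (dd (c • v) H) y = c ^ 2 * dd v (dd v H) y := by
  rw [dd_smul, dd_comm hs _ _ hy, dd_smul]; ring

lemma hess_add (hs : Sm H) (c : ℝ) (v w : Eu n) {y : Eu n} (hy : y ≠ 0) :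
    dd (v + c • w) (dd (v + c • w) H) y
      = dd v (dd v H) y + 2 * (c * dd w (dd v H) y) + c * c * dd w (dd w H) y := by
  rw [dd_add, dd_smul, dd_comm hs v _ hy, dd_comm hs w _ hy, dd_add, dd_add, dd_smul, dd_smul,
    dd_comm hs v w hy]; ring

end frames

/-- The differential inequality at perturbed maxima. -/
def PP {n : ℕ} (H : Eu n → ℝ) (G : Eu n → Eu n → ℝ) (κ : ℝ) : Prop :=
  ∀ (ε A : ℝ) (q x v : Eu n), 0 ≤ ε → ‖x‖ = 1 → ‖v‖ = 1 →
    (∀ y u : Eu n, ‖y‖ = 1 → ‖u‖ = 1 →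
      G y u + ε * exp (A * ⟪y, q⟫_ℝ) ≤ G x v + ε * exp (A * ⟪x, q⟫_ℝ)) →
    ∃ b l, Frame H x b l ∧ ∃ c : Fin n → ℝ, (∀ i, |c i| ≤ 2) ∧
      κ * ∑ i, gg H x b i ^ 2
      + ∑ i, (H x * (ε * (A * exp (A * ⟪x, q⟫_ℝ) * (A * ⟪b i.succ, q⟫_ℝ ^ 2 - ⟪x, q⟫_ℝ)))
        + c i * (gg H x b i * (ε * (A * exp (A * ⟪x, q⟫_ℝ) * ⟪b i.succ, q⟫_ℝ)))) / l i ≤ 0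

lemma Z_PP {n : ℕ} (hn : 2 ≤ n) {p : ℝ} {H : Eu n → ℝ} (hH : Dat p H) (hp : -(n:ℝ) - 1 < p) :
    PP H (fun x _ => H x * lap H x - (n - 1 + p) / 2 * gsq H x)
      ((n + 1 + p) * (n - 1) * (- 1 - p) / n) := by
  intro ε A q x v hε hx hv hmax
  obtain ⟨b, l, F⟩ := exists_frame hH hx
  have hs := hH.sm
  have hh := hH.hom
  have hx0 := F.x0
  set E := exp (A * ⟪x, q⟫_ℝ) with hE
  have main : ∀ i : Fin n,
      (gg H x b i * ∑ k, l k + H x * ∑ k, CC H x b k k i - (n - 1 + p) * l i * gg H x b i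
        = - (ε * (A * E * ⟪b i.succ, q⟫_ℝ))) ∧
      (l i * ∑ k, l k + 2 * gg H x b i * ∑ k, CC H x b k k i
        + H x * (∑ k, QQ H x b k i + 2 * l i)
      - (n - 1 + p) * (l i ^ 2 + ∑ j, gg H x b j * CC H x b j i i - H x * l i)
      + ε * (A * E * (A * ⟪b i.succ, q⟫_ℝ ^ 2 - ⟪x, q⟫_ℝ)) ≤ 0) := by
    intro i
    have hne := line_ne F.nx (F.perp i)
    have jl := J2.sum Finset.univ fun a => (J2.line ((hs.dd (b a)).dd (b a)) hne)
    have j1 := (J2.line hs hne).mul jl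
    have j2 := (J2.const (-((n - 1 + p) / 2))).mul (gsq_line hH F i)
    have j3 := (J2.const ε).mul (eta_line (q := q) F i A)
    have j := (j1.add j2).add j3
    have t := j.test (by
      intro t
      set y := x + t • b i.succ with hy
      have hy0 : y ≠ 0 := hne t
      have hyn : ‖y‖ ≠ 0 := norm_ne_zero_iff.2 hy0
      have := hmax (‖y‖⁻¹ • y) v (by rw [norm_smul, norm_inv, norm_norm, inv_mul_cancel₀ hyn]) hv
      simp only at this
      rw [← hom0 (f := fun y => H y * lap H y) (lap_hom hs hh) hy0,
        ← hom0 (gsq_hom hs hh) hy0, inner_smul_left] at this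
      simp only [zero_smul, add_zero]
      rw [← lap_eq hs b hx0, ← lap_eq hs b hy0, F.nx, div_one]
      have e : A * (⟪y, q⟫_ℝ / ‖y‖) = A * ((starRingEnd ℝ) ‖y‖⁻¹ * ⟪y, q⟫_ℝ) := by
        rw [conj_trivial]; ring
      rw [e]
      linarith)
    have c1 : ∀ k : Fin n, dd (b i.succ) (dd (b k.succ) (dd (b k.succ) H)) x = CC H x b k k i := by
      intro k
      rw [CC_swap2 hs hx0 k k i, CC_swap1 hs hx0 k i k]; rfl
    have c2 : ∀ k : Fin n, dd (b i.succ) (dd (b i.succ) (dd (b k.succ) (dd (b k.succ) H))) x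
        = QQ H x b k i := by
      intro k
      rw [QQ_symm hs hx0 k i]; rfl
    have c3 : dd (b i.succ) (dd (b i.succ) H) x = l i := by rw [F.diag]; simp
    have c4 : ∀ k : Fin n, dd (b k.succ) (dd (b k.succ) H) x = l k := by
      intro k; rw [F.diag]; simp
    have c5 : dd (b i.succ) H x = gg H x b i := rfl
    simp only [Fin.sum_univ_succ, F.b0, H_rad hs hh _ hx0, D2_rad hs hh hx0, D3_rad'' hs hh hx0,
      D4_rad hs hh hx0, c1, c2, c3, c4, c5, neg_zero, zero_add] at t
    rw [← hE] at t
    constructor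
    · linarith [t.1]
    · linarith [t.2]
  have := Z_alg hn (p := p) (h := H x) hp l (gg H x b) _ _ F.lpos (hH.pos x hx0) (CC H x b)
    (QQ H x b) (CC_swap1 hs hx0) (CC_swap2 hs hx0) (QQ_symm hs hx0) (fun k => E12 hH F k)
    (fun i => (main i).1) (fun i => (main i).2)
  refine ⟨b, l, F, fun _ => 2, fun _ => by norm_num, ?_⟩
  refine le_trans (le_of_eq ?_) this
  congr 1
  refine Finset.sum_congr rfl fun i _ => ?_
  congr 1
  ring

end Part6

section Part7

lemma W_PP {n : ℕ} (hn : 2 ≤ n) {p : ℝ} {H : Eu n → ℝ} (hH : Dat p H) (hp : 1 - (n:ℝ) ≤ p)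
    (hp1 : p < 1) :
    PP H (fun x v => H x * dd v (dd v H) x - (n - 1 + p) / n / 2 * gsq H x) ((1 - p) / n) := by
  intro ε A q x v0 hε hx hv0 hmax0
  obtain ⟨b, l, F⟩ := exists_frame hH hx
  have hs := hH.sm
  have hh := hH.hom
  have hx0 := F.x0
  have hpos := hH.pos x hx0
  set E := exp (A * ⟪x, q⟫_ℝ) with hE
  set γ := (n - 1 + p) / n with hγ
  have : Nonempty (Fin n) := ⟨⟨0, by omega⟩⟩
  obtain ⟨m, hm⟩ := Finite.exists_max l
  set em := b m.succ with hem
  have hemn : ‖em‖ = 1 := b.orthonormal.1 _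
  have hmm : dd em (dd em H) x = l m := by rw [hem, F.diag]; simp
  have hv0le : dd v0 (dd v0 H) x ≤ l m := by
    rw [F.dd2 hH]
    have h1 : ∑ i, l i * ⟪b i.succ, v0⟫_ℝ ^ 2 ≤ l m * ∑ i : Fin n, ⟪b i.succ, v0⟫_ℝ ^ 2 := by
      rw [Finset.mul_sum]
      exact Finset.sum_le_sum fun i _ => mul_le_mul_of_nonneg_right (hm i) (sq_nonneg _)
    have h2 : ∑ a, ⟪b a, v0⟫_ℝ ^ 2 = 1 := by
      have := b.sum_sq_norm_inner_right v0
      simp only [Real.norm_eq_abs, sq_abs] at this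
      rw [this, hv0]; norm_num
    rw [Fin.sum_univ_succ] at h2
    have h3 : ∑ i : Fin n, ⟪b i.succ, v0⟫_ℝ ^ 2 ≤ 1 := by nlinarith [sq_nonneg ⟪b 0, v0⟫_ℝ]
    have := F.lpos m
    nlinarith
  set M := H x * l m - γ / 2 * gsq H x + ε * E with hM
  have hmax : ∀ y u : Eu n, y ≠ 0 → u ≠ 0 →
      H y * dd u (dd u H) y + (-(γ / 2) * gsq H y + ε * exp (A * (⟪y, q⟫_ℝ / ‖y‖)) - M) * ‖u‖ ^ 2 ≤ 0 := by
    intro y u hy0 hu0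
    have hyn : ‖y‖ ≠ 0 := norm_ne_zero_iff.2 hy0
    have hun : ‖u‖ ≠ 0 := norm_ne_zero_iff.2 hu0
    have h1 := hmax0 (‖y‖⁻¹ • y) (‖u‖⁻¹ • u)
      (by rw [norm_smul, norm_inv, norm_norm, inv_mul_cancel₀ hyn])
      (by rw [norm_smul, norm_inv, norm_norm, inv_mul_cancel₀ hun])
    simp only at h1
    rw [← hom0 (f := fun y => H y * dd (‖u‖⁻¹ • u) (dd (‖u‖⁻¹ • u) H) y) (hess_hom hs hh _) hy0,
      ← hom0 (gsq_hom hs hh) hy0, inner_smul_left, hess_smul hs _ _ hy0] at h1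
    have e : A * (⟪y, q⟫_ℝ / ‖y‖) = A * ((starRingEnd ℝ) ‖y‖⁻¹ * ⟪y, q⟫_ℝ) := by
      rw [conj_trivial]; ring
    rw [← e] at h1
    have h2 := mul_le_mul_of_nonneg_left hv0le hpos.le
    have h3 : H y * (‖u‖⁻¹ ^ 2 * dd u (dd u H) y)
      + (-(γ / 2) * gsq H y + ε * exp (A * (⟪y, q⟫_ℝ / ‖y‖)) - M) ≤ 0 := by
      rw [hM]; linarith
    have h4 := mul_nonpos_of_nonpos_of_nonneg h3 (sq_nonneg ‖u‖)
    refine le_trans (le_of_eq ?_) h4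
    field_simp
  have c1 : ∀ i : Fin n, dd (b i.succ) (dd em (dd em H)) x = CC H x b m m i := by
    intro i
    rw [CC_swap2 hs hx0 m m i, CC_swap1 hs hx0 m i m]; rfl
  have c3 : ∀ i : Fin n, dd (b i.succ) (dd (b i.succ) H) x = l i := by
    intro i; rw [F.diag]; simp
  have gen : ∀ (i : Fin n) (a : Eu n), ⟪em, a⟫_ℝ = 0 →
      (gg H x b i * l m + H x * CC H x b m m i - γ * l i * gg H x b i
        = - (ε * (A * E * ⟪b i.succ, q⟫_ℝ))) ∧
      (l i * l m + 2 * gg H x b i * CC H x b m m i + H x * QQ H x b i m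
      - γ * (l i ^ 2 + ∑ j, gg H x b j * CC H x b j i i - H x * l i)
      + ε * (A * E * (A * ⟪b i.succ, q⟫_ℝ ^ 2 - ⟪x, q⟫_ℝ))
      + (4 * H x * dd a (dd (b i.succ) (dd em H)) x
        + 2 * H x * (dd a (dd a H) x - l m * ‖a‖ ^ 2)) ≤ 0) := by
    intro i a ha
    have hne := line_ne F.nx (F.perp i)
    have hnv : ∀ t : ℝ, em + t • a ≠ 0 := line_ne hemn ha
    have hnorm : ∀ t : ℝ, ‖em + t • a‖ ^ 2 = 1 + t * t * ‖a‖ ^ 2 := by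
      intro t
      rw [norm_add_sq_real, inner_smul_right, ha, norm_smul, hemn, mul_pow, Real.norm_eq_abs, sq_abs]
      ring
    have jH := J2.line hs hne
    have k1 := J2.line ((hs.dd em).dd em) hne
    have k2 := (J2.const 2).mul (J2.id.mul (J2.line ((hs.dd em).dd a) hne))
    have k3 := (J2.id.mul J2.id).mul (J2.line ((hs.dd a).dd a) hne)
    have j1 := jH.mul ((k1.add k2).add k3)
    have j2 := (J2.const (-(γ / 2))).mul (gsq_line hH F i)
    have j3 := (J2.const ε).mul (eta_line (q := q) F i A)
    have j4 := (J2.const 1).add ((J2.id.mul J2.id).mul (J2.const (‖a‖ ^ 2)))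
    have j := j1.add (((j2.add j3).add (J2.const (-M))).mul j4)
    have t := j.test (by
      intro t
      have h1 := hmax (x + t • b i.succ) (em + t • a) (hne t) (hnv t)
      rw [hnorm, hess_add hs _ _ _ (hne t)] at h1
      refine le_trans (le_of_eq ?_) (h1.trans (le_of_eq ?_))
      · ring
      · simp only [zero_smul, add_zero, zero_mul, mul_zero, mul_one, F.nx, div_one, hmm]
        rw [← hE, hM]; ring)
    have c2 : dd (b i.succ) (dd (b i.succ) (dd em (dd em H))) x = QQ H x b i m := rfl
    have c5 : dd (b i.succ) H x = gg H x b i := rfl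
    have c6 : dd a (dd em H) x = 0 := by rw [hem, F.dd1 hH, ← hem, ha, mul_zero]
    have c7 : dd (b i.succ) (dd a (dd em H)) x = dd a (dd (b i.succ) (dd em H)) x :=
      dd_comm (hs.dd em) _ _ hx0
    simp only [c1, c2, c3, c5, c6, c7, hmm] at t
    rw [← hE] at t
    constructor
    · linarith [t.1]
    · refine le_trans (le_of_eq ?_) t.2
      rw [hM]
      ring
  have hem0 : ⟪em, x⟫_ℝ = 0 := by rw [real_inner_comm]; exact F.perp m
  -- the special direction
  set r : Fin n → ℝ := fun j => if j = m then 0 else gg H x b j / H x with hr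
  set a : Eu n := - x - ∑ j, r j • b j.succ with had
  have hbb : ∀ i j : Fin n, ⟪b i.succ, b j.succ⟫_ℝ = if i = j then 1 else 0 := by
    intro i j
    rw [orthonormal_iff_ite.1 b.orthonormal]; simp
  have hba : ∀ i : Fin n, ⟪b i.succ, a⟫_ℝ = - r i := by
    intro i
    rw [had, inner_sub_right, inner_neg_right, real_inner_comm, F.perp, inner_sum]
    simp [inner_smul_right, hbb]
  have hba0 : ⟪b 0, a⟫_ℝ = -1 := by
    rw [had, inner_sub_right, inner_neg_right, F.b0, inner_sum]
    simp [inner_smul_right, F.perp, F.nx]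
  have haem : ⟪em, a⟫_ℝ = 0 := by rw [hem, hba]; simp [hr]
  have haa : dd a (dd a H) x = ∑ j, l j * r j ^ 2 := by
    rw [F.dd2 hH]; simp [hba]
  have han : ‖a‖ ^ 2 = 1 + ∑ j, r j ^ 2 := by
    have := b.sum_sq_norm_inner_right a
    simp only [Real.norm_eq_abs, sq_abs] at this
    rw [← this, Fin.sum_univ_succ, hba0]
    simp [hba]
  have ha3 : dd a (dd em (dd em H)) x = l m - ∑ j, r j * CC H x b m m j := by
    rw [dd_exp b, Fin.sum_univ_succ, hba0, F.b0, D3_rad hs hh hx0, hmm]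
    simp only [hba, c1]
    simp
    ring
  have W2 : ∀ i : Fin n, l i * l m + 2 * gg H x b i * CC H x b m m i + H x * QQ H x b i m
      - γ * (l i ^ 2 + ∑ j, gg H x b j * CC H x b j i i - H x * l i)
      + ε * (A * E * (A * ⟪b i.succ, q⟫_ℝ ^ 2 - ⟪x, q⟫_ℝ))
      + (if i = m then 2 * H x * l m - ∑ j, (if j = m then 0 else
          4 * gg H x b j * CC H x b m m j + 2 * (l m - l j) * gg H x b j ^ 2 / H x) else 0) ≤ 0 := by
    intro i
    split_ifs with him
    · subst him
      refine le_trans (le_of_eq ?_) (gen i a haem).2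
      congr 1
      rw [← hem, ha3, haa, han]
      have e1 : ∑ j, (if j = i then 0 else
          4 * gg H x b j * CC H x b i i j + 2 * (l i - l j) * gg H x b j ^ 2 / H x)
          = 4 * H x * ∑ j, r j * CC H x b i i j - 2 * H x * (∑ j, l j * r j ^ 2 - l i * ∑ j, r j ^ 2) := by
        rw [Finset.mul_sum, Finset.mul_sum, ← Finset.sum_sub_distrib, Finset.mul_sum,
          ← Finset.sum_sub_distrib]
        refine Finset.sum_congr rfl fun j _ => ?_
        simp only [hr]
        split_ifs
        · ring
        · field_simp; ring
      rw [e1]; ring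
    · refine le_trans (le_of_eq ?_) (gen i 0 (by simp)).2
      simp [dd]
  obtain ⟨c, hc, hfin⟩ := W_alg hn (p := p) (h := H x) (γ := γ) hp hp1 hγ l (gg H x b) _ _ F.lpos hpos m hm
    (CC H x b) (QQ H x b) (CC_swap1 hs hx0) (CC_swap2 hs hx0) (fun k => E12 hH F k)
    (fun i => (gen i 0 (by simp)).1) W2
  refine ⟨b, l, F, fun i => - c i, fun i => by rw [abs_neg]; exact hc i, ?_⟩
  refine le_trans (le_of_eq ?_) hfin
  congr 1
  refine Finset.sum_congr rfl fun i _ => ?_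
  congr 1
  ring

end Part7

section Part8

lemma pos_sum {n : ℕ} (hn : 1 ≤ n) {h s A B m0 m1 l0 U δ : ℝ} (hm0 : 0 < m0) (hl0 : 0 < l0)
    (hU : 0 < U) (hδ : 0 < δ) (hB : 0 ≤ B)
    (hA1 : 1 ≤ A) (hA2 : 2 * B ^ 2 < m0 ^ 2 * A)
    (hA3 : n * (2 * B ^ 2 / m0 + m1) / l0 < m0 * A * δ / (4 * U))
    (l g c σ : Fin n → ℝ) (hl : ∀ i, l0 ≤ l i) (hlU : ∀ i, l i ≤ U) (hg : ∀ i, |g i| ≤ B)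
    (hc : ∀ i, |c i| ≤ 2) (hh : m0 ≤ h) (hh1 : h ≤ m1) (hs1 : s ≤ 1 - δ) (hs : -1 ≤ s)
    (hσ : ∑ i, σ i ^ 2 = 1 - s ^ 2) :
    0 < ∑ i, (h * (A * σ i ^ 2 - s) + c i * (g i * σ i)) / l i := by
  have hlp : ∀ i, 0 < l i := fun i => hl0.trans_le (hl i)
  have : Nonempty (Fin n) := ⟨⟨0, by omega⟩⟩
  have cg : ∀ i, - (2 * B * |σ i|) ≤ c i * (g i * σ i) := by
    intro i
    have : |c i * (g i * σ i)| ≤ 2 * B * |σ i| := by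
      rw [abs_mul, abs_mul, ← mul_assoc]
      exact mul_le_mul_of_nonneg_right (mul_le_mul (hc i) (hg i) (abs_nonneg _) (by norm_num))
        (abs_nonneg _)
    linarith [neg_abs_le (c i * (g i * σ i))]
  have hAs : ∀ i, m0 * A * |σ i| ^ 2 ≤ h * (A * σ i ^ 2) := by
    intro i
    rw [sq_abs, mul_assoc]
    exact mul_le_mul_of_nonneg_right hh (by positivity)
  by_cases hcase : s ≤ -1/2
  · refine Finset.sum_pos (fun i _ => div_pos ?_ (hlp i)) Finset.univ_nonempty
    have h1 : m0 / 2 ≤ - (h * s) := by nlinarith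
    have h2 : 0 < m0 * A * |σ i| ^ 2 - 2 * B * |σ i| + m0 / 2 := by
      have : 0 < m0 * A * (m0 * A * |σ i| ^ 2 - 2 * B * |σ i| + m0 / 2) := by
        nlinarith [sq_nonneg (m0 * A * |σ i| - B)]
      exact pos_of_mul_pos_right this (by positivity)
    nlinarith [cg i, hAs i]
  · push Not at hcase
    set D := 2 * B ^ 2 / m0 + m1 with hD
    have hm1 : 0 < m1 := by linarith
    have hDp : 0 < D := by positivity
    have t : ∀ i, m0 * A / (2 * U) * σ i ^ 2 - D / l0
        ≤ (h * (A * σ i ^ 2 - s) + c i * (g i * σ i)) / l i := by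
      intro i
      have h1 : - m1 ≤ - (h * s) := by nlinarith
      have h2 : m0 * A / 2 * σ i ^ 2 - D ≤ h * (A * σ i ^ 2 - s) + c i * (g i * σ i) := by
        have h3 : 0 ≤ m0 * A / 2 * |σ i| ^ 2 - 2 * B * |σ i| + 2 * B ^ 2 / m0 := by
          have e : 0 ≤ m0 * (m0 * A / 2 * |σ i| ^ 2 - 2 * B * |σ i| + 2 * B ^ 2 / m0) := by
            have : m0 * (m0 * A / 2 * |σ i| ^ 2 - 2 * B * |σ i| + 2 * B ^ 2 / m0)
              = (m0 * |σ i| - 2 * B) ^ 2 / 2 + (A - 1) * (m0 * |σ i|) ^ 2 / 2 := by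
              field_simp; ring
            rw [this]
            have := sub_nonneg.2 hA1
            positivity
          exact nonneg_of_mul_nonneg_right e hm0
        have h4 := hAs i
        have h5 := cg i
        rw [sq_abs] at h3 h4
        rw [hD]
        nlinarith
      have h6 : m0 * A / (2 * U) * σ i ^ 2 ≤ m0 * A / 2 * σ i ^ 2 / l i := by
        rw [le_div_iff₀ (hlp i)]
        have : m0 * A / (2 * U) * σ i ^ 2 * l i = m0 * A / 2 * σ i ^ 2 * (l i / U) := by
          field_simp
        rw [this]
        have h7 : l i / U ≤ 1 := (div_le_one hU).2 (hlU i)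
        exact mul_le_of_le_one_right (by positivity) h7
      have h8 : D / l i ≤ D / l0 := by gcongr; exact hl i
      have h9 := div_le_div_of_nonneg_right h2 (hlp i).le
      rw [sub_div] at h9
      linarith
    have t' := Finset.sum_le_sum fun i (_ : i ∈ Finset.univ) => t i
    rw [Finset.sum_sub_distrib, ← Finset.mul_sum, hσ] at t'
    simp only [Finset.sum_const, Finset.card_univ, Fintype.card_fin, nsmul_eq_mul] at t'
    have h1 : δ / 2 ≤ 1 - s ^ 2 := by nlinarith
    have h2 : m0 * A / (2 * U) * (δ / 2) ≤ m0 * A / (2 * U) * (1 - s ^ 2) :=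
      mul_le_mul_of_nonneg_left h1 (by positivity)
    have h3 : m0 * A / (2 * U) * (δ / 2) = m0 * A * δ / (4 * U) := by field_simp; ring
    have h4 : n * (D / l0) = n * D / l0 := by ring
    linarith

section smp
variable {n : ℕ} {p : ℝ} {H : Eu n → ℝ}

lemma dd2_eq (hs : Sm H) (v : Eu n) {x : Eu n} (hx : x ≠ 0) :
    dd v (dd v H) x = fderiv ℝ (fderiv ℝ H) x v v := by
  have hd : DifferentiableAt ℝ (fderiv ℝ H) x :=
    ((hs.cda hx).fderiv_right (m := (⊤ : ℕ∞)) (by simp)).differentiableAt (by simp)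
  unfold dd
  rw [fderiv_clm_apply hd (differentiableAt_const v)]
  simp

lemma cont_fd (hs : Sm H) : ContinuousOn (fderiv ℝ H) {(0 : Eu n)}ᶜ := by
  intro x hx
  exact (((hs.cda hx).fderiv_right (m := (⊤ : ℕ∞)) (by simp)).continuousAt).continuousWithinAt

lemma cont_fd2 (hs : Sm H) : ContinuousOn (fderiv ℝ (fderiv ℝ H)) {(0 : Eu n)}ᶜ := by
  intro x hx
  exact ((((hs.cda hx).fderiv_right (m := (⊤ : ℕ∞)) (by simp)).fderiv_right
    (m := (⊤ : ℕ∞)) (by simp)).continuousAt).continuousWithinAt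

lemma cont_hess (hs : Sm H) :
    ContinuousOn (fun z : Eu n × Eu n => dd z.2 (dd z.2 H) z.1) {z | z.1 ≠ 0} := by
  have h1 : ContinuousOn (fun z : Eu n × Eu n => fderiv ℝ (fderiv ℝ H) z.1 z.2 z.2) {z | z.1 ≠ 0} := by
    have h2 : ContinuousOn (fun z : Eu n × Eu n => fderiv ℝ (fderiv ℝ H) z.1) {z | z.1 ≠ 0} :=
      (cont_fd2 hs).comp continuousOn_fst (fun z hz => hz)
    exact (h2.clm_apply continuousOn_snd).clm_apply continuousOn_snd
  exact h1.congr fun z hz => dd2_eq hs _ hz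

lemma cont_gsq (hs : Sm H) : ContinuousOn (gsq H) {(0 : Eu n)}ᶜ := by
  have b := EuclideanSpace.basisFun (Fin (n+1)) ℝ
  have : gsq H = fun x => ∑ a, dd (b a) H x * dd (b a) H x := funext fun x => gsq_eq H b x
  rw [this]
  exact continuousOn_finset_sum _ fun a _ => (hs.dd _).cont.mul (hs.dd _).cont

lemma cont_lap (hs : Sm H) : ContinuousOn (lap H) {(0 : Eu n)}ᶜ := by
  have b := EuclideanSpace.basisFun (Fin (n+1)) ℝ
  refine ContinuousOn.congr (f := fun x => ∑ a, dd (b a) (dd (b a) H) x) ?_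
    (fun x hx => lap_eq hs b hx)
  exact continuousOn_finset_sum _ fun a _ => ((hs.dd _).dd _).cont

lemma frame_sq {x q : Eu n} {b : OrthonormalBasis (Fin (n + 1)) ℝ (Eu n)} (hb : b 0 = x)
    (hq : ‖q‖ = 1) : ∑ i : Fin n, ⟪b i.succ, q⟫_ℝ ^ 2 = 1 - ⟪x, q⟫_ℝ ^ 2 := by
  have := b.sum_sq_norm_inner_right q
  simp only [Real.norm_eq_abs, sq_abs] at this
  rw [hq, Fin.sum_univ_succ, hb] at this
  linarith

lemma smp (hn : 1 ≤ n) (hH : Dat p H) {G : Eu n → Eu n → ℝ} {κ : ℝ} (hκ : 0 < κ) (hP : PP H G κ)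
    (hG : ContinuousOn (fun z : Eu n × Eu n => G z.1 z.2) {z | z.1 ≠ 0}) {x : Eu n} (hx : ‖x‖ = 1)
    (v : Eu n) : dd v H x = ⟪x, v⟫_ℝ * H x := by
  have hs := hH.sm
  have hS : IsCompact (sphere (0 : Eu n) 1) := isCompact_sphere 0 1
  have hSm : ∀ y : Eu n, y ∈ sphere (0 : Eu n) 1 ↔ ‖y‖ = 1 := fun y => by simp
  have hn0 : ∀ y : Eu n, ‖y‖ = 1 → y ≠ 0 := by
    rintro y hy rfl; simp at hy
  set KK : Set (Eu n × Eu n) := sphere (0 : Eu n) 1 ×ˢ sphere (0 : Eu n) 1 with hKK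
  have hKc : IsCompact KK := hS.prod hS
  have hKm : ∀ z : Eu n × Eu n, z ∈ KK ↔ ‖z.1‖ = 1 ∧ ‖z.2‖ = 1 := fun z => by
    rw [hKK, Set.mem_prod, hSm, hSm]
  have hKs : KK ⊆ {z | z.1 ≠ 0} := fun z hz => hn0 _ ((hKm z).1 hz).1
  have hne : KK.Nonempty := ⟨(x, x), (hKm _).2 ⟨hx, hx⟩⟩
  have hGK := hG.mono hKs
  obtain ⟨z1, hz1, hz1m⟩ := hKc.exists_isMaxOn hne hGK
  set M := G z1.1 z1.2 with hM
  have hMax : ∀ y u : Eu n, ‖y‖ = 1 → ‖u‖ = 1 → G y u ≤ M :=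
    fun y u hy hu => hz1m ((hKm (y, u)).2 ⟨hy, hu⟩)
  suffices hall : ∀ q : Eu n, ‖q‖ = 1 → ∃ u, ‖u‖ = 1 ∧ G q u = M by
    obtain ⟨u, hu, hGu⟩ := hall x hx
    obtain ⟨b, l, F, c, hc, hfin⟩ := hP 0 0 x x u le_rfl hx hu (by
      intro y w hy hw
      simp only [zero_mul, add_zero]
      rw [hGu]; exact hMax y w hy hw)
    simp only [zero_mul, mul_zero, add_zero, zero_div, Finset.sum_const_zero] at hfin
    have h0 : ∑ i, gg H x b i ^ 2 = 0 := by
      have := Finset.sum_nonneg fun i (_ : i ∈ Finset.univ) => sq_nonneg (gg H x b i)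
      nlinarith
    have h1 : ∀ i, gg H x b i = 0 := by
      intro i
      have := (Finset.sum_eq_zero_iff_of_nonneg fun i _ => sq_nonneg (gg H x b i)).1 h0 i
        (Finset.mem_univ i)
      exact pow_eq_zero_iff two_ne_zero |>.1 this
    rw [dd_exp b, Fin.sum_univ_succ, F.b0, D1_rad hs hH.hom F.x0]
    have : ∀ i : Fin n, dd (b i.succ) H x = 0 := h1
    simp [this]
  intro q hq
  by_contra hcon
  push Not at hcon
  -- gap
  have hgap : ∃ a, 0 < a ∧ ∀ u, ‖u‖ = 1 → G q u ≤ M - a := by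
    have hc : ContinuousOn (fun u : Eu n => M - G q u) (sphere 0 1) := by
      refine continuousOn_const.sub ?_
      exact hG.comp (f := fun u : Eu n => (q, u)) (by fun_prop) (fun u _ => hn0 q hq)
    obtain ⟨a, ha, hle⟩ := hS.exists_forall_le' hc (a := 0) (fun u hu => by
      have h1 := hMax q u hq ((hSm u).1 hu)
      have h2 := hcon u ((hSm u).1 hu)
      exact sub_pos.2 (lt_of_le_of_ne h1 h2))
    exact ⟨a, ha, fun u hu => by linarith [hle u ((hSm u).2 hu)]⟩
  obtain ⟨a, ha, hgap⟩ := hgap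
  -- bounds
  obtain ⟨m0, hm0, hm0'⟩ := hS.exists_forall_le' (f := H) (a := 0)
    (hs.cont.mono fun y hy => hn0 y ((hSm y).1 hy)) (fun y hy => hH.pos y (hn0 y ((hSm y).1 hy)))
  obtain ⟨m1, hm1⟩ := hS.exists_bound_of_continuousOn (f := H)
    (hs.cont.mono fun y hy => hn0 y ((hSm y).1 hy))
  obtain ⟨B, hB⟩ := hS.exists_bound_of_continuousOn (f := fderiv ℝ H)
    ((cont_fd hs).mono fun y hy => hn0 y ((hSm y).1 hy))
  have hB0 : 0 ≤ B := (norm_nonneg _).trans (hB x ((hSm x).2 hx))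
  set TT : Set (Eu n × Eu n) := KK ∩ {z | ⟪z.1, z.2⟫_ℝ = 0} with hTT
  have hTc : IsCompact TT := hKc.inter_right (isClosed_eq (by fun_prop) (by fun_prop))
  have hTcont := (cont_hess hs).mono ((Set.inter_subset_left (s := KK) (t := {z | ⟪z.1, z.2⟫_ℝ = 0})).trans hKs)
  obtain ⟨l0, hl0, hl0'⟩ := hTc.exists_forall_le' (a := 0) hTcont (fun z hz =>
    hH.pd _ _ ((hKm z).1 hz.1).1 hz.2 (hn0 _ ((hKm z).1 hz.1).2))
  obtain ⟨U, hU⟩ := hTc.exists_bound_of_continuousOn hTcont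
  obtain ⟨δ, hδ, hδ'⟩ : ∃ δ, 0 < δ ∧ ∀ y u : Eu n, ‖y‖ = 1 → ‖u‖ = 1 → M - a / 2 ≤ G y u →
      ⟪y, q⟫_ℝ ≤ 1 - δ := by
    have hcl : IsCompact (KK ∩ {z | M - a / 2 ≤ G z.1 z.2}) := by
      have : IsClosed (KK ∩ (fun z : Eu n × Eu n => G z.1 z.2) ⁻¹' Set.Ici (M - a / 2)) :=
        hGK.preimage_isClosed_of_isClosed hKc.isClosed isClosed_Ici
      exact hKc.of_isClosed_subset this Set.inter_subset_left
    obtain ⟨δ, hδ, hδ'⟩ := hcl.exists_forall_le' (f := fun z => 1 - ⟪z.1, q⟫_ℝ) (a := 0)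
      (by fun_prop) (fun z hz => by
        obtain ⟨hzK, hzG⟩ := hz
        obtain ⟨h1, h2⟩ := (hKm z).1 hzK
        refine sub_pos.2 ((inner_lt_one_iff_real_of_norm_eq_one h1 hq).2 ?_)
        intro hzq
        have := hgap z.2 h2
        rw [← hzq] at this
        have h3 : M - a / 2 ≤ G z.1 z.2 := hzG
        linarith)
    exact ⟨δ, hδ, fun y u hy hu hG => by
      have := hδ' (y, u) ⟨(hKm _).2 ⟨hy, hu⟩, hG⟩
      simp only at this
      linarith⟩
  set U' := max U 1 with hU'
  have hU'p : 0 < U' := lt_of_lt_of_le one_pos (le_max_right _ _)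
  -- choose A
  obtain ⟨A, hA1, hA2, hA3⟩ : ∃ A : ℝ, 1 ≤ A ∧ 2 * B ^ 2 < m0 ^ 2 * A ∧
      n * (2 * B ^ 2 / m0 + m1) / l0 < m0 * A * δ / (4 * U') := by
    set X := n * (2 * B ^ 2 / m0 + m1) / l0
    refine ⟨1 + 2 * B ^ 2 / m0 ^ 2 + |X| * (4 * U') / (m0 * δ), ?_, ?_, ?_⟩
    · have h1 : 0 ≤ 2 * B ^ 2 / m0 ^ 2 := by positivity
      have h2 : 0 ≤ |X| * (4 * U') / (m0 * δ) := by positivity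
      linarith
    · have h2 : 0 ≤ |X| * (4 * U') / (m0 * δ) := by positivity
      have h3 : m0 ^ 2 * (1 + 2 * B ^ 2 / m0 ^ 2 + |X| * (4 * U') / (m0 * δ))
        = m0 ^ 2 + 2 * B ^ 2 + m0 ^ 2 * (|X| * (4 * U') / (m0 * δ)) := by field_simp
      rw [h3]
      have : 0 < m0 ^ 2 := by positivity
      have : 0 ≤ m0 ^ 2 * (|X| * (4 * U') / (m0 * δ)) := by positivity
      linarith
    · have h3 : m0 * (1 + 2 * B ^ 2 / m0 ^ 2 + |X| * (4 * U') / (m0 * δ)) * δ / (4 * U')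
        = |X| + m0 * (1 + 2 * B ^ 2 / m0 ^ 2) * δ / (4 * U') := by field_simp; ring
      rw [h3]
      have : 0 < m0 * (1 + 2 * B ^ 2 / m0 ^ 2) * δ / (4 * U') := by positivity
      linarith [le_abs_self X]
  set ε := a / 2 * exp (-A) with hε
  have hεp : 0 < ε := by positivity
  have hcont2 : ContinuousOn (fun z : Eu n × Eu n => G z.1 z.2 + ε * exp (A * ⟪z.1, q⟫_ℝ)) KK :=
    hGK.add (by fun_prop)
  obtain ⟨z, hz, hzm⟩ := hKc.exists_isMaxOn hne hcont2
  obtain ⟨hzx, hzv⟩ := (hKm z).1 hz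
  have hzm' : ∀ y u : Eu n, ‖y‖ = 1 → ‖u‖ = 1 →
      G y u + ε * exp (A * ⟪y, q⟫_ℝ) ≤ G z.1 z.2 + ε * exp (A * ⟪z.1, q⟫_ℝ) :=
    fun y u hy hu => hzm ((hKm (y, u)).2 ⟨hy, hu⟩)
  have habs : |⟪z.1, q⟫_ℝ| ≤ 1 := by
    have := abs_real_inner_le_norm z.1 q
    rwa [hzx, hq, one_mul] at this
  have hGz : M - a / 2 ≤ G z.1 z.2 := by
    obtain ⟨h1, h2⟩ := (hKm z1).1 hz1
    have h3 := hzm' z1.1 z1.2 h1 h2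
    have h4 : 0 < ε * exp (A * ⟪z1.1, q⟫_ℝ) := by positivity
    have h5 : ε * exp (A * ⟪z.1, q⟫_ℝ) ≤ a / 2 := by
      have : exp (A * ⟪z.1, q⟫_ℝ) ≤ exp A := by
        apply exp_le_exp.2
        nlinarith [le_of_abs_le habs]
      calc ε * exp (A * ⟪z.1, q⟫_ℝ) ≤ ε * exp A := mul_le_mul_of_nonneg_left this hεp.le
        _ = a / 2 := by rw [hε, mul_assoc, ← Real.exp_add]; simp
    linarith
  have hzδ := hδ' z.1 z.2 hzx hzv hGz
  obtain ⟨b, l, F, c, hc, hfin⟩ := hP ε A q z.1 z.2 hεp.le hzx hzv hzm'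
  have hzS : z.1 ∈ sphere (0 : Eu n) 1 := (hSm _).2 hzx
  have hTm : ∀ i : Fin n, (z.1, b i.succ) ∈ TT := fun i =>
    ⟨(hKm _).2 ⟨hzx, b.orthonormal.1 _⟩, F.perp i⟩
  have hli : ∀ i, dd (b i.succ) (dd (b i.succ) H) z.1 = l i := by
    intro i; rw [F.diag]; simp
  have pos := pos_sum hn (h := H z.1) (s := ⟪z.1, q⟫_ℝ) hm0 hl0 hU'p hδ hB0 hA1 hA2 hA3 l
    (gg H z.1 b) c (fun i => ⟪b i.succ, q⟫_ℝ)
    (fun i => by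
      have := hl0' _ (hTm i)
      simp only [hli] at this
      exact this)
    (fun i => by
      have := hU _ (hTm i)
      simp only [hli] at this
      exact (le_abs_self _).trans (this.trans (le_max_left _ _)))
    (fun i => by
      have h1 := (fderiv ℝ H z.1).le_opNorm (b i.succ)
      rw [b.orthonormal.1, mul_one] at h1
      exact h1.trans (hB _ hzS))
    hc (hm0' _ hzS) ((le_abs_self _).trans (hm1 _ hzS)) hzδ (neg_le_of_abs_le habs)
    (frame_sq F.b0 hq)
  have e : ∑ i, (H z.1 * (ε * (A * exp (A * ⟪z.1, q⟫_ℝ) * (A * ⟪b i.succ, q⟫_ℝ ^ 2 - ⟪z.1, q⟫_ℝ)))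
        + c i * (gg H z.1 b i * (ε * (A * exp (A * ⟪z.1, q⟫_ℝ) * ⟪b i.succ, q⟫_ℝ)))) / l i
      = ε * (A * exp (A * ⟪z.1, q⟫_ℝ)) * ∑ i, (H z.1 * (A * ⟪b i.succ, q⟫_ℝ ^ 2 - ⟪z.1, q⟫_ℝ)
        + c i * (gg H z.1 b i * ⟪b i.succ, q⟫_ℝ)) / l i := by
    rw [Finset.mul_sum]
    exact Finset.sum_congr rfl fun i _ => by ring
  rw [e] at hfin
  have hA0 : 0 < A := by linarith
  have h1 : 0 < ε * (A * exp (A * ⟪z.1, q⟫_ℝ)) := by positivity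
  have h2 := mul_pos h1 pos
  have h3 : 0 ≤ κ * ∑ i, gg H z.1 b i ^ 2 :=
    mul_nonneg hκ.le (Finset.sum_nonneg fun i _ => sq_nonneg _)
  linarith

lemma one_of_dd (hn : 1 ≤ n) (hp1 : p < 1) (hH : Dat p H)
    (hg : ∀ x v : Eu n, ‖x‖ = 1 → dd v H x = ⟪x, v⟫_ℝ * H x) {x : Eu n} (hx : ‖x‖ = 1) : H x = 1 := by
  have hs := hH.sm
  have hh := hH.hom
  have hg' : ∀ y v : Eu n, y ≠ 0 → dd v H y = ⟪y, v⟫_ℝ * H y / ‖y‖ ^ 2 := by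
    intro y v hy
    have hyn : 0 < ‖y‖ := norm_pos_iff.2 hy
    have h1 := hg (‖y‖⁻¹ • y) v (by rw [norm_smul, norm_inv, norm_norm, inv_mul_cancel₀ hyn.ne'])
    rw [hh.dd hs v y hy _ (inv_pos.2 hyn), hh y hy _ (inv_pos.2 hyn), inner_smul_left] at h1
    simp at h1
    rw [h1]
    field_simp
  obtain ⟨b, l, F⟩ := exists_frame hH hx
  have hx0 := F.x0
  have hl : ∀ i, l i = H x := by
    intro i
    have hne := line_ne F.nx (F.perp i)
    have h1 := dd_line (hs.dd (b i.succ)) x (b i.succ) 0 (hne 0)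
    have h2 : (fun s : ℝ => dd (b i.succ) H (x + s • b i.succ))
        = fun s : ℝ => s * (H (x + s • b i.succ) / (1 + s ^ 2)) := by
      ext s
      rw [hg' _ _ (hne s), norm_line F.nx (b.orthonormal.1 _) (F.perp i), inner_add_left, F.perp,
        inner_smul_left, real_inner_self_eq_norm_sq, b.orthonormal.1]
      simp; ring
    have h3 : HasDerivAt (fun t : ℝ => 1 + t ^ 2) (2 * 0) 0 := by
      simpa using ((hasDerivAt_id (0:ℝ)).pow 2).const_add 1
    have h4 := (hasDerivAt_id (0:ℝ)).mul ((dd_line hs x (b i.succ) 0 (hne 0)).div h3 (by norm_num))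
    rw [h2] at h1
    have h5 := h1.unique h4
    simp [F.diag] at h5
    exact h5
  have hd := hH.det b x (by rw [F.b0, real_inner_self_eq_norm_sq, hx]; norm_num)
  have hm : (Matrix.of fun i j => dd (b i) (dd (b j) H) x + if i = 0 ∧ j = 0 then 1 else 0)
      = Matrix.diagonal (Fin.cons 1 l : Fin (n+1) → ℝ) := by
    ext i j
    simp only [Matrix.of_apply, Matrix.diagonal_apply]
    refine Fin.cases ?_ (fun i => ?_) i <;> refine Fin.cases ?_ (fun j => ?_) j
    · rw [F.b0, D2_rad hs hh hx0]; simp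
    · rw [F.b0, D2_rad hs hh hx0]; simp [(Fin.succ_ne_zero _).symm]
    · rw [F.b0, H_rad hs hh _ hx0]; simp
    · rw [F.diag]; simp
  rw [hm, Matrix.det_diagonal, Fin.prod_univ_succ, hx] at hd
  simp only [Fin.cons_zero, Fin.cons_succ, hl, one_pow, Real.one_rpow, mul_one, one_mul,
    Finset.prod_const, Finset.card_univ, Fintype.card_fin] at hd
  have hpos := hH.pos x hx0
  have h6 := congrArg Real.log hd
  rw [Real.log_pow, Real.log_rpow hpos] at h6
  have h7 : ((n:ℝ) + 1 - p) * Real.log (H x) = 0 := by linarith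
  have h8 : (n:ℝ) + 1 - p ≠ 0 := by
    have : (0:ℝ) ≤ n := Nat.cast_nonneg n
    linarith
  have h9 := (mul_eq_zero.1 h7).resolve_left h8
  exact Real.eq_one_of_pos_of_log_eq_zero hpos h9

lemma one_of_two_le (hn : 2 ≤ n) (hp : -(n:ℝ) - 1 < p) (hp1 : p < 1) (hH : Dat p H)
    {x : Eu n} (hx : ‖x‖ = 1) : H x = 1 := by
  have hs := hH.sm
  have hn2 : (2:ℝ) ≤ n := by exact_mod_cast hn
  have hH1 : ContinuousOn (fun z : Eu n × Eu n => H z.1) {z | z.1 ≠ 0} :=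
    hs.cont.comp continuousOn_fst (fun z hz => hz)
  have hH2 : ContinuousOn (fun z : Eu n × Eu n => gsq H z.1) {z | z.1 ≠ 0} :=
    (cont_gsq hs).comp continuousOn_fst (fun z hz => hz)
  have hH3 : ContinuousOn (fun z : Eu n × Eu n => lap H z.1) {z | z.1 ≠ 0} :=
    (cont_lap hs).comp continuousOn_fst (fun z hz => hz)
  refine one_of_dd (by omega) hp1 hH ?_ hx
  intro y v hy
  by_cases hc : 1 - (n:ℝ) ≤ p
  · exact smp (by omega) hH (div_pos (by linarith) (by linarith)) (W_PP hn hH hc hp1)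
      ((hH1.mul (cont_hess hs)).sub (continuousOn_const.mul hH2)) hy v
  · push Not at hc
    exact smp (by omega) hH (div_pos (mul_pos (mul_pos (by linarith) (by linarith)) (by linarith))
      (by linarith)) (Z_PP hn hH hp)
      ((hH1.mul hH3).sub (continuousOn_const.mul hH2)) hy v

end smp

end Part8

section Part9

lemma ode_uniq {q m : ℝ} (hq : 0 < q) (hm : 0 < m) {u u' w w' : ℝ → ℝ}
    (hu : ∀ t, HasDerivAt u (u' t) t) (hu' : ∀ t, HasDerivAt u' (u t ^ (-q) - u t) t)
    (hum : ∀ t, m ≤ u t)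
    (hw : ∀ t, HasDerivAt w (w' t) t) (hw' : ∀ t, HasDerivAt w' (w t ^ (-q) - w t) t)
    (hwm : ∀ t, m ≤ w t) (t₀ : ℝ) (h0 : u t₀ = w t₀) (h1 : u' t₀ = w' t₀) (t : ℝ) :
    u t = w t ∧ u' t = w' t := by
  have hL : LipschitzOnWith (Real.toNNReal (q * m ^ (-q - 1))) (fun a : ℝ => a ^ (-q)) (Set.Ici m) := by
    refine Convex.lipschitzOnWith_of_nnnorm_hasDerivWithin_le (f' := fun a => -q * a ^ (-q - 1))
      (convex_Ici m) ?_ ?_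
    · intro x hx
      exact (Real.hasDerivAt_rpow_const (Or.inl (hm.trans_le hx).ne')).hasDerivWithinAt
    · intro x hx
      have hx' : m ≤ x := hx
      rw [← NNReal.coe_le_coe, coe_nnnorm, Real.coe_toNNReal _ (by positivity), norm_mul,
        norm_neg, Real.norm_of_nonneg hq.le, Real.norm_of_nonneg (by have := hm.trans_le hx'; positivity)]
      exact mul_le_mul_of_nonneg_left (Real.rpow_le_rpow_of_nonpos hm hx' (by linarith)) hq.le
  set s : Set (ℝ × ℝ) := {z | m ≤ z.1} with hs
  have h2 : LipschitzOnWith (Real.toNNReal (q * m ^ (-q - 1)) * 1) ((fun a : ℝ => a ^ (-q)) ∘ (Prod.fst : ℝ × ℝ → ℝ)) s :=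
    hL.comp (LipschitzWith.prod_fst.lipschitzOnWith) (fun z hz => hz)
  have h3 := h2.sub (LipschitzWith.prod_fst (α := ℝ) (β := ℝ)).lipschitzOnWith
  have h4 := (LipschitzWith.prod_snd (α := ℝ) (β := ℝ)).lipschitzOnWith (s := s) |>.prodMk h3
  have := ODE_solution_unique_univ (v := fun _ => fun z : ℝ × ℝ => (z.2, z.1 ^ (-q) - z.1)) (s := fun _ => s)
    (f := fun t => (u t, u' t)) (g := fun t => (w t, w' t)) (t₀ := t₀) (fun _ => h4)
    (fun t => ⟨(hu t).prodMk (hu' t), hum t⟩) (fun t => ⟨(hw t).prodMk (hw' t), hwm t⟩) (by simp [h0, h1])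
  have := congrFun this t
  simpa using this

lemma sign_near {g : ℝ → ℝ} {a c : ℝ} (hg : HasDerivAt g c a) (h0 : g a = 0) (hc : c < 0) :
    ∃ ε > 0, (∀ t, a < t → t < a + ε → g t < 0) ∧ (∀ t, a - ε < t → t < a → 0 < g t) := by
  have h := (hasDerivAt_iff_tendsto_slope.1 hg).eventually (gt_mem_nhds hc)
  rw [eventually_nhdsWithin_iff, Metric.eventually_nhds_iff] at h
  obtain ⟨ε, hε, h⟩ := h
  refine ⟨ε, hε, fun t h1 h2 => ?_, fun t h1 h2 => ?_⟩
  · have := h (y := t) (by rw [Real.dist_eq, abs_lt]; constructor <;> linarith) (by simp [h1.ne'])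
    rw [slope_def_field, h0, sub_zero] at this
    by_contra hh
    exact absurd this (not_lt.2 (div_nonneg (not_lt.1 hh) (by linarith)))
  · have := h (y := t) (by rw [Real.dist_eq, abs_lt]; constructor <;> linarith) (by simp [h2.ne])
    rw [slope_def_field, h0, sub_zero] at this
    by_contra hh
    exact absurd this (not_lt.2 (div_nonneg_of_nonpos (not_lt.1 hh) (by linarith)))

lemma ode_max {q m : ℝ} (hq : 0 < q) (hq3 : q < 3) (hm : 0 < m) {u u' : ℝ → ℝ}
    (hu : ∀ t, HasDerivAt u (u' t) t) (hu' : ∀ t, HasDerivAt u' (u t ^ (-q) - u t) t)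
    (hum : ∀ t, m ≤ u t) (hper : ∀ t, u (t + 2 * π) = u t)
    (hmax : ∀ t, u t ≤ u 0) (t : ℝ) : u' t = 0 := by
  have hpos : ∀ t, 0 < u t := fun t => hm.trans_le (hum t)
  have h00 : u' 0 = 0 := IsLocalMax.hasDerivAt_eq_zero (Filter.Eventually.of_forall hmax) (hu 0)
  have hper' : ∀ t, u' (t + 2 * π) = u' t := by
    intro t
    have h1 := (hu (t + 2 * π)).comp_add_const t (2 * π)
    rw [funext hper] at h1
    exact h1.unique (hu t)
  -- reflections
  have hrefl : ∀ b, u' b = 0 → ∀ t, u' (2 * b - t) = - u' t := by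
    intro b hb t
    have h1 : ∀ t, HasDerivAt (fun s => u (2 * b - s)) (-u' (2 * b - t)) t := fun t => by
      simpa using (hu (2 * b - t)).comp_const_sub (2 * b) t
    have h2 : ∀ t, HasDerivAt (fun s => -u' (2 * b - s)) (u (2 * b - t) ^ (-q) - u (2 * b - t)) t :=
      fun t => by simpa using ((hu' (2 * b - t)).comp_const_sub (2 * b) t).fun_neg
    have := (ode_uniq hq hm hu hu' hum h1 h2 (fun t => hum _) b (by ring_nf)
      (by rw [show 2 * b - b = b by ring, hb]; simp) t).2
    linarith
  have hpi : u' π = 0 := by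
    have h1 := hrefl 0 h00 π
    have h2 := hper' (-π)
    rw [show -π + 2 * π = π by ring] at h2
    rw [show 2 * 0 - π = -π by ring] at h1
    linarith
  by_cases hc : u 0 ^ (-q) - u 0 = 0
  · exact (ode_uniq hq hm hu hu' hum (w := fun _ => u 0) (w' := fun _ => 0)
      (fun t => hasDerivAt_const _ _) (fun t => by rw [hc]; exact hasDerivAt_const _ _)
      (fun _ => hum 0) 0 rfl h00 t).2
  exfalso
  have hc' : u 0 ^ (-q) - u 0 < 0 := by
    refine lt_of_le_of_ne ?_ hc
    exact (snd_test hu (hu' 0) hmax).2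
  obtain ⟨ε, hε, hneg, -⟩ := sign_near (hu' 0) h00 hc'
  have hucont : Continuous u' := continuous_iff_continuousAt.2 fun t => (hu' t).continuousAt
  set S : Set ℝ := Set.Icc ε π ∩ u' ⁻¹' {0} with hS
  have hεπ : ε ≤ π := by
    by_contra h
    push Not at h
    have := hneg π pi_pos (by linarith)
    linarith
  have hSc : IsCompact S := isCompact_Icc.inter_right (isClosed_singleton.preimage hucont)
  obtain ⟨b, hbS, hbmin⟩ := hSc.exists_isLeast ⟨π, ⟨hεπ, le_rfl⟩, hpi⟩
  have hb0 : u' b = 0 := hbS.2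
  have hbpos : 0 < b := hε.trans_le hbS.1.1
  have hbπ : b ≤ π := hbS.1.2
  have hltb : ∀ t, 0 < t → t < b → u' t < 0 := by
    intro t h1 h2
    by_contra hh
    push Not at hh
    have hε2 : ε / 2 < t := by
      by_contra h
      have := hneg t h1 (by linarith)
      linarith
    have h5 : (0:ℝ) ∈ Set.Icc (u' (ε / 2)) (u' t) :=
      ⟨(hneg (ε/2) (by linarith) (by linarith)).le, hh⟩
    obtain ⟨r, hr, hr0⟩ := intermediate_value_Icc hε2.le hucont.continuousOn h5
    have hrε : ε ≤ r := by
      by_contra h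
      have := hneg r (by linarith [hr.1]) (by linarith)
      linarith
    have := hbmin (show r ∈ S from ⟨⟨hrε, by linarith [hr.2]⟩, hr0⟩)
    linarith [hr.2]
  have hb2 : 0 ≤ u b ^ (-q) - u b := by
    by_contra h
    push Not at h
    obtain ⟨δ, hδ, -, hh⟩ := sign_near (hu' b) hb0 h
    have h1 := hh (max (b / 2) (b - δ / 2)) (by
      apply lt_max_of_lt_right; linarith) (by apply max_lt <;> linarith)
    have h2 := hltb (max (b / 2) (b - δ / 2)) (by apply lt_max_of_lt_left; linarith)
      (by apply max_lt <;> linarith)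
    linarith
  have hpw : ∀ t, HasDerivAt (fun s => u s ^ (-q)) (u' t * (-q) * u t ^ (-q - 1)) t := fun t =>
    (hu t).rpow_const (Or.inl (hpos t).ne')
  have hbltπ : b < π := by
    refine lt_of_le_of_ne hbπ ?_
    intro hbe
    set F : ℝ → ℝ := fun t => (u t ^ (-q) - u t) * sin t - u' t * cos t with hF
    have hFd : ∀ t, HasDerivAt F (-q * u t ^ (-q - 1) * u' t * sin t) t := by
      intro t
      have := ((((hpw t).sub (hu t)).mul (hasDerivAt_sin t)).sub ((hu' t).mul (hasDerivAt_cos t)))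
      refine this.congr_deriv ?_
      simp only [Pi.sub_apply]
      ring
    have hmono : StrictMonoOn F (Set.Icc 0 π) := by
      refine strictMonoOn_of_hasDerivWithinAt_pos (convex_Icc _ _)
        (fun t _ => (hFd t).continuousAt.continuousWithinAt)
        (fun t _ => (hFd t).hasDerivWithinAt) ?_
      intro t ht
      rw [interior_Icc] at ht
      have h1 := hltb t ht.1 (hbe ▸ ht.2)
      have h2 := sin_pos_of_pos_of_lt_pi ht.1 ht.2
      have h3 : 0 < u t ^ (-q - 1) := Real.rpow_pos_of_pos (hpos t) _
      have : 0 < q * u t ^ (-q - 1) * (-u' t) * sin t :=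
        mul_pos (mul_pos (mul_pos hq h3) (by linarith)) h2
      linarith
    have := hmono (Set.left_mem_Icc.2 pi_pos.le) (Set.right_mem_Icc.2 pi_pos.le) pi_pos
    simp [hF, h00, hpi] at this
  have hbgt : π / 2 < b := by
    by_contra hble
    push Not at hble
    set F : ℝ → ℝ := fun t => (2 * u' t ^ 2 + 2 * u t * (u t ^ (-q) - u t)) * sin (2 * t)
      - 2 * (2 * u t * u' t) * cos (2 * t) with hF
    have hFd : ∀ t, HasDerivAt F (2 * (3 - q) * u t ^ (-q) * u' t * sin (2 * t)) t := by
      intro t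
      have hs : HasDerivAt (fun s : ℝ => sin (2 * s)) (cos (2 * t) * 2) t := by
        simpa using (((hasDerivAt_id t).const_mul 2).sin)
      have hcs : HasDerivAt (fun s : ℝ => cos (2 * s)) (-sin (2 * t) * 2) t := by
        simpa using (((hasDerivAt_id t).const_mul 2).cos)
      have hw1 := (((hu t).const_mul 2).mul (hu' t)).const_mul 2
      have hw2 := (((hu' t).pow 2).const_mul 2).add (((hu t).const_mul 2).mul ((hpw t).sub (hu t)))
      have := (hw2.mul hs).sub (hw1.mul hcs)
      refine this.congr_deriv ?_
      have h1 : u t ^ (-q) = u t * u t ^ (-q - 1) := by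
        rw [← Real.rpow_one_add' (hpos t).le (by linarith)]; ring_nf
      simp only [Pi.sub_apply, Pi.mul_apply, Pi.add_apply, Pi.pow_apply]
      rw [h1]
      ring
    have hmono : StrictAntiOn F (Set.Icc 0 b) := by
      refine strictAntiOn_of_hasDerivWithinAt_neg (convex_Icc _ _)
        (fun t _ => (hFd t).continuousAt.continuousWithinAt)
        (fun t _ => (hFd t).hasDerivWithinAt) ?_
      intro t ht
      rw [interior_Icc] at ht
      have h1 := hltb t ht.1 ht.2
      have h2 := sin_pos_of_pos_of_lt_pi (x := 2 * t) (by linarith [ht.1]) (by linarith [ht.2])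
      have h3 : 0 < u t ^ (-q) := Real.rpow_pos_of_pos (hpos t) _
      have : 0 < 2 * (3 - q) * u t ^ (-q) * (-u' t) * sin (2 * t) :=
        mul_pos (mul_pos (mul_pos (by linarith) h3) (by linarith)) h2
      linarith
    have h6 := hmono (Set.left_mem_Icc.2 hbpos.le) (Set.right_mem_Icc.2 hbpos.le) hbpos
    simp [hF, h00, hb0] at h6
    have h7 : 0 ≤ sin (2 * b) := sin_nonneg_of_nonneg_of_le_pi (by linarith) (by linarith)
    have h8 : 0 ≤ 2 * u b * (u b ^ (-q) - u b) * sin (2 * b) :=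
      mul_nonneg (mul_nonneg (by linarith [hpos b]) hb2) h7
    linarith
  have h9 := hrefl b hb0 π
  have h10 := hltb (2 * b - π) (by linarith) (by linarith)
  rw [h9, hpi] at h10
  simp at h10

lemma ode_const {q : ℝ} (hq : 0 < q) (hq3 : q < 3) {u u' : ℝ → ℝ}
    (hu : ∀ t, HasDerivAt u (u' t) t) (hu' : ∀ t, HasDerivAt u' (u t ^ (-q) - u t) t)
    (hpos : ∀ t, 0 < u t) (hper : ∀ t, u (t + 2 * π) = u t) (t : ℝ) : u' t = 0 := by
  have hcont : Continuous u := continuous_iff_continuousAt.2 fun t => (hu t).continuousAt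
  have hp : Function.Periodic u (2 * π) := hper
  have hK := hp.compact_of_continuous (by have := pi_pos; positivity) hcont
  obtain ⟨-, ⟨t0, rfl⟩, h0⟩ := hK.exists_isGreatest (Set.range_nonempty u)
  obtain ⟨-, ⟨t1, rfl⟩, h1⟩ := hK.exists_isLeast (Set.range_nonempty u)
  have := ode_max hq hq3 (hpos t1) (u := fun s => u (s + t0)) (u' := fun s => u' (s + t0))
    (fun s => (hu _).comp_add_const s t0) (fun s => (hu' _).comp_add_const s t0)
    (fun s => h1 ⟨_, rfl⟩) (fun s => by rw [← hper (s + t0)]; ring_nf)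
    (fun s => by simp only [zero_add]; exact h0 ⟨_, rfl⟩) (t - t0)
  simpa using this

end Part9

lemma tang {p : ℝ} {H : Eu 1 → ℝ} (hH : Dat p H) {y w : Eu 1} (hy : ‖y‖ = 1) (hw : ‖w‖ = 1)
    (hyw : ⟪y, w⟫_ℝ = 0) : dd w (dd w H) y = H y ^ (p - 1) := by
  have hs := hH.sm
  have hh := hH.hom
  obtain ⟨b, l, F⟩ := exists_frame hH hy
  have hx0 := F.x0
  have hd := hH.det b y (by rw [F.b0, real_inner_self_eq_norm_sq, hy]; norm_num)
  have hm : (Matrix.of fun i j => dd (b i) (dd (b j) H) y + if i = 0 ∧ j = 0 then 1 else 0)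
      = Matrix.diagonal (Fin.cons 1 l : Fin (1+1) → ℝ) := by
    ext i j
    simp only [Matrix.of_apply, Matrix.diagonal_apply]
    refine Fin.cases ?_ (fun i => ?_) i <;> refine Fin.cases ?_ (fun j => ?_) j
    · rw [F.b0, D2_rad hs hh hx0]; simp
    · rw [F.b0, D2_rad hs hh hx0]; simp [(Fin.succ_ne_zero _).symm]
    · rw [F.b0, H_rad hs hh _ hx0]; simp
    · rw [F.diag]; simp
  rw [hm, Matrix.det_diagonal, Fin.prod_univ_succ, hy] at hd
  simp only [Fin.cons_zero, Fin.cons_succ, one_pow, Real.one_rpow, mul_one, one_mul,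
    Finset.univ_unique, Finset.prod_singleton] at hd
  have hdiag := F.diag 0 0
  rw [if_pos rfl] at hdiag
  set e := b (Fin.succ (0 : Fin 1)) with he
  have hwe : w = ⟪e, w⟫_ℝ • e := by
    have h1 := b.sum_repr' w
    rw [Fin.sum_univ_succ, F.b0, hyw] at h1
    simpa [he] using h1.symm
  have hc : ⟪e, w⟫_ℝ ^ 2 = 1 := by
    have h2 := congrArg norm hwe
    rw [norm_smul, hw, he, b.orthonormal.1, mul_one, Real.norm_eq_abs, ← he] at h2
    rw [← sq_abs, ← h2]; norm_num
  set c := ⟪e, w⟫_ℝ with hcd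
  have h3 : dd w H = fun z => c * dd e H z := by
    ext z
    rw [hwe, dd_smul]
  have h4 : dd w (dd w H) y = c * (c * dd e (dd e H) y) := by
    rw [h3]
    have : dd w (fun z => c * dd e H z) y = c * dd w (dd e H) y := by
      change fderiv ℝ (fun z => c * dd e H z) y w = c * fderiv ℝ (dd e H) y w
      rw [fderiv_const_mul ((hs.dd e).da hx0)]
      rfl
    rw [this]
    congr 1
    conv_lhs => rw [hwe]
    rw [dd_smul]
  rw [h4, hdiag, ← mul_assoc, ← sq, hc, one_mul, ← hd]
  rfl

lemma one_of_one {p : ℝ} (hp : -2 < p) (hp1 : p < 1) {H : Eu 1 → ℝ} (hH : Dat p H)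
    {x : Eu 1} (hx : ‖x‖ = 1) : H x = 1 := by
  have hs := hH.sm
  have hh := hH.hom
  refine one_of_dd le_rfl hp1 hH ?_ hx
  clear hx x
  intro x v hx
  obtain ⟨b, l, F⟩ := exists_frame hH hx
  set e := b (Fin.succ (0 : Fin 1)) with he
  have hen : ‖e‖ = 1 := b.orthonormal.1 _
  have hxe : ⟪x, e⟫_ℝ = 0 := F.perp 0
  have hex : ⟪e, x⟫_ℝ = 0 := by rw [real_inner_comm, hxe]
  set γ : ℝ → Eu 1 := fun t => cos t • x + sin t • e with hγ
  set τ : ℝ → Eu 1 := fun t => (-sin t) • x + cos t • e with hτ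
  have hγn : ∀ t, ‖γ t‖ = 1 := by
    intro t
    have : ‖γ t‖ ^ 2 = 1 := by
      rw [← real_inner_self_eq_norm_sq]
      simp only [hγ, inner_add_left, inner_add_right, inner_smul_left, inner_smul_right, hxe, hex,
        real_inner_self_eq_norm_sq, hx, hen]
      simp
      nlinarith [sin_sq_add_cos_sq t]
    nlinarith [norm_nonneg (γ t)]
  have hτn : ∀ t, ‖τ t‖ = 1 := by
    intro t
    have : ‖τ t‖ ^ 2 = 1 := by
      rw [← real_inner_self_eq_norm_sq]
      simp only [hτ, inner_add_left, inner_add_right, inner_smul_left, inner_smul_right, hxe, hex,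
        real_inner_self_eq_norm_sq, hx, hen]
      simp
      nlinarith [sin_sq_add_cos_sq t]
    nlinarith [norm_nonneg (τ t)]
  have hγτ : ∀ t, ⟪γ t, τ t⟫_ℝ = 0 := by
    intro t
    simp only [hτ, hγ, inner_add_left, inner_add_right, inner_smul_left, inner_smul_right, hxe, hex,
        real_inner_self_eq_norm_sq, hx, hen]
    simp
    ring
  have hγ0 : ∀ t, γ t ≠ 0 := fun t h => by have := hγn t; simp [h] at this
  have hγd : ∀ t, HasDerivAt γ (τ t) t := fun t =>
    ((hasDerivAt_cos t).smul_const x).add ((hasDerivAt_sin t).smul_const e)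
  have hcomp : ∀ f : Eu 1 → ℝ, Sm f → ∀ t, HasDerivAt (fun s => f (γ s)) (dd (τ t) f (γ t)) t := by
    intro f hf t
    exact (hf.da (hγ0 t)).hasFDerivAt.comp_hasDerivAt t (hγd t)
  have hτlin : ∀ (f : Eu 1 → ℝ) (y : Eu 1) t, dd (τ t) f y = -sin t * dd x f y + cos t * dd e f y := by
    intro f y t
    simp only [hτ, dd_add, dd_smul]
  have hγlin : ∀ (f : Eu 1 → ℝ) (y : Eu 1) t, dd (γ t) f y = cos t * dd x f y + sin t * dd e f y := by
    intro f y t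
    simp only [hγ, dd_add, dd_smul]
  have hzero := ode_const (q := 1 - p) (by linarith) (by linarith) (u := fun t => H (γ t))
    (u' := fun t => dd (τ t) H (γ t)) (hcomp H hs) (fun t => by
      have h1 := ((hasDerivAt_sin t).neg.mul (hcomp _ (hs.dd x) t)).add
        ((hasDerivAt_cos t).mul (hcomp _ (hs.dd e) t))
      have h2 : (fun t => dd (τ t) H (γ t)) = (-sin) * (fun s => dd x H (γ s)) + cos * (fun s => dd e H (γ s)) := by
        ext s
        rw [hτlin]; rfl
      rw [h2]
      refine h1.congr_deriv ?_
      have h3 := tang hH (hγn t) (hτn t) (hγτ t)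
      have h4 := hh.euler hs (hγ0 t)
      have h5 : dd (τ t) (dd (τ t) H) (γ t)
          = -sin t * dd (τ t) (dd x H) (γ t) + cos t * dd (τ t) (dd e H) (γ t) := by
        have h6 : dd (τ t) H = fun y => -sin t * dd x H y + cos t * dd e H y := by
          ext y; rw [hτlin]
        have hdx := (hs.dd x).da (hγ0 t)
        have hde := (hs.dd e).da (hγ0 t)
        conv_lhs => rw [h6]
        change fderiv ℝ (fun y => -sin t * dd x H y + cos t * dd e H y) (γ t) (τ t) = _
        rw [fderiv_fun_add (hdx.const_mul _) (hde.const_mul _), fderiv_const_mul hdx, fderiv_const_mul hde]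
        rfl
      rw [hγlin] at h4
      simp only [Int.cast_one, one_mul] at h4
      rw [show -(1 - p) = p - 1 by ring, ← h3, h5, ← h4]
      simp only [Pi.neg_apply]
      ring) (fun t => hH.pos _ (hγ0 t)) (fun t => by simp [hγ])
  have h7 : dd e H x = 0 := by
    have := hzero 0
    simpa [hτ, hγ] using this
  have h8 : dd x H x = H x := by
    have := hh.euler hs F.x0
    simpa using this
  have h9 : v = ⟪x, v⟫_ℝ • x + ⟪e, v⟫_ℝ • e := by
    have h1 := b.sum_repr' v
    rw [Fin.sum_univ_succ, F.b0] at h1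
    simpa [he] using h1.symm
  conv_lhs => rw [h9]
  rw [dd_add, dd_smul, dd_smul, h7, h8]
  ring

/-- **Uniqueness for `𝒦 = h^{1−p}`, `p ∈ (−n−1, 1)`.** If a smooth, strictly convex
body satisfies `det(A(x)+x⊗x) = h(x)^{p−1}` on `S^n`, then `K` is the closed unit ball. -/
theorem unit_ball_of_Lp_self_similar (n : ℕ) (hn : 1 ≤ n) (p : ℝ)
    (hp : p ∈ Set.Ioo (-(n : ℝ) - 1) 1)
    (K : Set (Eu n)) (hK : IsSmoothConvexBody K)
    (heq : ∀ x : Sph n, rK K (x : Eu n) = sfn K (x : Eu n) ^ (p - 1)) :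
    K = Metric.closedBall (0 : Eu n) 1 ∧ ∀ z : Eu n, sfn K z = ‖z‖ := by
  have hH := dat_of_body hK heq
  have h1 : ∀ x : Eu n, ‖x‖ = 1 → sfn K x = 1 := by
    intro x hx
    rcases hn.eq_or_lt with h | h
    · subst h
      exact one_of_one (by have := hp.1; norm_num at this; linarith) hp.2 hH hx
    · exact one_of_two_le h hp.1 hp.2 hH hx
  have hne : K.Nonempty := hK.interior_nonempty.mono interior_subset
  have h2 : ∀ z : Eu n, sfn K z = ‖z‖ := by
    intro z
    by_cases hz : z = 0
    · subst hz
      simp [sfn, hne]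
    · have hzn : 0 < ‖z‖ := norm_pos_iff.2 hz
      have h3 := h1 (‖z‖⁻¹ • z) (by rw [norm_smul, norm_inv, norm_norm, inv_mul_cancel₀ hzn.ne'])
      rw [sfn_hom K z hz _ (inv_pos.2 hzn)] at h3
      simp only [zpow_one] at h3
      field_simp at h3
      exact h3
  refine ⟨?_, h2⟩
  apply Set.Subset.antisymm
  · intro y hy
    rw [mem_closedBall_zero_iff]
    have h3 : ⟪y, y⟫_ℝ ≤ sfn K y := le_csSup (sfn_bdd hK y) ⟨y, hy, rfl⟩
    rw [h2, real_inner_self_eq_norm_sq] at h3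
    by_contra h
    push Not at h
    nlinarith
  · intro y hy
    rw [mem_closedBall_zero_iff] at hy
    by_contra hyK
    obtain ⟨f, c, hfc, hcy⟩ := geometric_hahn_banach_closed_point hK.convex hK.compact.isClosed hyK
    set a := (InnerProductSpace.toDual ℝ (Eu n)).symm f with ha
    have hfa : ∀ z, f z = ⟪a, z⟫_ℝ := fun z => by rw [ha, InnerProductSpace.toDual_symm_apply]
    have h3 : sfn K a ≤ c := by
      refine csSup_le (hne.image _) ?_
      rintro _ ⟨z, hz, rfl⟩
      have := hfc z hz
      rw [hfa] at this
      exact this.le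
    rw [h2] at h3
    rw [hfa] at hcy
    have h4 := real_inner_le_norm a y
    nlinarith [norm_nonneg a]
end
end

section
/- Let n ≥ 1, let p be a real number with p ≠ −(n+1), and let K be a smooth, strictly convex body in ℝ^{n+1} with positive support function h satisfying det(A(x) + x⊗x) = h(x)^{p−1} for all x ∈ S^n (i.e. dV = h^p dθ). Then for all w₁, w₂ ∈ ℝ^{n+1}: ∫_{S^n} ⟨x, w₁⟩⟨x, w₂⟩ h(x)^p dθ(x) = ((∫_{S^n} h^p dθ)/(n+1))·⟨w₁, w₂⟩; that is, the matrix ∫ x⊗x dV equals ((∫ dV)/(n+1))·Id. -/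
open MeasureTheory Metric Real
open scoped InnerProductSpace ENNReal Topology

noncomputable section

lemma contDiff_of_tsupp {E : Type*} [NormedAddCommGroup E] [NormedSpace ℝ E] {k : WithTop ℕ∞}
    {f : E → ℝ} (h : ∀ x ∈ tsupport f, ContDiffAt ℝ k f x) : ContDiff ℝ k f := by
  rw [contDiff_iff_contDiffAt]
  intro x
  by_cases hx : x ∈ tsupport f
  · exact h x hx
  · exact contDiffAt_const.congr_of_eventuallyEq (notMem_tsupport_iff_eventuallyEq.mp hx)

open Set Function in
/-- Polar coordinates for a function which is a product of radial and angular parts. -/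
lemma polar_prod {n : ℕ} (G : Eu n → ℝ) (a : Sph n → ℝ) (b : ℝ → ℝ)
    (hG : ∀ (x : Sph n) (r : ℝ), 0 < r → G (r • (x : Eu n)) = a x * b r) :
    ∫ x, G x = (∫ x, a x ∂sphMeas n) * ∫ r in Ioi (0 : ℝ), r ^ n * b r := by
  have hd : Module.finrank ℝ (Eu n) - 1 = n := by simp
  calc
    ∫ x, G x = ∫ x : ({(0)}ᶜ : Set (Eu n)), G x.1 ∂((volume : Measure (Eu n)).comap (↑)) := by
      rw [integral_subtype_comap (measurableSet_singleton _).compl fun x ↦ G x,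
        restrict_compl_singleton]
    _ = ∫ x, a x.1 * b x.2 ∂(volume : Measure (Eu n)).toSphere.prod (.volumeIoiPow n) := by
      have := (volume : Measure (Eu n)).measurePreserving_homeomorphUnitSphereProd.integral_comp
        (Homeomorph.measurableEmbedding _) (fun z => a z.1 * b z.2)
      rw [hd] at this
      rw [← this]
      refine integral_congr_ae (Filter.Eventually.of_forall fun x => ?_)
      have hx := hG ((homeomorphUnitSphereProd (Eu n)) x).1 ((homeomorphUnitSphereProd (Eu n)) x).2
        ((homeomorphUnitSphereProd (Eu n)) x).2.2
      simp only []
      rw [← hx]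
      congr 1
      have := (homeomorphUnitSphereProd (Eu n)).symm_apply_apply x
      conv_lhs => rw [← this]
      rw [homeomorphUnitSphereProd_symm_apply_coe]
    _ = (∫ x, a x ∂sphMeas n) * ∫ x : Ioi (0 : ℝ), b x ∂.volumeIoiPow n :=
      integral_prod_mul _ (fun x : Ioi (0 : ℝ) => b x)
    _ = _ := by
      congr 1
      simp only [Measure.volumeIoiPow, ENNReal.ofReal]
      rw [integral_withDensity_eq_integral_smul,
        integral_subtype_comap measurableSet_Ioi fun a ↦ Real.toNNReal (a ^ n) • b a,
        setIntegral_congr_fun measurableSet_Ioi fun x hx ↦ ?_]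
      · rw [NNReal.smul_def, Real.coe_toNNReal _ (pow_nonneg hx.out.le _), smul_eq_mul]
      · exact (measurable_subtype_coe.pow_const _).real_toNNReal

lemma fderiv_homog {n : ℕ} {f : Eu n → ℝ} {m : ℝ}
    (hh : ∀ x : Eu n, x ≠ 0 → ∀ t : ℝ, 0 < t → f (t • x) = t ^ m * f x)
    (x : Eu n) (hx : x ≠ 0) (t : ℝ) (ht : 0 < t) :
    fderiv ℝ f (t • x) = t ^ (m - 1) • fderiv ℝ f x := by
  have h1 : fderiv ℝ (fun y => f (t • y)) x = fderiv ℝ (fun y => t ^ m * f y) x := by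
    apply Filter.EventuallyEq.fderiv_eq
    filter_upwards [isOpen_compl_singleton.mem_nhds hx] with y hy
    exact hh y hy t ht
  rw [fderiv_comp_smul] at h1
  have h2 : fderiv ℝ (fun y => t ^ m * f y) x = t ^ m • fderiv ℝ f x := by
    rw [show (fun y => t ^ m * f y) = (t ^ m) • f from rfl, fderiv_const_smul_field]
    rfl
  rw [h2] at h1
  rw [Real.rpow_sub_one ht.ne', div_eq_inv_mul, mul_smul, ← h1, smul_smul,
    inv_mul_cancel₀ ht.ne', one_smul]

/-- one-dimensional cutoff -/
lemma exists_cutoff : ∃ η : ℝ → ℝ, ContDiff ℝ 1 η ∧ HasCompactSupport η ∧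
    (∀ x ∈ tsupport η, 1 ≤ x) ∧ 0 ≤ η ∧ η 2 ≠ 0 := by
  let b : ContDiffBump (2 : ℝ) := ⟨1/2, 1, by norm_num, by norm_num⟩
  refine ⟨b, b.contDiff, b.hasCompactSupport, ?_, fun x => b.nonneg, ?_⟩
  · intro x hx
    rw [b.tsupport_eq, Metric.mem_closedBall, Real.dist_eq, abs_le] at hx
    have : b.rOut = 1 := rfl
    linarith [hx.1]
  · exact (b.pos_of_mem_ball (by simp [b])).ne'

lemma cutoff_rpow {η : ℝ → ℝ} (h1 : ContDiff ℝ 1 η)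
    (h3 : ∀ x ∈ tsupport η, 1 ≤ x) (s : ℝ) : ContDiff ℝ 1 (fun r => η r * r ^ s) := by
  apply contDiff_of_tsupp
  intro x hx
  have hx1 := h3 x (tsupport_mul_subset_left hx)
  exact h1.contDiffAt.mul (Real.contDiffAt_rpow_const_of_ne (by linarith))

lemma cutoff_moment {η : ℝ → ℝ} (h1 : ContDiff ℝ 1 η) (h2 : HasCompactSupport η)
    (h3 : ∀ x ∈ tsupport η, 1 ≤ x) (h4 : 0 ≤ η) (h5 : η 2 ≠ 0) (n : ℕ) (m : ℝ) :
    (∫ r in Set.Ioi (0:ℝ), r ^ n * (η r * r ^ (m - 1))) ≠ 0 ∧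
    (∫ r in Set.Ioi (0:ℝ), r ^ n * (deriv η r * r ^ m)) =
      -((n + m) * ∫ r in Set.Ioi (0:ℝ), r ^ n * (η r * r ^ (m - 1))) := by
  have hE1 : (∫ r in Set.Ioi (0:ℝ), r ^ n * (η r * r ^ (m - 1))) =
      ∫ r in Set.Ioi (0:ℝ), η r * r ^ (n + m - 1) := by
    refine setIntegral_congr_fun measurableSet_Ioi fun r hr => ?_
    have hr : 0 < r := hr
    have : r ^ ((n:ℝ) + m - 1) = r ^ n * r ^ (m - 1) := by
      rw [add_sub_assoc, Real.rpow_add hr, Real.rpow_natCast]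
    simp only [this]; ring
  have hc := cutoff_rpow h1 h3 (n + m)
  have hc' := cutoff_rpow h1 h3 (n + m - 1)
  have hcs : HasCompactSupport (fun r => η r * r ^ ((n:ℝ) + m)) := h2.mul_right
  have hcs' : HasCompactSupport (fun r => η r * r ^ ((n:ℝ) + m - 1)) := h2.mul_right
  have hz : ∀ r : ℝ, r < 1 → η r = 0 := fun r hr => by
    by_contra h
    exact absurd (h3 r (subset_tsupport _ h)) (by linarith)
  constructor
  · rw [hE1, setIntegral_eq_integral_of_forall_compl_eq_zero]
    · apply ne_of_gt
      apply hc'.continuous.integral_pos_of_hasCompactSupport_nonneg_nonzero hcs' (x := 2)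
      · intro r
        by_cases hr : r < 1
        · simp [hz r hr]
        · exact mul_nonneg (h4 r) (Real.rpow_nonneg (by linarith) _)
      · exact mul_ne_zero h5 (by positivity)
    · intro r hr
      rw [hz r (by simp at hr; linarith), zero_mul]
  · have hI := hcs.integral_Ioi_deriv_eq hc 0
    rw [hz 0 (by norm_num), zero_mul, neg_zero] at hI
    have hder : ∀ r ∈ Set.Ioi (0:ℝ), deriv (fun r => η r * r ^ ((n:ℝ) + m)) r =
        r ^ n * (deriv η r * r ^ m) + (n + m) * (η r * r ^ ((n:ℝ) + m - 1)) := by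
      intro r hr
      have hr : 0 < r := hr
      have e1 := ((h1.differentiable one_ne_zero r).hasDerivAt).mul
        (Real.hasDerivAt_rpow_const (p := (n:ℝ) + m) (Or.inl hr.ne'))
      have := e1.deriv
      rw [show (fun r => η r * r ^ ((n:ℝ) + m)) = η * fun r => r ^ ((n:ℝ) + m) from rfl, this,
        Real.rpow_add hr, Real.rpow_natCast]
      ring
    rw [setIntegral_congr_fun measurableSet_Ioi hder, integral_add, integral_const_mul] at hI
    · rw [hE1]; linarith
    · have : Continuous (fun r => deriv η r * r ^ ((n:ℝ) + m)) := by
        rw [continuous_iff_continuousAt]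
        intro r
        by_cases hr : r < 1
        · have : (fun r => deriv η r * r ^ ((n:ℝ) + m)) =ᶠ[𝓝 r] fun _ => 0 := by
            filter_upwards [Iio_mem_nhds hr] with s hs
            have : deriv η s = 0 := by
              have : η =ᶠ[𝓝 s] fun _ => 0 := by
                filter_upwards [Iio_mem_nhds hs] with s hs using hz s hs
              rw [this.deriv_eq]; simp
            rw [this, zero_mul]
          exact continuousAt_const.congr this.symm
        · exact (h1.continuous_deriv le_rfl).continuousAt.mul
            (Real.continuousAt_rpow_const _ _ (Or.inl (by linarith)))
      have h := (this.integrable_of_hasCompactSupport (μ := volume)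
        (h2.deriv.mul_right)).integrableOn (s := Set.Ioi 0)
      refine h.congr_fun ?_ measurableSet_Ioi
      intro r hr
      have hr : 0 < r := hr
      simp only [Real.rpow_add hr, Real.rpow_natCast]
      ring
    · exact ((hc'.continuous.integrable_of_hasCompactSupport (μ := volume) hcs').const_mul _).integrableOn

/-- Divergence theorem on the sphere for homogeneous functions. -/
lemma sphere_div {n : ℕ} {f : Eu n → ℝ} {m : ℝ} (hf : ContDiffOn ℝ 1 f {(0 : Eu n)}ᶜ)
    (hh : ∀ x : Eu n, x ≠ 0 → ∀ t : ℝ, 0 < t → f (t • x) = t ^ m * f x) (v : Eu n) :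
    ∫ x : Sph n, fderiv ℝ f x v ∂sphMeas n =
      (n + m) * ∫ x : Sph n, f x * ⟪(x : Eu n), v⟫_ℝ ∂sphMeas n := by
  obtain ⟨η, h1, h2, h3, h4, h5⟩ := exists_cutoff
  obtain ⟨hc0, hc⟩ := cutoff_moment h1 h2 h3 h4 h5 n m
  have hfa : ∀ x : Eu n, x ≠ 0 → ContDiffAt ℝ 1 f x := fun x hx =>
    hf.contDiffAt (isOpen_compl_singleton.mem_nhds hx)
  set χ : Eu n → ℝ := fun x => η ‖x‖ with hχ
  have hts : ∀ x ∈ tsupport χ, 1 ≤ ‖x‖ := by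
    intro x hx
    have : tsupport χ ⊆ (fun x => ‖x‖) ⁻¹' (tsupport η) :=
      closure_minimal (fun y hy => subset_tsupport _ hy)
        ((isClosed_tsupport η).preimage continuous_norm)
    exact h3 _ (this hx)
  have hts0 : ∀ x ∈ tsupport χ, x ≠ 0 := fun x hx h => by
    have := hts x hx; rw [h, norm_zero] at this; linarith
  have hχs : HasCompactSupport χ := by
    obtain ⟨R, hR⟩ := (IsCompact.isBounded h2).subset_closedBall 0
    refine HasCompactSupport.intro (isCompact_closedBall (0 : Eu n) R) fun x hx => ?_
    by_contra h
    have := hR (subset_tsupport η h)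
    rw [Metric.mem_closedBall, dist_zero_right, norm_norm] at this
    exact hx (by simpa using this)
  have hχd : ContDiff ℝ 1 χ := contDiff_of_tsupp fun x hx =>
    h1.contDiffAt.comp x (contDiffAt_norm ℝ (hts0 x hx))
  have I1 : Integrable (fun x => fderiv ℝ χ x v * f x) := by
    have hs : HasCompactSupport (fun x => fderiv ℝ χ x v) := hχs.fderiv_apply (𝕜 := ℝ) v
    refine Continuous.integrable_of_hasCompactSupport ?_ hs.mul_right
    rw [← contDiff_zero (𝕜 := ℝ)]
    refine contDiff_of_tsupp fun x hx => ?_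
    have hx0 := hts0 x (tsupport_fderiv_apply_subset ℝ v (tsupport_mul_subset_left hx))
    have := (hχd.continuous_fderiv_apply one_ne_zero).comp (Continuous.prodMk_left v)
    exact (contDiff_zero.2 this).contDiffAt.mul ((hfa x hx0).of_le zero_le_one)
  have I2 : Integrable (fun x => χ x * fderiv ℝ f x v) := by
    refine Continuous.integrable_of_hasCompactSupport ?_ hχs.mul_right
    rw [← contDiff_zero (𝕜 := ℝ)]
    refine contDiff_of_tsupp fun x hx => ?_
    have hx0 := hts0 x (tsupport_mul_subset_left hx)
    exact (hχd.contDiffAt.of_le zero_le_one).mul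
      (((hfa x hx0).fderiv_right (m := 0) (by simp)).clm_apply contDiffAt_const)
  have I3 : Integrable (fun x => χ x * f x) := by
    refine Continuous.integrable_of_hasCompactSupport ?_ hχs.mul_right
    rw [← contDiff_zero (𝕜 := ℝ)]
    refine contDiff_of_tsupp fun x hx => ?_
    have hx0 := hts0 x (tsupport_mul_subset_left hx)
    exact (hχd.contDiffAt.of_le zero_le_one).mul ((hfa x hx0).of_le zero_le_one)
  have key := integral_mul_fderiv_eq_neg_fderiv_mul_of_integrable I1 I2 I3
    (fun x _ => hχd.differentiable one_ne_zero x)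
    (fun x hx => (hfa x (hts0 x hx)).differentiableAt one_ne_zero)
  have hnx : ∀ x : Sph n, ‖(x : Eu n)‖ = 1 := fun x => by simp
  have hx0 : ∀ x : Sph n, (x : Eu n) ≠ 0 := fun x h => by
    have := hnx x; rw [h, norm_zero] at this; linarith
  rw [polar_prod _ (fun x => fderiv ℝ f x v) (fun r => η r * r ^ (m - 1)),
    polar_prod (fun x => fderiv ℝ χ x v * f x) (fun x => f x * ⟪(x : Eu n), v⟫_ℝ)
      (fun r => deriv η r * r ^ m), hc] at key
  · apply mul_right_cancel₀ hc0
    rw [key]; ring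
  · intro x r hr
    rw [hh x (hx0 x) r hr]
    have hrx : r • (x : Eu n) ≠ 0 := smul_ne_zero hr.ne' (hx0 x)
    have hnr : ‖r • (x : Eu n)‖ = r := by rw [norm_smul, hnx, mul_one, Real.norm_of_nonneg hr.le]
    have hd : HasFDerivAt χ (deriv η ‖r • (x : Eu n)‖ • fderiv ℝ (fun y : Eu n => ‖y‖) (r • (x : Eu n))) (r • (x : Eu n)) := by
      exact ((h1.differentiable one_ne_zero _).hasDerivAt).comp_hasFDerivAt _
        ((contDiffAt_norm ℝ hrx).differentiableAt (n := 1) one_ne_zero).hasFDerivAt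
    have hn : fderiv ℝ (fun y : Eu n => ‖y‖) (r • (x : Eu n)) v = ⟪(x : Eu n), v⟫_ℝ := by
      have e1 : HasFDerivAt (fun y : Eu n => ‖y‖ ^ 2) _ (r • (x : Eu n)) :=
        (((contDiffAt_norm ℝ hrx).differentiableAt (n := 1) one_ne_zero).hasFDerivAt).pow 2
      have e2 := (hasStrictFDerivAt_norm_sq (r • (x : Eu n))).hasFDerivAt
      have e3 := congrArg (fun L => L v) (e1.unique e2)
      simp [hnr] at e3
      have : r ≠ 0 := hr.ne'
      field_simp at e3
      linarith
    rw [hd.fderiv, _root_.smul_apply, hn, hnr]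
    simp only [smul_eq_mul]
    ring
  · intro x r hr
    have hnr : ‖r • (x : Eu n)‖ = r := by rw [norm_smul, hnx, mul_one, Real.norm_of_nonneg hr.le]
    rw [fderiv_homog hh x (hx0 x) r hr]
    simp only [hχ, hnr, _root_.smul_apply, smul_eq_mul]
    ring

/-- The determinant as a continuous multilinear map of the rows. -/
def detCM (N : ℕ) : ContinuousMultilinearMap ℝ (fun _ : Fin N => (Fin N → ℝ)) ℝ :=
  { (Matrix.detRowAlternating : (Fin N → ℝ) [⋀^Fin N]→ₗ[ℝ] ℝ).toMultilinearMap with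
    cont := Continuous.matrix_det (A := fun x : Fin N → Fin N → ℝ => (x : Matrix _ _ ℝ)) continuous_id }

lemma detCM_apply (N : ℕ) (M : Fin N → Fin N → ℝ) : detCM N M = Matrix.det (M : Matrix _ _ ℝ) := rfl

/-- Derivative matrix. -/
def jac {n : ℕ} (g : Fin (n + 1) → Eu n → ℝ) (x : Eu n) : Matrix (Fin (n + 1)) (Fin (n + 1)) ℝ :=
  Matrix.of fun k i => fderiv ℝ (g k) x (EuclideanSpace.single i 1)

lemma contDiff_det (N : ℕ) {k : WithTop ℕ∞} :
    ContDiff ℝ k (fun M : Fin N → Fin N → ℝ => Matrix.det (Matrix.of M)) :=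
  (detCM N).contDiff

/-- Piola identity. -/
lemma piola {n : ℕ} (g : Fin (n + 1) → Eu n → ℝ) (x : Eu n)
    (hg : ∀ k, ContDiffAt ℝ 2 (g k) x) (j : Fin (n + 1)) :
    ∑ i, fderiv ℝ (fun y => (jac g y).adjugate i j) x (EuclideanSpace.single i 1) = 0 := by
  set e : Fin (n + 1) → Eu n := fun i => EuclideanSpace.single i 1 with he
  -- second derivatives
  have hd : ∀ k i, HasFDerivAt (fun y => fderiv ℝ (g k) y (e i))
      ((ContinuousLinearMap.apply ℝ ℝ (e i)) ∘L (fderiv ℝ (fderiv ℝ (g k)) x)) x := by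
    intro k i
    have h1 : DifferentiableAt ℝ (fderiv ℝ (g k)) x :=
      ((hg k).fderiv_right (m := 1) (by norm_num)).differentiableAt one_ne_zero
    exact (ContinuousLinearMap.apply ℝ ℝ (e i)).hasFDerivAt.comp x h1.hasFDerivAt
  set H : Fin (n + 1) → Fin (n + 1) → Fin (n + 1) → ℝ :=
    fun k i l => fderiv ℝ (fderiv ℝ (g k)) x (e i) (e l) with hH
  have hsymm : ∀ k i l, H k i l = H k l i := by
    intro k i l
    have := (hg k).isSymmSndFDerivAt (by simp)
    exact this (e i) (e l)
  set M := jac g x with hM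
  have hterm : ∀ i, fderiv ℝ (fun y => (jac g y).adjugate i j) x (e i) =
      ∑ r, if r = j then 0 else
        ∑ l, H r i l * ((M.updateRow j (Pi.single i 1)).updateRow r (Pi.single l 1)).det := by
    intro i
    have hrow : ∀ r, HasFDerivAt
        (fun y => (((jac g y).updateRow j (Pi.single i 1)) r : Fin (n + 1) → ℝ))
        (if r = j then 0 else ContinuousLinearMap.pi fun l =>
          ((ContinuousLinearMap.apply ℝ ℝ (e l)) ∘L (fderiv ℝ (fderiv ℝ (g r)) x))) x := by
      intro r
      by_cases hr : r = j
      · subst hr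
        simp only [Matrix.updateRow_self, if_true]
        exact hasFDerivAt_const _ _
      · simp only [Matrix.updateRow_ne hr, if_neg hr]
        rw [hasFDerivAt_pi]
        intro l
        exact hd r l
    have h := HasFDerivAt.multilinear_comp (f := detCM (n + 1)) hrow
    have h2 : (fun y => (jac g y).adjugate i j) = fun y => detCM (n + 1)
        (fun r => ((jac g y).updateRow j (Pi.single i 1)) r) := by
      funext y
      rw [Matrix.adjugate_apply]; rfl
    rw [h2, h.fderiv]
    rw [_root_.sum_apply]
    refine Finset.sum_congr rfl fun r _ => ?_
    rw [ContinuousLinearMap.comp_apply]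
    by_cases hr : r = j
    · simp only [if_pos hr]
      rw [_root_.zero_apply, map_zero]
    · simp only [if_neg hr]
      have hv : (ContinuousLinearMap.pi fun l =>
          ((ContinuousLinearMap.apply ℝ ℝ (e l)) ∘L (fderiv ℝ (fderiv ℝ (g r)) x))) (e i) =
          ∑ l, H r i l • (Pi.single l 1 : Fin (n + 1) → ℝ) := by
        ext l
        simp [Finset.sum_apply, Pi.single_apply, hH]
      rw [hv, map_sum]
      refine Finset.sum_congr rfl fun l _ => ?_
      rw [map_smul, smul_eq_mul]
      rfl
  refine (Finset.sum_congr rfl fun i _ => hterm i).trans ?_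
  rw [Finset.sum_comm]
  refine Finset.sum_eq_zero fun r _ => ?_
  by_cases hr : r = j
  · simp [hr]
  · simp only [if_neg hr]
    set S := ∑ i, ∑ l, H r i l *
      ((M.updateRow j (Pi.single i 1)).updateRow r (Pi.single l 1)).det with hS
    have hswap : ∀ i l, ((M.updateRow j (Pi.single i 1)).updateRow r (Pi.single l 1)).det =
        - ((M.updateRow j (Pi.single l 1)).updateRow r (Pi.single i 1)).det := by
      intro i l
      have hjr : j ≠ r := fun h => hr h.symm
      have := Matrix.det_permute (Equiv.swap j r)
        ((M.updateRow j (Pi.single l 1)).updateRow r (Pi.single i 1))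
      rw [Equiv.Perm.sign_swap hjr] at this
      simp only [Units.val_neg, Units.val_one, Int.cast_neg, Int.cast_one, neg_mul, one_mul] at this
      rw [← this]
      congr 1
      ext a b
      simp only [Matrix.submatrix_apply, id]
      by_cases ha : a = r
      · subst ha
        simp [Matrix.updateRow_apply, hjr]
      · by_cases hb : a = j
        · subst hb
          simp [Matrix.updateRow_apply, hjr]
        · simp [Matrix.updateRow_apply, Equiv.swap_apply_of_ne_of_ne hb ha, ha, hb]
    have : S = -S := by
      conv_lhs => rw [hS, Finset.sum_comm]
      rw [hS, ← Finset.sum_neg_distrib]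
      refine Finset.sum_congr rfl fun l _ => ?_
      rw [← Finset.sum_neg_distrib]
      refine Finset.sum_congr rfl fun i _ => ?_
      rw [hsymm r i l, hswap i l]; ring
    linarith

open Matrix in
lemma mat_facts {N : ℕ} (A : Matrix (Fin N) (Fin N) ℝ) (u x : Fin N → ℝ) (h σ : ℝ)
    (hA : Aᵀ = A) (hAx : A *ᵥ x = 0) (hxx : x ⬝ᵥ x = 1) (hu : u ⬝ᵥ x = h) (hh : h ≠ 0)
    (hσ : σ ≠ 0) (hdet : (A + vecMulVec x x).det = σ) :
    (A + vecMulVec u x).det = h * σ ∧ x ᵥ* (A + vecMulVec u x).adjugate = σ • x := by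
  have hxA : x ᵥ* A = 0 := by rw [← hA, vecMul_transpose, hAx]
  have hxB : x ᵥ* (A + vecMulVec x x) = x := by
    rw [vecMul_add, hxA, zero_add, vecMul_vecMulVec, hxx, one_smul]
  have hM : A + vecMulVec u x = (1 + vecMulVec (u - x) x) * (A + vecMulVec x x) := by
    rw [add_mul, one_mul, vecMulVec_mul, hxB, sub_vecMulVec]
    abel
  have hd1 : (1 + vecMulVec (u - x) x).det = h := by
    rw [vecMulVec_eq Unit, det_one_add_replicateCol_mul_replicateRow, dotProduct_sub, hxx,
      dotProduct_comm, hu]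
    ring
  have hD : (A + vecMulVec u x).det = h * σ := by rw [hM, det_mul, hd1, hdet]
  refine ⟨hD, ?_⟩
  have hxM : (σ • x) ᵥ* (A + vecMulVec u x) = (h * σ) • x := by
    rw [smul_vecMul, vecMul_add, hxA, zero_add, vecMul_vecMulVec, dotProduct_comm, hu, smul_smul,
      mul_comm]
  have h1 := congrArg (fun z => z ᵥ* (A + vecMulVec u x).adjugate) hxM
  simp only [vecMul_vecMul, mul_adjugate, hD] at h1
  rw [vecMul_smul, vecMul_one, smul_vecMul] at h1
  exact (smul_right_injective _ (mul_ne_zero hh hσ) h1).symm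

lemma euler {n : ℕ} {f : Eu n → ℝ} {m : ℝ} {x : Eu n} (hx : x ≠ 0) (hf : DifferentiableAt ℝ f x)
    (hh : ∀ x : Eu n, x ≠ 0 → ∀ t : ℝ, 0 < t → f (t • x) = t ^ m * f x) :
    fderiv ℝ f x x = m * f x := by
  have hd : HasDerivAt (fun t : ℝ => t • x) x 1 := by
    simpa using (hasDerivAt_id (1 : ℝ)).smul_const x
  have hf' : HasFDerivAt f (fderiv ℝ f x) ((1 : ℝ) • x) := by rw [one_smul]; exact hf.hasFDerivAt
  have h1 : HasDerivAt (fun t : ℝ => f (t • x)) (fderiv ℝ f x x) 1 := hf'.comp_hasDerivAt 1 hd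
  have h2 : HasDerivAt (fun t : ℝ => t ^ m * f x) (m * 1 ^ (m - 1) * f x) 1 :=
    (Real.hasDerivAt_rpow_const (Or.inl one_ne_zero)).mul_const _
  have h3 : (fun t : ℝ => f (t • x)) =ᶠ[𝓝 1] fun t => t ^ m * f x := by
    filter_upwards [Ioi_mem_nhds zero_lt_one] with t ht using hh x hx t ht
  have := h1.unique (h2.congr_of_eventuallyEq h3)
  simpa using this

lemma sph_integrable {n : ℕ} {F : Eu n → ℝ} (hF : ContinuousOn F {(0 : Eu n)}ᶜ) :
    Integrable (fun x : Sph n => F x) (sphMeas n) := by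
  have : IsFiniteMeasure (sphMeas n) := by unfold sphMeas; infer_instance
  have hc : Continuous (fun x : Sph n => F x) := by
    refine hF.comp_continuous continuous_subtype_val fun x => ?_
    have : ‖(x : Eu n)‖ = 1 := by simp
    intro h
    rw [Set.mem_singleton_iff.1 h, norm_zero] at this
    linarith
  rw [← integrableOn_univ]
  exact hc.continuousOn.integrableOn_compact isCompact_univ

lemma sphere_div_sum {n : ℕ} {f : Fin (n + 1) → Eu n → ℝ} {m : ℝ}
    (hf : ∀ i, ContDiffOn ℝ 1 (f i) {(0 : Eu n)}ᶜ)
    (hh : ∀ i, ∀ x : Eu n, x ≠ 0 → ∀ t : ℝ, 0 < t → f i (t • x) = t ^ m * f i x) :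
    ∫ x : Sph n, ∑ i, fderiv ℝ (f i) x (EuclideanSpace.single i 1) ∂sphMeas n =
      (n + m) * ∫ x : Sph n, ∑ i, f i x * (x : Eu n) i ∂sphMeas n := by
  rw [integral_finsetSum, integral_finsetSum, Finset.mul_sum]
  · refine Finset.sum_congr rfl fun i _ => ?_
    rw [sphere_div (hf i) (hh i)]
    simp [EuclideanSpace.inner_single_right]
  · intro i _
    refine sph_integrable (F := fun x => f i x * x i) ?_
    exact (hf i).continuousOn.mul (by fun_prop)
  · intro i _
    refine sph_integrable (F := fun x => fderiv ℝ (f i) x (EuclideanSpace.single i 1)) ?_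
    exact ((hf i).continuousOn_fderiv_of_isOpen isOpen_compl_singleton le_rfl).clm_apply
      continuousOn_const

open Matrix in
lemma contDiffAt_adj {n : ℕ} {g : Fin (n + 1) → Eu n → ℝ} {x : Eu n}
    (hg : ∀ k, ContDiffAt ℝ 2 (g k) x) (i j : Fin (n + 1)) :
    ContDiffAt ℝ 1 (fun y => (jac g y).adjugate i j) x := by
  have h2 : (fun y => (jac g y).adjugate i j) = (detCM (n + 1)) ∘ fun y =>
      (fun r => ((jac g y).updateRow j (Pi.single i 1)) r) := by
    funext y
    rw [Matrix.adjugate_apply]; rfl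
  rw [h2]
  refine (detCM (n + 1)).contDiff.contDiffAt.comp x ?_
  rw [contDiffAt_pi]
  intro r
  rw [contDiffAt_pi]
  intro l
  by_cases hr : r = j
  · subst hr
    simp only [Matrix.updateRow_self]
    exact contDiffAt_const
  · simp only [Matrix.updateRow_ne hr]
    exact ((hg r).fderiv_right (m := 1) (by norm_num)).clm_apply contDiffAt_const

open Matrix in
/-- Divergence of the cofactor field. -/
lemma div_cof {n : ℕ} {g : Fin (n + 1) → Eu n → ℝ} {x : Eu n}
    (hg : ∀ k, ContDiffAt ℝ 2 (g k) x) (a b : Fin (n + 1) → ℝ) :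
    ∑ i, fderiv ℝ (fun y => (∑ k, b k * g k y) * ((jac g y).adjugate *ᵥ a) i) x
      (EuclideanSpace.single i 1) = (jac g x).det * (b ⬝ᵥ a) := by
  have hgd : ∀ k, HasFDerivAt (g k) (fderiv ℝ (g k) x) x := fun k =>
    ((hg k).differentiableAt two_ne_zero).hasFDerivAt
  have hterm : ∀ i, fderiv ℝ (fun y => (∑ k, b k * g k y) * ((jac g y).adjugate *ᵥ a) i) x
      (EuclideanSpace.single i 1) = (b ᵥ* jac g x) i * ((jac g x).adjugate *ᵥ a) i +
      (∑ k, b k * g k x) * ∑ j, a j * 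
        fderiv ℝ (fun y => (jac g y).adjugate i j) x (EuclideanSpace.single i 1) := by
    intro i
    have h1 : HasFDerivAt (fun y => ∑ k, b k * g k y) (∑ k, b k • fderiv ℝ (g k) x) x :=
      HasFDerivAt.fun_sum fun k _ => (hgd k).const_mul (b k)
    have h2 : HasFDerivAt (fun y => ((jac g y).adjugate *ᵥ a) i)
        (∑ j, a j • fderiv ℝ (fun y => (jac g y).adjugate i j) x) x := by
      simp only [mulVec, dotProduct]
      refine HasFDerivAt.fun_sum fun j _ => ?_
      exact (((contDiffAt_adj hg i j).differentiableAt one_ne_zero).hasFDerivAt).mul_const (a j)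
    rw [(h1.fun_mul h2).fderiv]
    simp only [_root_.add_apply, _root_.smul_apply, _root_.sum_apply, smul_eq_mul, vecMul,
      dotProduct, jac, Matrix.of_apply]
    ring
  rw [Finset.sum_congr rfl fun i _ => hterm i, Finset.sum_add_distrib, ← Finset.mul_sum,
    Finset.sum_comm]
  have hz : ∀ j, ∑ i, a j *
      fderiv ℝ (fun y => (jac g y).adjugate i j) x (EuclideanSpace.single i 1) = 0 := by
    intro j
    rw [← Finset.mul_sum, piola g x hg j, mul_zero]
  rw [Finset.sum_eq_zero fun j _ => hz j, mul_zero, add_zero]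
  change (b ᵥ* jac g x) ⬝ᵥ ((jac g x).adjugate *ᵥ a) = _
  rw [dotProduct_mulVec, vecMul_vecMul, mul_adjugate, vecMul_smul, vecMul_one, smul_dotProduct,
    smul_eq_mul]

lemma sfn_homog {n : ℕ} (K : Set (Eu n)) (x : Eu n) (t : ℝ) (ht : 0 < t) :
    sfn K (t • x) = t ^ (1 : ℝ) * sfn K x := by
  unfold sfn
  rw [Real.rpow_one, ← smul_eq_mul, ← Real.sSup_smul_of_nonneg ht.le]
  congr 1
  rw [← Set.image_smul, Set.image_image]
  simp [inner_smul_left]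

lemma sph_ne_zero {n : ℕ} (x : Sph n) : (x : Eu n) ≠ 0 := by
  intro h
  have : ‖(x : Eu n)‖ = 1 := by simp
  rw [h, norm_zero] at this
  linarith

lemma sfn_pos {n : ℕ} {K : Set (Eu n)} (hK : IsSmoothConvexBody K) (x : Eu n) (hx : x ≠ 0) :
    0 < sfn K x := by
  have hnx : 0 < ‖x‖ := norm_pos_iff.2 hx
  have h1 : x = ‖x‖ • (‖x‖⁻¹ • x) := by rw [smul_smul, mul_inv_cancel₀ hnx.ne', one_smul]
  have h2 : ‖x‖⁻¹ • x ∈ Metric.sphere (0 : Eu n) 1 := by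
    simp [norm_smul, hnx.ne']
  rw [h1, sfn_homog K _ _ hnx, Real.rpow_one]
  exact mul_pos hnx (hK.pos ⟨_, h2⟩)

lemma sfn_smooth {n : ℕ} {K : Set (Eu n)} (hK : IsSmoothConvexBody K) (x : Eu n) (hx : x ≠ 0)
    (k : ℕ) : ContDiffAt ℝ k (sfn K) x :=
  (hK.smooth.contDiffAt (isOpen_compl_singleton.mem_nhds hx)).of_le (by exact_mod_cast le_top)

/-- The field `|y| ∂ₖ h`. -/
def gfield {n : ℕ} (K : Set (Eu n)) (k : Fin (n + 1)) (y : Eu n) : ℝ :=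
  ‖y‖ * fderiv ℝ (sfn K) y (EuclideanSpace.single k 1)

lemma du_smooth {n : ℕ} {K : Set (Eu n)} (hK : IsSmoothConvexBody K) (k : Fin (n + 1)) (x : Eu n)
    (hx : x ≠ 0) :
    ContDiffAt ℝ 2 (fun y => fderiv ℝ (sfn K) y (EuclideanSpace.single k 1)) x :=
  ((sfn_smooth hK x hx 3).fderiv_right (m := 2) (by norm_num)).clm_apply contDiffAt_const

lemma du_homog {n : ℕ} (K : Set (Eu n)) (k : Fin (n + 1)) (x : Eu n)
    (hx : x ≠ 0) (t : ℝ) (ht : 0 < t) :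
    fderiv ℝ (sfn K) (t • x) (EuclideanSpace.single k 1) =
      t ^ (0 : ℝ) * fderiv ℝ (sfn K) x (EuclideanSpace.single k 1) := by
  rw [fderiv_homog (fun x _ t ht => sfn_homog K x t ht) x hx t ht]
  simp

lemma gfield_smooth {n : ℕ} {K : Set (Eu n)} (hK : IsSmoothConvexBody K) (k : Fin (n + 1))
    (x : Eu n) (hx : x ≠ 0) : ContDiffAt ℝ 2 (gfield K k) x :=
  (contDiffAt_norm ℝ hx).mul (du_smooth hK k x hx)

lemma gfield_homog {n : ℕ} (K : Set (Eu n)) (k : Fin (n + 1)) (x : Eu n)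
    (hx : x ≠ 0) (t : ℝ) (ht : 0 < t) : gfield K k (t • x) = t ^ (1 : ℝ) * gfield K k x := by
  unfold gfield
  rw [du_homog K k x hx t ht, norm_smul, Real.norm_of_nonneg ht.le]
  simp; ring

/-- The Hessian matrix. -/
def hessM {n : ℕ} (K : Set (Eu n)) (x : Eu n) : Matrix (Fin (n + 1)) (Fin (n + 1)) ℝ :=
  jac (fun k y => fderiv ℝ (sfn K) y (EuclideanSpace.single k 1)) x

lemma eu_sum {n : ℕ} (x : Eu n) : x = ∑ i, x i • (EuclideanSpace.single i (1 : ℝ) : Eu n) := by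
  ext j
  simp [Finset.sum_apply, Pi.single_apply]

lemma hessM_symm {n : ℕ} {K : Set (Eu n)} (hK : IsSmoothConvexBody K) (x : Eu n) (hx : x ≠ 0) :
    (hessM K x).transpose = hessM K x := by
  ext k i
  have hd : DifferentiableAt ℝ (fderiv ℝ (sfn K)) x :=
    ((sfn_smooth hK x hx 2).fderiv_right (m := 1) (by norm_num)).differentiableAt one_ne_zero
  have h1 : ∀ k i, hessM K x k i = fderiv ℝ (fderiv ℝ (sfn K)) x (EuclideanSpace.single i 1)
      (EuclideanSpace.single k 1) := by
    intro k i
    have := (ContinuousLinearMap.apply ℝ ℝ (EuclideanSpace.single k 1 : Eu n)).hasFDerivAt.comp x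
      hd.hasFDerivAt
    have h2 : fderiv ℝ (fun y => fderiv ℝ (sfn K) y (EuclideanSpace.single k 1)) x = _ :=
      this.fderiv
    simp only [hessM, jac, Matrix.of_apply]
    rw [h2]; rfl
  rw [Matrix.transpose_apply, h1, h1]
  exact ((sfn_smooth hK x hx 2).isSymmSndFDerivAt (by simp)) _ _

open Matrix in
lemma hessM_mulVec {n : ℕ} {K : Set (Eu n)} (hK : IsSmoothConvexBody K) (x : Eu n) (hx : x ≠ 0) :
    hessM K x *ᵥ (x : Fin (n + 1) → ℝ) = 0 := by
  ext k
  have h := euler hx ((du_smooth hK k x hx).differentiableAt two_ne_zero) (du_homog K k)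
  rw [zero_mul] at h
  rw [Pi.zero_apply, ← h]
  have hs : ∀ L : Eu n →L[ℝ] ℝ, L x = ∑ i, x i * L (EuclideanSpace.single i 1) := by
    intro L
    conv_lhs => rw [eu_sum x]
    rw [map_sum]
    simp
  rw [hs]
  simp only [mulVec, dotProduct, hessM, jac, Matrix.of_apply]
  refine Finset.sum_congr rfl fun i _ => ?_
  ring

lemma grad_apply {n : ℕ} (K : Set (Eu n)) (y : Eu n) (k : Fin (n + 1)) :
    gradient (sfn K) y k = fderiv ℝ (sfn K) y (EuclideanSpace.single k 1) := by
  have : ⟪gradient (sfn K) y, (EuclideanSpace.single k 1 : Eu n)⟫_ℝ = 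
      fderiv ℝ (sfn K) y (EuclideanSpace.single k 1) := by
    unfold gradient
    rw [InnerProductSpace.toDual_symm_apply]
  rw [← this, EuclideanSpace.inner_single_right]
  simp

lemma rK_eq {n : ℕ} {K : Set (Eu n)} (hK : IsSmoothConvexBody K) (x : Eu n) (hx : x ≠ 0) :
    (hessM K x + Matrix.vecMulVec x x).det = rK K x := by
  unfold rK
  rw [← LinearMap.det_toMatrix (EuclideanSpace.basisFun (Fin (n + 1)) ℝ).toBasis]
  congr 1
  ext k i
  rw [LinearMap.toMatrix_apply]
  have hd : DifferentiableAt ℝ (fderiv ℝ (sfn K)) x :=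
    ((sfn_smooth hK x hx 2).fderiv_right (m := 1) (by norm_num)).differentiableAt one_ne_zero
  have hg : DifferentiableAt ℝ (gradient (sfn K)) x :=
    ((InnerProductSpace.toDual ℝ (Eu n)).symm.toContinuousLinearEquiv.differentiableAt).comp x hd
  have h2 := (EuclideanSpace.proj (𝕜 := ℝ) k).hasFDerivAt.comp x hg.hasFDerivAt
  have h3 : (fun y => fderiv ℝ (sfn K) y (EuclideanSpace.single k 1)) =
      (EuclideanSpace.proj (𝕜 := ℝ) k) ∘ gradient (sfn K) := by
    funext y
    exact (grad_apply K y k).symm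
  have h4 : hessM K x k i = hessA K x (EuclideanSpace.single i 1) k := by
    simp only [hessM, jac, Matrix.of_apply]
    rw [h3, h2.fderiv]
    rfl
  rw [Matrix.add_apply, h4]
  simp [tens, Matrix.vecMulVec_apply, EuclideanSpace.inner_single_right]
  ring

open Matrix in
lemma jac_gfield {n : ℕ} {K : Set (Eu n)} (hK : IsSmoothConvexBody K) (x : Sph n) :
    jac (gfield K) x = hessM K x + vecMulVec
      (fun k => fderiv ℝ (sfn K) x (EuclideanSpace.single k 1)) (x : Eu n) := by
  have hx := sph_ne_zero x
  have hnx : ‖(x : Eu n)‖ = 1 := by simp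
  ext k i
  have hn : HasFDerivAt (fun y : Eu n => ‖y‖) (fderiv ℝ (fun y : Eu n => ‖y‖) x) (x : Eu n) :=
    ((contDiffAt_norm ℝ hx).differentiableAt (n := 1) one_ne_zero).hasFDerivAt
  have hnv : fderiv ℝ (fun y : Eu n => ‖y‖) x (EuclideanSpace.single i 1) = (x : Eu n) i := by
    have e1 : HasFDerivAt (fun y : Eu n => ‖y‖ ^ 2) _ (x : Eu n) := hn.pow 2
    have e2 := (hasStrictFDerivAt_norm_sq (x : Eu n)).hasFDerivAt
    have e3 := congrArg (fun L => L (EuclideanSpace.single i 1)) (e1.unique e2)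
    simp [EuclideanSpace.inner_single_right] at e3
    linarith
  have h := hn.fun_mul ((du_smooth hK k x hx).differentiableAt two_ne_zero).hasFDerivAt
  have h' : fderiv ℝ (gfield K k) x = _ := h.fderiv
  simp only [jac, hessM, Matrix.of_apply, Matrix.add_apply, vecMulVec_apply]
  rw [h']
  simp only [_root_.add_apply, _root_.smul_apply, smul_eq_mul, hnv, hnx, one_mul]

open Matrix in
/-- The Minkowski-type identity. -/
lemma minkowski {n : ℕ} {K : Set (Eu n)} (hK : IsSmoothConvexBody K)
    (hr : ∀ x : Sph n, rK K x ≠ 0) (a b : Eu n) :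
    ∫ x : Sph n, sfn K x * rK K x * ⟪a, b⟫_ℝ ∂sphMeas n =
      (n + 1) * ∫ x : Sph n, fderiv ℝ (sfn K) x b * (rK K x * ⟪(x : Eu n), a⟫_ℝ) ∂sphMeas n := by
  have hdot : ∀ a b : Eu n, ⟪a, b⟫_ℝ = (b : Fin (n + 1) → ℝ) ⬝ᵥ (a : Fin (n + 1) → ℝ) := by
    intro a b
    simp [PiLp.inner_apply, dotProduct]
  have hfb : ∀ x b : Eu n, fderiv ℝ (sfn K) x b =
      ∑ k, b k * fderiv ℝ (sfn K) x (EuclideanSpace.single k 1) := by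
    intro x b
    conv_lhs => rw [eu_sum b]
    rw [map_sum]
    simp
  have hfacts : ∀ x : Sph n, (jac (gfield K) x).det = sfn K x * rK K x ∧
      (x : Eu n) ᵥ* (jac (gfield K) x).adjugate = rK K x • (x : Fin (n + 1) → ℝ) := by
    intro x
    have hx := sph_ne_zero x
    rw [jac_gfield hK x]
    refine mat_facts _ _ _ _ _ (hessM_symm hK x hx) (hessM_mulVec hK x hx) ?_ ?_
      (sfn_pos hK x hx).ne' (hr x) (rK_eq hK x hx)
    · rw [← hdot, real_inner_self_eq_norm_sq]; simp
    · have := euler hx ((sfn_smooth hK x hx 1).differentiableAt (by simp))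
        (fun x _ t ht => sfn_homog K x t ht)
      rw [one_mul, hfb] at this
      rw [← this, dotProduct_comm]; rfl
  have key := sphere_div_sum (n := n) (m := 1)
    (f := fun i y => (∑ k, b k * gfield K k y) * ((jac (gfield K) y).adjugate *ᵥ (a : Fin (n + 1) → ℝ)) i)
    (fun i => by
      intro x hx
      have hx : x ≠ 0 := hx
      refine ContDiffAt.contDiffWithinAt ?_
      refine ContDiffAt.mul ?_ ?_
      · refine ContDiffAt.sum fun k _ => ?_
        exact contDiffAt_const.mul ((gfield_smooth hK k x hx).of_le (by norm_num))
      · simp only [mulVec, dotProduct]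
        refine ContDiffAt.sum fun j _ => ?_
        exact (contDiffAt_adj (fun k => gfield_smooth hK k x hx) i j).mul contDiffAt_const)
    (fun i x hx t ht => by
      have hj : jac (gfield K) (t • x) = jac (gfield K) x := by
        ext k l
        simp only [jac, Matrix.of_apply]
        rw [fderiv_homog (gfield_homog K k) x hx t ht]
        simp
      simp only [hj, gfield_homog K _ x hx t ht]
      rw [← mul_assoc, Finset.mul_sum]
      congr 1
      refine Finset.sum_congr rfl fun k _ => ?_
      ring)
  rw [integral_congr_ae (Filter.Eventually.of_forall fun x : Sph n =>
    div_cof (fun k => gfield_smooth hK k x (sph_ne_zero x)) a b)] at key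
  have e1 : ∀ x : Sph n, (jac (gfield K) x).det * ((b : Fin (n + 1) → ℝ) ⬝ᵥ a) =
      sfn K x * rK K x * ⟪a, b⟫_ℝ := fun x => by rw [(hfacts x).1, hdot]
  have e2 : ∀ x : Sph n, (∑ i, (∑ k, b k * gfield K k x) *
      ((jac (gfield K) x).adjugate *ᵥ (a : Fin (n + 1) → ℝ)) i * (x : Eu n) i) =
      fderiv ℝ (sfn K) x b * (rK K x * ⟪(x : Eu n), a⟫_ℝ) := by
    intro x
    have h1 : (∑ k, b k * gfield K k x) = fderiv ℝ (sfn K) x b := by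
      rw [hfb]; simp [gfield]
    have h2 : ∑ i, ((jac (gfield K) x).adjugate *ᵥ (a : Fin (n + 1) → ℝ)) i * (x : Eu n) i =
        rK K x * ⟪(x : Eu n), a⟫_ℝ := by
      change ((jac (gfield K) x).adjugate *ᵥ (a : Fin (n + 1) → ℝ)) ⬝ᵥ (x : Eu n) = _
      rw [dotProduct_comm, dotProduct_mulVec, (hfacts x).2, smul_dotProduct, smul_eq_mul, hdot,
        dotProduct_comm]
    simp only [mul_assoc, ← Finset.mul_sum]
    rw [h1, h2]
  simp only [e1, e2] at key
  exact key

/-- If `dV = h^p dθ` with `p ≠ −(n+1)`, then `∫ x ⊗ x dV = ((∫ dV)/(n+1)) Id`, i.e.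
`∫ ⟨x,w₁⟩⟨x,w₂⟩ h^p dθ = ((∫ h^p dθ)/(n+1)) ⟨w₁,w₂⟩` for all `w₁, w₂`. -/
theorem isotropic_identity (n : ℕ) (hn : 1 ≤ n) (p : ℝ) (hp : p ≠ -((n : ℝ) + 1))
    (K : Set (Eu n)) (hK : IsSmoothConvexBody K)
    (heq : ∀ x : Sph n, rK K (x : Eu n) = sfn K (x : Eu n) ^ (p - 1)) :
    ∀ w₁ w₂ : Eu n,
      ∫ x : Sph n, ⟪(x : Eu n), w₁⟫_ℝ * ⟪(x : Eu n), w₂⟫_ℝ * sfn K (x : Eu n) ^ p ∂sphMeas n =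
        (∫ x : Sph n, sfn K (x : Eu n) ^ p ∂sphMeas n) / ((n : ℝ) + 1) * ⟪w₁, w₂⟫_ℝ := by

  intro w₁ w₂
  have hr : ∀ x : Sph n, rK K x ≠ 0 := fun x => by
    rw [heq x]; exact (Real.rpow_pos_of_pos (hK.pos x) _).ne'
  have hM := minkowski hK hr w₁ w₂
  have hc : ∀ x : Eu n, x ≠ 0 → ContDiffAt ℝ 1 (fun y => sfn K y ^ p) x := fun x hx =>
    (sfn_smooth hK x hx 1).rpow_const_of_ne (sfn_pos hK x hx).ne'
  have hD := sphere_div (n := n) (f := fun y => sfn K y ^ p * ⟪y, w₁⟫_ℝ) (m := p + 1)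
    (fun x hx => ((hc x hx).mul (contDiffAt_id.inner ℝ contDiffAt_const)).contDiffWithinAt)
    (fun x hx t ht => by
      rw [sfn_homog K x t ht, Real.rpow_one, Real.mul_rpow ht.le (sfn_pos hK x hx).le,
        Real.rpow_add_one ht.ne', inner_smul_left]
      simp; ring) w₂
  have hder : ∀ x : Sph n, fderiv ℝ (fun y => sfn K y ^ p * ⟪y, w₁⟫_ℝ) (x : Eu n) w₂ =
      p * (fderiv ℝ (sfn K) x w₂ * (rK K x * ⟪(x : Eu n), w₁⟫_ℝ)) +
        sfn K x ^ p * ⟪w₁, w₂⟫_ℝ := by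
    intro x
    have hx := sph_ne_zero x
    have h1 := ((sfn_smooth hK x hx 1).differentiableAt (by simp)).hasFDerivAt.rpow_const
      (p := p) (Or.inl (sfn_pos hK x hx).ne')
    have h2 : HasFDerivAt (fun y : Eu n => ⟪y, w₁⟫_ℝ) (innerSL ℝ w₁) (x : Eu n) := by
      have := (innerSL ℝ w₁).hasFDerivAt (x := (x : Eu n))
      refine this.congr_of_eventuallyEq (Filter.Eventually.of_forall fun y => ?_)
      simp [real_inner_comm]
    rw [(h1.fun_mul h2).fderiv, heq x]
    simp only [_root_.add_apply, _root_.smul_apply, smul_eq_mul, innerSL_apply_apply]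
    ring
  have hI1 : Integrable (fun x : Sph n =>
      p * (fderiv ℝ (sfn K) x w₂ * (rK K x * ⟪(x : Eu n), w₁⟫_ℝ))) (sphMeas n) := by
    simp only [heq]
    refine sph_integrable (F := fun x =>
      p * (fderiv ℝ (sfn K) x w₂ * (sfn K x ^ (p - 1) * ⟪x, w₁⟫_ℝ))) fun x hx => ?_
    refine ContinuousAt.continuousWithinAt ?_
    have a1 : ContinuousAt (fun y => fderiv ℝ (sfn K) y w₂) x :=
      (((sfn_smooth hK x hx 1).fderiv_right (m := 0) (by simp)).clm_apply
        contDiffAt_const).continuousAt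
    have a2 : ContinuousAt (fun y => sfn K y ^ (p - 1)) x :=
      (sfn_smooth hK x hx 1).continuousAt.rpow_const (Or.inl (sfn_pos hK x hx).ne')
    exact continuousAt_const.mul (a1.mul (a2.mul (by fun_prop)))
  have hI2 : Integrable (fun x : Sph n => sfn K x ^ p * ⟪w₁, w₂⟫_ℝ) (sphMeas n) := by
    refine sph_integrable (F := fun x => sfn K x ^ p * ⟪w₁, w₂⟫_ℝ) fun x hx => ?_
    exact ((hc x hx).continuousAt.mul continuousAt_const).continuousWithinAt
  simp only [hder] at hD
  rw [integral_add hI1 hI2, integral_const_mul, integral_mul_const] at hD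
  have hpow : ∀ x : Sph n, sfn K x * rK K x * ⟪w₁, w₂⟫_ℝ = sfn K x ^ p * ⟪w₁, w₂⟫_ℝ := by
    intro x
    rw [heq x, Real.rpow_sub_one (hK.pos x).ne', mul_div_cancel₀ _ (hK.pos x).ne']
  simp only [hpow] at hM
  rw [integral_mul_const] at hM
  have hT : ∫ x : Sph n, sfn K (x : Eu n) ^ p * ⟪(x : Eu n), w₁⟫_ℝ * ⟪(x : Eu n), w₂⟫_ℝ ∂sphMeas n =
      ∫ x : Sph n, ⟪(x : Eu n), w₁⟫_ℝ * ⟪(x : Eu n), w₂⟫_ℝ * sfn K (x : Eu n) ^ p ∂sphMeas n := by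
    congr 1
    funext x
    ring
  rw [hT] at hD
  have hn1 : (n : ℝ) + 1 ≠ 0 := by positivity
  have hnp : (n : ℝ) + (p + 1) ≠ 0 := fun h => hp (by linarith)
  generalize (∫ x : Sph n, fderiv ℝ (sfn K) (x : Eu n) w₂ *
    (rK K (x : Eu n) * ⟪(x : Eu n), w₁⟫_ℝ) ∂sphMeas n) = J at hM hD
  apply mul_left_cancel₀ hnp
  rw [← hD]
  field_simp
  linear_combination (-p) * hM
end
end
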